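/- arXiv:2603.07945 — 2 statements merged into one kernel-verified Lean document; each statement's English description precedes it below -/
import Mathlib

section
/- Let R be a henselian Gorenstein Noetherian local ring with dim R > 0 which is an AB ring, and let 𝒳 be a resolving subcategory of the category of finitely generated R-modules. Then every module in 𝒳 is maximal Cohen–Macaulay if and only if 𝒳 is not contravariantly infinite. -/
open CategoryTheory IsLocalRing

universe u

noncomputable section

/-- The `i`-th Ext module of two `R`-modules. -/
abbrev ExtMod (R : Type u) [CommRing R] (i : ℕ) (M N : ModuleCat.{u} R) : ModuleCat R :=
  ((Ext R (ModuleCat.{u} R) i).obj (Opposite.op M)).obj N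

/-- Vanishing of the `i`-th Ext module: `Ext_R^i(M, N) = 0`. -/
def ExtVanish (R : Type u) [CommRing R] (i : ℕ) (M N : ModuleCat.{u} R) : Prop :=
  Subsingleton (ExtMod R i M N)

variable (R : Type u) [CommRing R]

/-- `0 → A → B → C → 0` is a short exact sequence. -/
def IsSES {A B C : ModuleCat.{u} R} (f : A →ₗ[R] B) (g : B →ₗ[R] C) : Prop :=
  Function.Injective f ∧ Function.Exact f g ∧ Function.Surjective g

/-- A resolving subcategory of the category of finitely generated `R`-modules. -/
structure IsResolving (𝒳 : Set (ModuleCat.{u} R)) : Prop where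
  finite : ∀ M ∈ 𝒳, Module.Finite R M
  isoClosed : ∀ {M N : ModuleCat.{u} R}, M ∈ 𝒳 → (↥M ≃ₗ[R] ↥N) → N ∈ 𝒳
  freeMem : ∀ M : ModuleCat.{u} R, Module.Finite R M → Module.Free R M → M ∈ 𝒳
  summandClosed : ∀ M N : ModuleCat.{u} R, ModuleCat.of R (↥M × ↥N) ∈ 𝒳 → M ∈ 𝒳
  extClosed : ∀ (A B C : ModuleCat.{u} R) (f : A →ₗ[R] B) (g : B →ₗ[R] C),
    IsSES R f g → A ∈ 𝒳 → C ∈ 𝒳 → B ∈ 𝒳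
  kerClosed : ∀ (A B C : ModuleCat.{u} R) (f : A →ₗ[R] B) (g : B →ₗ[R] C),
    IsSES R f g → B ∈ 𝒳 → C ∈ 𝒳 → A ∈ 𝒳

/-- `f : X → M` is a right `𝒳`-approximation of `M`. -/
def IsRightApprox (𝒳 : Set (ModuleCat.{u} R)) {X M : ModuleCat.{u} R} (f : X →ₗ[R] M) : Prop :=
  X ∈ 𝒳 ∧ ∀ W ∈ 𝒳, ∀ g : ↥W →ₗ[R] ↥M, ∃ h : ↥W →ₗ[R] ↥X, f ∘ₗ h = g

/-- `M` admits a right `𝒳`-approximation. -/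
def HasRightApprox (𝒳 : Set (ModuleCat.{u} R)) (M : ModuleCat.{u} R) : Prop :=
  ∃ (X : ModuleCat.{u} R) (f : X →ₗ[R] M), IsRightApprox R 𝒳 f

/-- `𝒳` is contravariantly infinite: no finitely generated module outside `𝒳` admits
a right `𝒳`-approximation. -/
def ContravariantlyInfinite (𝒳 : Set (ModuleCat.{u} R)) : Prop :=
  ∀ M : ModuleCat.{u} R, Module.Finite R M → M ∉ 𝒳 → ¬ HasRightApprox R 𝒳 M

/-- `𝒳` is contravariantly finite: every finitely generated module admits
a right `𝒳`-approximation. -/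
def ContravariantlyFinite (𝒳 : Set (ModuleCat.{u} R)) : Prop :=
  ∀ M : ModuleCat.{u} R, Module.Finite R M → HasRightApprox R 𝒳 M

/-- The restricted functor `Hom_R(-, C)|_𝒳` is finitely presented, i.e. `C ∈ 𝒞(𝒳)`. -/
def MemCC (𝒳 : Set (ModuleCat.{u} R)) (C : ModuleCat.{u} R) : Prop :=
  ∃ (X₀ X₁ : ModuleCat.{u} R) (g : ↥X₁ →ₗ[R] ↥X₀) (f : ↥X₀ →ₗ[R] ↥C), X₀ ∈ 𝒳 ∧ X₁ ∈ 𝒳 ∧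
    ∀ W ∈ 𝒳, Function.Surjective (fun h : ↥W →ₗ[R] ↥X₀ => f ∘ₗ h) ∧
      Function.Exact (fun h : ↥W →ₗ[R] ↥X₁ => g ∘ₗ h) (fun h : ↥W →ₗ[R] ↥X₀ => f ∘ₗ h)

/-- `𝒳` is coherent: `𝒞(𝒳) = rap 𝒳`. -/
def Coherent (𝒳 : Set (ModuleCat.{u} R)) : Prop :=
  ∀ M : ModuleCat.{u} R, Module.Finite R M → (MemCC R 𝒳 M ↔ HasRightApprox R 𝒳 M)

/-- The right Ext-orthogonal class `𝒳^⊥` of a class `𝒳` of finitely generated modules. -/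
def XPerp (𝒳 : Set (ModuleCat.{u} R)) : Set (ModuleCat.{u} R) :=
  {Y | Module.Finite R Y ∧ ∀ X ∈ 𝒳, ∀ i, 0 < i → ExtVanish R i X Y}

/-- The projective dimension of `M` is at most `n`. -/
def ProjDimLE (M : ModuleCat.{u} R) (n : ℕ) : Prop :=
  ∀ N : ModuleCat.{u} R, ∀ i, n < i → ExtVanish R i M N

/-- The depth of an `R`-module over a local ring: `inf { i | Ext^i(k, M) ≠ 0 }`. -/
def moduleDepth [IsLocalRing R] (M : ModuleCat.{u} R) : ℕ∞ :=
  sInf ((fun i : ℕ => (i : ℕ∞)) ''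
    {i : ℕ | ¬ ExtVanish R i (ModuleCat.of R (ResidueField R)) M})

/-- `M` is a maximal Cohen–Macaulay `R`-module: `depth M ≥ dim R`. -/
def IsMCM [IsLocalRing R] (M : ModuleCat.{u} R) : Prop :=
  ringKrullDim R ≤ (moduleDepth R M : WithBot ℕ∞)

/-- A Gorenstein local ring: `∃ n, Ext^i(M, R) = 0` for every finitely generated `M`
and every `i > n`. -/
def IsGorensteinLocalRing : Prop :=
  ∃ n : ℕ, ∀ M : ModuleCat.{u} R, Module.Finite R M →
    ∀ i, n < i → ExtVanish R i M (ModuleCat.of R R)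

/-- A regular local ring: Noetherian local with `dim R = dim_k 𝔪/𝔪²`. -/
def IsRegularLocal [IsLocalRing R] : Prop :=
  IsNoetherianRing R ∧
    ringKrullDim R = (Module.finrank (ResidueField R) (CotangentSpace R) : ℕ)

/-- Witness that the local ring `R` is a complete intersection: its `𝔪`-adic completion
is `Q/(f₁, …, f_c)` for a regular local ring `Q` and a `Q`-regular sequence `f₁, …, f_c`. -/
structure CompleteIntersectionWitness [IsLocalRing R] : Type (u + 1) where
  Q : Type u
  [commRing : CommRing Q]
  [localRing : IsLocalRing Q]
  regular : IsRegularLocal Q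
  fs : List Q
  regSeq : RingTheory.Sequence.IsRegular Q fs
  equiv : AdicCompletion (maximalIdeal R) R ≃+* Q ⧸ Ideal.span {x : Q | x ∈ fs}

/-- The local ring `R` is a complete intersection. -/
def IsCompleteIntersection [IsLocalRing R] : Prop :=
  Nonempty (CompleteIntersectionWitness R)

end

/-- An AB ring: a Gorenstein local ring with a uniform bound `n` such that
`Ext^{≫0}(M,N) = 0` implies `Ext^{>n}(M,N) = 0`. -/
def IsABRing (R : Type u) [CommRing R] [IsLocalRing R] : Prop :=
  IsGorensteinLocalRing R ∧ ∃ n : ℕ, ∀ M N : ModuleCat.{u} R,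
    Module.Finite R M → Module.Finite R N →
    (∃ m : ℕ, ∀ i, m < i → ExtVanish R i M N) → ∀ i, n < i → ExtVanish R i M N

/-!
If `𝒳` consists of maximal Cohen–Macaulay modules, then `Ext_R^1(W, R) = 0` for all `W ∈ 𝒳`. So,
for an `R`-regular `x ∈ 𝔪`, maps from `𝒳` to `R/xR` lift to `R`, and `R → R/xR` is a right
`𝒳`-approximation; a module in `𝒳` cannot be `R/xR`, as otherwise `0 → R → R → R/xR → 0` splits.

Conversely, let `M ∉ 𝒳` have a right `𝒳`-approximation. As `R` is henselian, endomorphisms of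
finitely generated modules have Fitting decompositions, which yield a minimal approximation
`f : X → M`. By Wakamatsu's argument `N = ker f ≠ 0` satisfies `Ext_R^i(W, N) = 0` for `i > 0` and
`W ∈ 𝒳`. The AB condition upgrades this to `Ext_R^i(W, R) = 0` for `i > 0`: after replacing `W` by
an extension of it by a free module, embedding that in a free module and dividing out the smaller
free submodule, one is left with a module of projective dimension at most one, for which the
vanishing of `Ext_R^1(-, N)` passes to `R` by Nakayama's lemma. Hence `W` is an arbitrarily high
syzygy, so its depth is at least that of `R`.
-/

section HenselianFactorization

open Polynomial

theorem residue_eval {R : Type*} [CommRing R] [IsLocalRing R] (p : R[X]) (c : R) :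
    residue R (p.eval c) = (p.map (residue R)).eval (residue R c) :=
  (eval_map_apply (f := residue R) (p := p) c).symm

variable {R : Type*} [CommRing R] [HenselianLocalRing R]

theorem exists_algHom_residue_eq_of_standardEtalePresentation {E : Type*} [CommRing E]
    [Algebra R E] (P : StandardEtalePresentation R E) (φ : E →ₐ[R] ResidueField R) :
    ∃ ψ : E →ₐ[R] R, ∀ e, residue R (ψ e) = φ e := by
  have hφ := P.hasMap.map φ
  obtain ⟨a, ha, hres⟩ := ((HenselianLocalRing.TFAE R).out 0 1 rfl rfl).mp ‹_› P.f P.monic_f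
    (φ P.x) hφ.1 hφ.isUnit_derivative_f.ne_zero
  have hg : residue R (aeval a P.g) = aeval (φ P.x) P.g := by
    rw [← hres, ← ResidueField.algebraMap_eq, aeval_algebraMap_apply]
  have haP : P.P.HasMap a :=
    ⟨by simpa only [IsRoot.def, coe_aeval_eq_eval] using ha,
      (isUnit_map_iff (residue R) _).mp (hg ▸ hφ.2)⟩
  let ψ : E →ₐ[R] R := (P.lift a haP).comp P.equivRing.toAlgHom
  have hψ : (IsScalarTower.toAlgHom R R (ResidueField R)).comp ψ = φ := by
    apply P.hom_ext
    simp [ψ, hres]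
  exact ⟨ψ, AlgHom.congr_fun hψ⟩

theorem exists_algHom_residue_eq_of_etale {E : Type*} [CommRing E] [Algebra R E]
    [Algebra.Etale R E] (φ : E →ₐ[R] ResidueField R) :
    ∃ ψ : E →ₐ[R] R, ∀ e, residue R (ψ e) = φ e := by
  have : (RingHom.ker φ).IsPrime := RingHom.ker_isPrime _
  obtain ⟨s, hs, ⟨⟨P⟩⟩⟩ := Algebra.IsEtaleAt.exists_isStandardEtale (R := R) (RingHom.ker φ)
  have hunit (y : Submonoid.powers s) : IsUnit (φ y) := by
    obtain ⟨_, n, rfl⟩ := y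
    rw [map_pow]
    exact (isUnit_iff_ne_zero.mpr hs).pow n
  let φ' : Localization.Away s →ₐ[R] ResidueField R := IsLocalization.liftAlgHom hunit
  obtain ⟨ψ, hψ⟩ := exists_algHom_residue_eq_of_standardEtalePresentation P φ'
  exact ⟨ψ.comp (IsScalarTower.toAlgHom R E _), fun e ↦
    (hψ _).trans (IsLocalization.lift_eq _ e)⟩

theorem exists_monic_factorization_of_map_residue_eq_mul {p : R[X]} (hp : p.Monic)
    {a b : (ResidueField R)[X]} (ha : a.Monic) (hb : b.Monic)
    (hab : p.map (residue R) = a * b) (hcop : IsCoprime a b) :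
    ∃ f g : R[X], p = f * g ∧ IsCoprime f g ∧
      f.map (residue R) = a ∧ g.map (residue R) = b := by
  have hdeg : p.natDegree = a.natDegree + b.natDegree := by
    rw [← ha.natDegree_mul hb, ← hab, hp.natDegree_map]
  let p' : MonicDegreeEq R p.natDegree := .mk p hp rfl
  let fac {S : Type _} [CommRing S] [Algebra R S] :=
    UniversalCoprimeFactorizationRing.homEquiv S a.natDegree b.natDegree hdeg p'
  let φ := (fac (S := ResidueField R)).symm
    ⟨(.mk a ha rfl, .mk b hb rfl), hab.symm, hcop⟩
  obtain ⟨ψ, hψ⟩ := exists_algHom_residue_eq_of_etale φ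
  have hcomp : (IsScalarTower.toAlgHom R R (ResidueField R)).comp ψ = φ := AlgHom.ext hψ
  have hf := UniversalCoprimeFactorizationRing.homEquiv_comp_fst (S := R) _ _ hdeg p' ψ
    (IsScalarTower.toAlgHom R R (ResidueField R))
  have hg := UniversalCoprimeFactorizationRing.homEquiv_comp_snd (S := R) _ _ hdeg p' ψ
    (IsScalarTower.toAlgHom R R (ResidueField R))
  rw [hcomp, Equiv.apply_symm_apply] at hf hg
  exact ⟨_, _, by simpa [p'] using (fac ψ).2.1.symm, (fac ψ).2.2,
    (congr_arg Subtype.val hf).symm, (congr_arg Subtype.val hg).symm⟩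

theorem exists_factorization_isUnit_eval {p : R[X]} (hp : p.Monic) :
    ∃ f g : R[X], p = f * g ∧ IsCoprime f g ∧ IsUnit (f.eval 1) ∧ IsUnit (g.eval 0) := by
  obtain ⟨b, hpb, hXb⟩ := exists_eq_pow_rootMultiplicity_mul_and_not_dvd
    (p.map (residue R)) (hp.map _).ne_zero 0
  rw [C_0, sub_zero] at hpb hXb
  set m := rootMultiplicity 0 (p.map (residue R))
  obtain ⟨f, g, hfg, hcop, hf, hg⟩ := exists_monic_factorization_of_map_residue_eq_mul hp
    (monic_X_pow m) ((monic_X_pow m).of_mul_monic_left (hpb ▸ hp.map _)) hpb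
    (IsCoprime.pow_left ((irreducible_X.coprime_iff_not_dvd).mpr hXb))
  refine ⟨f, g, hfg, hcop, (isUnit_map_iff (residue R) _).mp ?_,
    (isUnit_map_iff (residue R) _).mp ?_⟩
  · simp [residue_eval, hf]
  · rwa [residue_eval, hg, map_zero, isUnit_iff_ne_zero, ← coeff_zero_eq_eval_zero, ne_eq,
      ← X_dvd_iff]

end HenselianFactorization

section FittingDecomposition

open Polynomial

variable {R M : Type*} [CommRing R] [AddCommGroup M] [Module R M]

theorem ker_aeval_le_map_sub_smul_one (h : Module.End R M) {q : R[X]} {c : R}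
    (hc : IsUnit (q.eval c)) :
    LinearMap.ker (aeval h q) ≤ (LinearMap.ker (aeval h q)).map (h - c • 1) := by
  obtain ⟨u, hu⟩ := hc
  obtain ⟨r, hr⟩ : X - C c ∣ q - C (q.eval c) := X_sub_C_dvd_sub_C_eval
  intro x hx
  have hqr : aeval h q (aeval h r x) = 0 := by
    rw [← Module.End.mul_apply, ← map_mul, mul_comm, map_mul, Module.End.mul_apply,
      LinearMap.mem_ker.mp hx, map_zero]
  have hrx : (h - c • 1) (aeval h r x) = -((u : R) • x) := by
    have := LinearMap.congr_fun (congr_arg (aeval h) hr) x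
    simp only [map_sub, aeval_C, LinearMap.sub_apply, LinearMap.mem_ker.mp hx, zero_sub, ← hu,
      map_mul, aeval_X, Module.End.mul_apply, Module.algebraMap_end_apply] at this
    simpa using this.symm
  refine ⟨-((↑u⁻¹ : R) • aeval h r x), ?_, ?_⟩
  · simp [hqr]
  · rw [map_neg, map_smul, hrx, smul_neg, neg_neg, smul_smul, Units.inv_mul, one_smul]

theorem exists_isCompl_le_map [HenselianLocalRing R] [Module.Finite R M] (h : Module.End R M) :
    ∃ A B : Submodule R M, IsCompl A B ∧ A ≤ A.map h ∧ B ≤ B.map (h - 1) := by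
  obtain ⟨p, hp, hph⟩ := Algebra.IsIntegral.isIntegral (R := R) h
  obtain ⟨f, g, rfl, hcop, hf, hg⟩ := exists_factorization_isUnit_eval hp
  refine ⟨LinearMap.ker (aeval h g), LinearMap.ker (aeval h f), ⟨?_, ?_⟩, ?_, ?_⟩
  · exact disjoint_ker_aeval_of_isCoprime h hcop.symm
  · rw [codisjoint_iff, sup_ker_aeval_eq_ker_aeval_mul_of_coprime h hcop.symm, mul_comm,
      aeval_def, hph, LinearMap.ker_zero]
  · simpa using ker_aeval_le_map_sub_smul_one h hg
  · simpa using ker_aeval_le_map_sub_smul_one h hf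

end FittingDecomposition

section MinimalApproximation

theorem eq_bot_of_finrank_residueField_tensorProduct_le {R X : Type*} [CommRing R]
    [IsLocalRing R] [AddCommGroup X] [Module R X] [Module.Finite R X] {A B : Submodule R X}
    (hAB : IsCompl A B)
    (hle : Module.finrank (ResidueField R) (TensorProduct R (ResidueField R) X) ≤
      Module.finrank (ResidueField R) (TensorProduct R (ResidueField R) A)) : B = ⊥ := by
  let e := A.prodEquivOfIsCompl B hAB
  have : Module.Finite R (A × B) := .equiv e.symm
  have : Module.Finite R A := .of_surjective (LinearMap.fst R A B) LinearMap.fst_surjective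
  have : Module.Finite R B := .of_surjective (LinearMap.snd R A B) LinearMap.snd_surjective
  have hsum := ((TensorProduct.AlgebraTensorModule.congr (.refl _ _) e.symm).trans
    (TensorProduct.prodRight R (ResidueField R) (ResidueField R) A B)).finrank_eq
  rw [Module.finrank_prod] at hsum
  have hB : Subsingleton (TensorProduct R (ResidueField R) B) :=
    Module.finrank_zero_iff (R := ResidueField R).mp (by omega)
  exact Submodule.subsingleton_iff_eq_bot.mp (subsingleton_tensorProduct.mp hB)

variable {R : Type u} [CommRing R] {𝒳 : Set (ModuleCat.{u} R)} {M : ModuleCat.{u} R}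

theorem IsRightApprox.comp_subtype (h𝒳 : IsResolving R 𝒳) {X : ModuleCat.{u} R} {f : X →ₗ[R] M}
    (hf : IsRightApprox R 𝒳 f) {A B : Submodule R X} (hAB : IsCompl A B)
    (hB : B ≤ LinearMap.ker f) :
    IsRightApprox R 𝒳 (X := ModuleCat.of R A) (f ∘ₗ A.subtype) := by
  refine ⟨h𝒳.summandClosed (ModuleCat.of R A) (ModuleCat.of R B)
    (h𝒳.isoClosed hf.1 (A.prodEquivOfIsCompl B hAB).symm), fun W hW g ↦ ?_⟩
  obtain ⟨t, rfl⟩ := hf.2 W hW g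
  refine ⟨A.projectionOnto B hAB ∘ₗ t, LinearMap.ext fun w ↦ ?_⟩
  have hmem : t w - A.projectionOnto B hAB (t w) ∈ B := by
    rw [← Submodule.projectionOnto_apply_eq_zero_iff hAB, map_sub,
      Submodule.projectionOnto_apply_left, sub_self]
  exact (sub_eq_zero.mp ((map_sub f _ _).symm.trans (hB hmem))).symm

theorem HasRightApprox.exists_minimal [HenselianLocalRing R]
    (h𝒳 : IsResolving R 𝒳) (hM : HasRightApprox R 𝒳 M) :
    ∃ (X : ModuleCat.{u} R) (f : X →ₗ[R] M), IsRightApprox R 𝒳 f ∧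
      ∀ h : X →ₗ[R] X, f ∘ₗ h = f → Function.Bijective h := by
  classical
  let μ (X : ModuleCat.{u} R) : ℕ :=
    Module.finrank (ResidueField R) (TensorProduct R (ResidueField R) X)
  have hex : ∃ n, ∃ (X : ModuleCat.{u} R) (f : X →ₗ[R] M), IsRightApprox R 𝒳 f ∧ μ X = n :=
    let ⟨X, f, hf⟩ := hM
    ⟨_, X, f, hf, rfl⟩
  obtain ⟨X, f, hf, hμ⟩ := Nat.find_spec hex
  refine ⟨X, f, hf, fun h hfh ↦ ?_⟩
  have := h𝒳.finite X hf.1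
  obtain ⟨A, B, hAB, hA, hB⟩ := exists_isCompl_le_map h
  have hfB : B ≤ LinearMap.ker f := fun b hb ↦ by
    obtain ⟨b', -, rfl⟩ := hB hb
    exact (map_sub f _ _).trans (sub_eq_zero.mpr (LinearMap.congr_fun hfh b'))
  have hBbot : B = ⊥ := eq_bot_of_finrank_residueField_tensorProduct_le hAB
    (hμ.trans_le (Nat.find_min' hex ⟨_, _, hf.comp_subtype h𝒳 hAB hfB, rfl⟩))
  have hAtop : A = ⊤ := by rw [← hAB.sup_eq_top, hBbot, sup_bot_eq]
  have hsurj : Function.Surjective h := LinearMap.range_eq_top.mp <| by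
    rw [← top_le_iff, ← Submodule.map_top, ← hAtop]
    exact hA
  exact ⟨OrzechProperty.injective_of_surjective_endomorphism h hsurj, hsurj⟩

end MinimalApproximation

section ExtZero

/-- Vanishing of `Ext_R^i(A, N)`, in terms of Yoneda extensions between unbundled modules; it
agrees with `ExtVanish` by `extVanish_iff_extZero`. -/
def ExtZero (R : Type u) [CommRing R] (i : ℕ) (A N : Type u) [AddCommGroup A] [Module R A]
    [AddCommGroup N] [Module R N] : Prop :=
  Subsingleton (Abelian.Ext.{u} (ModuleCat.of R A) (ModuleCat.of R N) i)

variable {R : Type u} [CommRing R]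

section Comparison

variable {M : ModuleCat.{u} R} (P : ProjectiveResolution M) (N : ModuleCat.{u} R)

theorem extVanish_iff_exactAt (i : ℕ) :
    ExtVanish R i M N ↔ (P.complex.linearYonedaObj R N).ExactAt i := by
  rw [HomologicalComplex.exactAt_iff_isZero_homology, ← (P.isoExt (R := R) i N).isZero_iff,
    ModuleCat.isZero_iff_subsingleton]
  rfl

theorem extVanish_zero_iff : ExtVanish R 0 M N ↔ ∀ f : M ⟶ N, f = 0 := by
  let P := ProjectiveResolution.of M
  rw [extVanish_iff_exactAt P, HomologicalComplex.exactAt_iff' _ 0 0 1 (by simp) (by simp),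
    ShortComplex.moduleCat_exact_iff]
  have hd : ((P.complex.linearYonedaObj R N).sc' 0 0 1).f = 0 :=
    (P.complex.linearYonedaObj R N).shape _ _ (by simp)
  constructor
  · intro h f
    let π : P.complex.X 0 ⟶ M := P.π.f 0
    have : Epi π := inferInstanceAs (Epi (P.π.f 0))
    have hcocycle (f : M ⟶ N) : P.complex.d 1 0 ≫ π ≫ f = 0 := by
      rw [← Category.assoc, show P.complex.d 1 0 ≫ π = 0 from P.complex_d_comp_π_f_zero,
        Limits.zero_comp]
    obtain ⟨g, hg⟩ := h (π ≫ f) (hcocycle f)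
    have hf : π ≫ f = 0 := hg.symm.trans (by rw [hd]; rfl)
    exact Limits.zero_of_epi_comp _ hf
  · intro h (f : P.complex.X 0 ⟶ N) hf
    have hf0 : f = 0 := by
      rw [← P.exact₀.g_desc f hf, h (P.exact₀.desc f hf)]
      exact Limits.comp_zero
    exact ⟨0, by rw [map_zero, hf0]; rfl⟩

theorem extVanish_succ_iff (i : ℕ) :
    ExtVanish R (i + 1) M N ↔ Subsingleton (Abelian.Ext.{u} M N (i + 1)) := by
  let P := ProjectiveResolution.of M
  rw [extVanish_iff_exactAt P,
    HomologicalComplex.exactAt_iff' _ i (i + 1) (i + 2) (by simp) (by simp),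
    ShortComplex.moduleCat_exact_iff]
  constructor
  · refine fun h ↦ subsingleton_of_forall_eq 0 fun a ↦ ?_
    obtain ⟨f, hf, rfl⟩ := P.extMk_surjective a (i + 2) rfl
    exact (P.extMk_eq_zero_iff f (i + 2) rfl hf i rfl).mpr (h f hf)
  · intro h f hf
    exact (P.extMk_eq_zero_iff f (i + 2) rfl hf i rfl).mp (Subsingleton.elim _ _)

end Comparison

variable {A B C M N : Type u} [AddCommGroup A] [Module R A] [AddCommGroup B] [Module R B]
  [AddCommGroup C] [Module R C] [AddCommGroup M] [Module R M] [AddCommGroup N] [Module R N]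

theorem extZero_iff {i : ℕ} : ExtZero R i A N ↔
    ∀ x : Abelian.Ext.{u} (ModuleCat.of R A) (ModuleCat.of R N) i, x = 0 :=
  ⟨fun h x ↦ h.elim x 0, subsingleton_of_forall_eq 0⟩

theorem extZero_zero_iff : ExtZero R 0 A N ↔ ∀ f : A →ₗ[R] N, f = 0 := by
  rw [ExtZero, Abelian.Ext.homEquiv₀.subsingleton_congr, ModuleCat.homEquiv.subsingleton_congr]
  exact ⟨fun h f ↦ h.elim f 0, subsingleton_of_forall_eq 0⟩

theorem extVanish_iff_extZero {i : ℕ} {M N : ModuleCat.{u} R} :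
    ExtVanish R i M N ↔ ExtZero R i M N := by
  cases i with
  | zero =>
    rw [extVanish_zero_iff, extZero_zero_iff]
    exact ⟨fun h f ↦ congr_arg ModuleCat.Hom.hom (h (ModuleCat.ofHom f)),
      fun h f ↦ ModuleCat.hom_ext (h f.hom)⟩
  | succ i => exact extVanish_succ_iff N i

theorem extZero_succ_of_projective [Module.Projective R A] (i : ℕ) : ExtZero R (i + 1) A N :=
  have : Projective (ModuleCat.of R A) := (IsProjective.iff_projective _).mp inferInstance
  extZero_iff.mpr Abelian.Ext.eq_zero_of_projective

theorem ExtZero.of_linearEquiv_left {i : ℕ} (e : A ≃ₗ[R] B) (h : ExtZero R i A N) :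
    ExtZero R i B N := by
  refine extZero_iff.mpr fun x ↦ ?_
  have hx (φ : ModuleCat.of R A ≅ ModuleCat.of R B) : (Abelian.Ext.mk₀ φ.inv).comp
      ((Abelian.Ext.mk₀ φ.hom).comp x (zero_add i)) (zero_add i) = x := by simp
  rw [← hx e.toModuleIso, extZero_iff.mp h ((Abelian.Ext.mk₀ _).comp _ _), Abelian.Ext.comp_zero]

theorem ExtZero.of_linearEquiv_right {i : ℕ} (e : A ≃ₗ[R] B) (h : ExtZero R i M A) :
    ExtZero R i M B := by
  refine extZero_iff.mpr fun x ↦ ?_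
  have hx (φ : ModuleCat.of R A ≅ ModuleCat.of R B) : (x.comp (Abelian.Ext.mk₀ φ.inv)
      (add_zero i)).comp (Abelian.Ext.mk₀ φ.hom) (add_zero i) = x := by simp
  rw [← hx e.toModuleIso, extZero_iff.mp h (Abelian.Ext.comp _ _ _), Abelian.Ext.zero_comp]

theorem extZero_of_subsingleton_left [Subsingleton A] (i : ℕ) : ExtZero R i A N :=
  have : Limits.IsZero (ModuleCat.of R A) := ModuleCat.isZero_of_subsingleton _
  extZero_iff.mpr fun x ↦ by
    rw [← Abelian.Ext.mk₀_id_comp x, this.eq_of_src (𝟙 _) 0, Abelian.Ext.mk₀_zero,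
      Abelian.Ext.zero_comp]

theorem extZero_of_subsingleton_right [Subsingleton N] (i : ℕ) : ExtZero R i A N :=
  have : Limits.IsZero (ModuleCat.of R N) := ModuleCat.isZero_of_subsingleton _
  extZero_iff.mpr fun x ↦ by
    rw [← Abelian.Ext.comp_mk₀_id x, this.eq_of_src (𝟙 _) 0, Abelian.Ext.mk₀_zero,
      Abelian.Ext.comp_zero]

end ExtZero

section LongExactSequence

variable {R : Type u} [CommRing R] {A B C M N : Type u} [AddCommGroup A] [Module R A]
  [AddCommGroup B] [Module R B] [AddCommGroup C] [Module R C] [AddCommGroup M] [Module R M]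
  [AddCommGroup N] [Module R N]

/-- Exactness of `0 → A → B → C → 0`; an unbundled version of `IsSES`. -/
structure IsShortExact (f : A →ₗ[R] B) (g : B →ₗ[R] C) : Prop where
  injective : Function.Injective f
  exact : Function.Exact f g
  surjective : Function.Surjective g

theorem isShortExact_ker {g : B →ₗ[R] C} (hg : Function.Surjective g) :
    IsShortExact (LinearMap.ker g).subtype g :=
  ⟨Subtype.val_injective, LinearMap.exact_subtype_ker_map g, hg⟩

theorem isShortExact_mkQ {f : A →ₗ[R] B} (hf : Function.Injective f) :
    IsShortExact f (LinearMap.range f).mkQ :=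
  ⟨hf, LinearMap.exact_map_mkQ_range f, Submodule.mkQ_surjective _⟩

theorem isShortExact_inl_snd : IsShortExact (LinearMap.inl R A B) (LinearMap.snd R A B) :=
  ⟨LinearMap.inl_injective, Function.Exact.inl_snd, LinearMap.snd_surjective⟩

namespace IsShortExact

variable {f : A →ₗ[R] B} {g : B →ₗ[R] C}

theorem shortExact (h : IsShortExact f g) :
    (ModuleCat.shortComplexOfCompEqZero f g h.exact.linearMap_comp_eq_zero).ShortExact where
  exact := (ShortComplex.ShortExact.moduleCat_exact_iff_function_exact _).mpr h.exact
  mono_f := (ModuleCat.mono_iff_injective _).mpr h.injective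
  epi_g := (ModuleCat.epi_iff_surjective _).mpr h.surjective

theorem contravariant_extZero₁ (h : IsShortExact f g) {i : ℕ} (hB : ExtZero R i B N)
    (hC : ExtZero R (i + 1) C N) : ExtZero R i A N :=
  extZero_iff.mpr fun x ↦ by
    obtain ⟨y, rfl⟩ := Abelian.Ext.contravariant_sequence_exact₁ h.shortExact _ x (add_comm 1 i)
      (extZero_iff.mp hC _)
    rw [extZero_iff.mp hB y, Abelian.Ext.comp_zero]

theorem contravariant_extZero₂ (h : IsShortExact f g) {i : ℕ} (hA : ExtZero R i A N)
    (hC : ExtZero R i C N) : ExtZero R i B N :=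
  extZero_iff.mpr fun x ↦ by
    obtain ⟨y, rfl⟩ := Abelian.Ext.contravariant_sequence_exact₂ h.shortExact _ x
      (extZero_iff.mp hA _)
    rw [extZero_iff.mp hC y, Abelian.Ext.comp_zero]

theorem contravariant_extZero₃ (h : IsShortExact f g) {i : ℕ} (hA : ExtZero R i A N)
    (hB : ExtZero R (i + 1) B N) : ExtZero R (i + 1) C N :=
  extZero_iff.mpr fun x ↦ by
    obtain ⟨y, rfl⟩ := Abelian.Ext.contravariant_sequence_exact₃ h.shortExact _ x
      (extZero_iff.mp hB _) (add_comm 1 i)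
    rw [extZero_iff.mp hA y, Abelian.Ext.comp_zero]

theorem covariant_extZero₁ (h : IsShortExact f g) {i : ℕ} (hC : ExtZero R i M C)
    (hB : ExtZero R (i + 1) M B) : ExtZero R (i + 1) M A :=
  extZero_iff.mpr fun x ↦ by
    obtain ⟨y, rfl⟩ := Abelian.Ext.covariant_sequence_exact₁ _ h.shortExact x
      (extZero_iff.mp hB _) rfl
    rw [extZero_iff.mp hC y, Abelian.Ext.zero_comp]

theorem covariant_extZero₂ (h : IsShortExact f g) {i : ℕ} (hA : ExtZero R i M A)
    (hC : ExtZero R i M C) : ExtZero R i M B :=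
  extZero_iff.mpr fun x ↦ by
    obtain ⟨y, rfl⟩ := Abelian.Ext.covariant_sequence_exact₂ _ h.shortExact x
      (extZero_iff.mp hC _)
    rw [extZero_iff.mp hA y, Abelian.Ext.zero_comp]

theorem covariant_extZero₃ (h : IsShortExact f g) {i : ℕ} (hB : ExtZero R i M B)
    (hA : ExtZero R (i + 1) M A) : ExtZero R i M C :=
  extZero_iff.mpr fun x ↦ by
    obtain ⟨y, rfl⟩ := Abelian.Ext.covariant_sequence_exact₃ _ h.shortExact x rfl
      (extZero_iff.mp hA _)
    rw [extZero_iff.mp hB y, Abelian.Ext.zero_comp]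

theorem exists_comp_eq (h : IsShortExact f g) (hC : ExtZero R 1 C N) (φ : A →ₗ[R] N) :
    ∃ ψ : B →ₗ[R] N, ψ ∘ₗ f = φ := by
  obtain ⟨y, hy⟩ := Abelian.Ext.contravariant_sequence_exact₁ h.shortExact _
    (Abelian.Ext.mk₀ (ModuleCat.ofHom φ)) (add_comm 1 0) (extZero_iff.mp hC _)
  obtain ⟨ψ, rfl⟩ := (Abelian.Ext.mk₀_bijective _ _).2 y
  rw [Abelian.Ext.mk₀_comp_mk₀] at hy
  exact ⟨ψ.hom, congr_arg ModuleCat.Hom.hom ((Abelian.Ext.mk₀_bijective _ _).1 hy)⟩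

theorem exists_lift (h : IsShortExact f g) (hA : ExtZero R 1 M A) (φ : M →ₗ[R] C) :
    ∃ ψ : M →ₗ[R] B, g ∘ₗ ψ = φ := by
  obtain ⟨y, hy⟩ := Abelian.Ext.covariant_sequence_exact₃ _ h.shortExact
    (Abelian.Ext.mk₀ (ModuleCat.ofHom φ)) rfl (extZero_iff.mp hA _)
  obtain ⟨ψ, rfl⟩ := (Abelian.Ext.mk₀_bijective _ _).2 y
  rw [Abelian.Ext.mk₀_comp_mk₀] at hy
  exact ⟨ψ.hom, congr_arg ModuleCat.Hom.hom ((Abelian.Ext.mk₀_bijective _ _).1 hy)⟩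

theorem extZero_one_of_forall_exists_comp_eq (h : IsShortExact f g) [Module.Projective R B]
    (hext : ∀ φ : A →ₗ[R] N, ∃ ψ : B →ₗ[R] N, ψ ∘ₗ f = φ) : ExtZero R 1 C N :=
  extZero_iff.mpr fun x ↦ by
    obtain ⟨y, rfl⟩ := Abelian.Ext.contravariant_sequence_exact₃ h.shortExact _ x
      (extZero_iff.mp (extZero_succ_of_projective (A := B) 0) _) (add_comm 1 0)
    obtain ⟨φ, rfl⟩ := (Abelian.Ext.mk₀_bijective _ _).2 y
    obtain ⟨ψ, hψ⟩ := hext φ.hom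
    have hφ : φ = ModuleCat.ofHom f ≫ ModuleCat.ofHom ψ := ModuleCat.hom_ext hψ.symm
    rw [hφ, ← Abelian.Ext.mk₀_comp_mk₀]
    exact h.shortExact.extClass_comp_assoc _

end IsShortExact

theorem ExtZero.fin_pi {i : ℕ} (h : ExtZero R i M N) (r : ℕ) : ExtZero R i M (Fin r → N) := by
  induction r with
  | zero => exact extZero_of_subsingleton_right i
  | succ r ih =>
    exact (isShortExact_inl_snd.covariant_extZero₂ h ih).of_linearEquiv_right
      (Fin.consLinearEquiv R fun _ : Fin (r + 1) ↦ N)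

end LongExactSequence

section FiniteInjectiveDimension

open RingTheory.Sequence
open scoped Pointwise

/-- The `R`-module `N` has injective dimension at most `n`, tested on finitely generated modules. -/
def InjDimLE (R N : Type u) [CommRing R] [AddCommGroup N] [Module R N] (n : ℕ) : Prop :=
  ∀ (M : Type u) [AddCommGroup M] [Module R M], Module.Finite R M → ∀ i, n < i → ExtZero R i M N

variable {R : Type u} [CommRing R] {A N W : Type u} [AddCommGroup A] [Module R A]
  [AddCommGroup N] [Module R N] [AddCommGroup W] [Module R W]

theorem isShortExact_lsmul_mkQ {x : R} (hx : IsSMulRegular A x) :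
    IsShortExact (C := QuotSMulTop x A) (LinearMap.lsmul R A x) (x • (⊤ : Submodule R A)).mkQ :=
  ⟨hx, LinearMap.exact_lsmul_mkQ_smul_top A x, Submodule.mkQ_surjective _⟩

theorem extZero_of_isRegular [IsNoetherianRing R] [Module.Finite R W] [Module.Finite R N]
    {rs : List R} (hreg : IsRegular W rs) (hN : ∀ r ∈ rs, ∀ y : N, r • y = 0) {i : ℕ}
    (hi : i < rs.length) : ExtZero R i N W := by
  refine ModuleCat.subsingleton_ext_of_exists_isRegular (Ideal.ofList rs) (ModuleCat.of R N) ?_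
    (ModuleCat.of R W) hreg.top_ne_smul.symm.lt_top rs (fun _ hr ↦ Ideal.subset_span hr)
    hreg i hi
  rw [Module.support_eq_zeroLocus, PrimeSpectrum.zeroLocus_subset_zeroLocus_iff]
  exact (Ideal.span_le.mpr fun r hr ↦ Module.mem_annihilator.mpr (hN r hr)).trans Ideal.le_radical

theorem extZero_of_forall_mem_smul [IsNoetherianRing R] [IsLocalRing R] [Module.Finite R A]
    [Module.Finite R N] {i : ℕ}
    (h : ∀ y : Abelian.Ext.{u} (ModuleCat.of R A) (ModuleCat.of R N) i,
      y ∈ maximalIdeal R • (⊤ : Submodule R (Abelian.Ext.{u} _ _ i))) : ExtZero R i A N := by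
  have := ModuleCat.finite_ext R (ModuleCat.of R A) (ModuleCat.of R N) i
  exact (Submodule.subsingleton_iff R).mp (subsingleton_of_bot_eq_top
    (Submodule.eq_bot_of_le_smul_of_le_jacobson_bot _ _ Module.Finite.fg_top (fun y _ ↦ h y)
      (maximalIdeal_le_jacobson _)).symm)

theorem extZero_of_quotSMulTop [IsNoetherianRing R] [IsLocalRing R] [Module.Finite R A]
    [Module.Finite R N] {i : ℕ} {x : R} (hx : x ∈ maximalIdeal R) (hreg : IsSMulRegular A x)
    (h : ExtZero R (i + 1) (QuotSMulTop x A) N) : ExtZero R i A N := by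
  refine extZero_of_forall_mem_smul fun y ↦ ?_
  obtain ⟨z, hz⟩ := Abelian.Ext.contravariant_sequence_exact₁
    (isShortExact_lsmul_mkQ hreg).shortExact _ y (add_comm 1 i) (extZero_iff.mp h _)
  have hmul : ModuleCat.ofHom (LinearMap.lsmul R A x) = x • 𝟙 (ModuleCat.of R A) := rfl
  have hy : x • z = y := by
    refine Eq.trans ?_ hz
    change x • z = (Abelian.Ext.mk₀ (ModuleCat.ofHom (LinearMap.lsmul R A x))).comp z _
    rw [hmul, Abelian.Ext.mk₀_smul, Abelian.Ext.smul_comp, Abelian.Ext.mk₀_id_comp]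
  exact hy ▸ Submodule.smul_mem_smul hx trivial

theorem smul_residueField_eq_zero [IsLocalRing R] {r : R} (hr : r ∈ maximalIdeal R)
    (y : ResidueField R) : r • y = 0 := by
  rw [Algebra.smul_def, ResidueField.algebraMap_eq, (residue_eq_zero_iff r).mpr hr, zero_mul]

variable [IsNoetherianRing R] [IsLocalRing R]

theorem exists_isRegular_of_extZero [Module.Finite R W] [Nontrivial W] {n : ℕ}
    (h : ∀ i < n, ExtZero R i (ResidueField R) W) :
    ∃ rs : List R, rs.length = n ∧ (∀ r ∈ rs, r ∈ maximalIdeal R) ∧ IsRegular W rs := by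
  refine ModuleCat.exists_isRegular_of_exists_subsingleton_ext (maximalIdeal R) n
    (ModuleCat.of R W) ?_ (ModuleCat.of R (ResidueField R)) ?_ h
  · exact (Submodule.top_ne_ideal_smul_of_le_jacobson_annihilator
      (maximalIdeal_le_jacobson _)).symm.lt_top
  · exact (Module.support_eq_zeroLocus (R := R)).trans
      (congr_arg _ (congr_arg _ Ideal.annihilator_quotient))

theorem InjDimLE.extZero_of_isWeaklyRegular [Module.Finite R N] {n : ℕ} (hn : InjDimLE R N n)
    (rs : List R) (hrs : ∀ r ∈ rs, r ∈ maximalIdeal R) (W : Type u) [AddCommGroup W]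
    [Module R W] [Module.Finite R W] (hreg : IsWeaklyRegular W rs) {j : ℕ}
    (hj : n < j + rs.length) : ExtZero R j W N := by
  induction rs generalizing W j with
  | nil => exact hn W ‹_› j hj
  | cons x rs ih =>
    rw [isWeaklyRegular_cons_iff] at hreg
    rw [List.forall_mem_cons] at hrs
    rw [List.length_cons] at hj
    exact extZero_of_quotSMulTop hrs.1 hreg.1 (ih hrs.2 _ hreg.2 (by omega))

theorem InjDimLE.extZero_quotient_of_isPrime [Module.Finite R N] {n : ℕ} (hn : InjDimLE R N n)
    (p : Ideal R) [hp : p.IsPrime] (hpm : p ≠ maximalIdeal R) : ExtZero R n (R ⧸ p) N := by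
  obtain ⟨x, hxm, hxp⟩ := SetLike.exists_of_lt ((le_maximalIdeal hp.ne_top).lt_of_ne hpm)
  have hreg : IsSMulRegular (R ⧸ p) x :=
    (_root_.IsRegular.of_ne_zero (Ideal.Quotient.eq_zero_iff_mem.not.mpr hxp)).left
  exact hn.extZero_of_isWeaklyRegular [x] (by simpa using hxm) _
    ((isWeaklyRegular_singleton_iff _ x).mpr hreg) (by simp)

theorem InjDimLE.extZero_of_extZero_residueField [Module.Finite R N] {n : ℕ}
    (hn : InjDimLE R N n) (hk : ExtZero R n (ResidueField R) N) (M : Type u) [AddCommGroup M]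
    [Module R M] [hM : Module.Finite R M] : ExtZero R n M N := by
  induction hM using IsNoetherianRing.induction_on_isQuotientEquivQuotientPrime R with
  | subsingleton M => exact extZero_of_subsingleton_left _
  | quotient M p e =>
    refine ExtZero.of_linearEquiv_left e.symm ?_
    by_cases hp : p.1 = maximalIdeal R
    · exact hp ▸ hk
    · have := p.2
      exact hn.extZero_quotient_of_isPrime p.1 hp
  | exact M₁ M₂ M₃ f g hf hg hfg h₁ h₃ =>
    exact IsShortExact.contravariant_extZero₂ ⟨hf, hfg, hg⟩ h₁ h₃

theorem exists_injDimLE_not_extZero_residueField [Module.Finite R N] [Nontrivial N]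
    (h : ∃ n, InjDimLE R N n) :
    ∃ n, InjDimLE R N n ∧ ¬ ExtZero R n (ResidueField R) N := by
  classical
  refine ⟨Nat.find h, Nat.find_spec h, fun hk ↦ ?_⟩
  have htop (M : Type u) [AddCommGroup M] [Module R M] [Module.Finite R M] :
      ExtZero R (Nat.find h) M N :=
    (Nat.find_spec h).extZero_of_extZero_residueField hk M
  rcases hm : Nat.find h with _ | m
  · obtain ⟨y, hy⟩ := exists_ne (0 : N)
    have hid := LinearMap.congr_fun (extZero_zero_iff.mp (hm ▸ htop N) LinearMap.id) y
    exact hy hid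
  · refine Nat.find_min h (m := m) (by omega) fun M _ _ hM i hi ↦ ?_
    rcases (show m + 1 ≤ i from hi).eq_or_lt with rfl | hlt
    · exact hm ▸ htop M
    · exact Nat.find_spec h M hM i (by omega)

end FiniteInjectiveDimension

section BassTheorem

open RingTheory.Sequence

variable {R : Type u} [CommRing R]

theorem ringKrullDim_quotient_eq_zero {I : Ideal R} (hI : I ≠ ⊤)
    (h : ∀ p : Ideal R, p.IsPrime → I ≤ p → p.IsMaximal) : ringKrullDim (R ⧸ I) = 0 := by
  have : Nontrivial (R ⧸ I) := Ideal.Quotient.nontrivial_iff.mpr hI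
  refine ringKrullDimZero_iff_ringKrullDim_eq_zero.mp (Ring.krullDimLE_zero_iff.mpr fun p hp ↦ ?_)
  have hle : I ≤ p.comap (Ideal.Quotient.mk I) := by
    simpa only [Ideal.mk_ker] using Ideal.ker_le_comap (Ideal.Quotient.mk I)
  have := h (p.comap (Ideal.Quotient.mk I)) inferInstance hle
  exact Ideal.isMaximal_of_isIntegral_of_isMaximal_comap' _
    (RingHom.isIntegral_of_surjective _ Ideal.Quotient.mk_surjective) p this

variable [IsLocalRing R] {W : Type u} [AddCommGroup W] [Module R W] {rs : List R} {n : ℕ}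

theorem exists_injective_residueField (h : ¬ ExtZero R 0 (ResidueField R) W) :
    ∃ f : ResidueField R →ₗ[R] W, Function.Injective f := by
  have : IsSimpleModule R (ResidueField R) :=
    isSimpleModule_iff_quot_maximal.mpr ⟨maximalIdeal R, inferInstance, ⟨.refl R _⟩⟩
  rw [extZero_zero_iff, not_forall] at h
  obtain ⟨f, hf⟩ := h
  exact ⟨f, f.injective_or_eq_zero.resolve_right hf⟩

variable [IsNoetherianRing R]

theorem extZero_quotient_ofList_of_length_lt (hreg : IsRegular R rs) (hn : rs.length < n) :
    ExtZero R n (R ⧸ Ideal.ofList rs) W := by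
  have hdim := (projectiveDimension_le_iff _ _).mp
    (ModuleCat.projectiveDimension_quotient_eq_length rs hreg).le
  exact ExtZero.of_linearEquiv_left (Shrink.linearEquiv R _)
    (extZero_iff.mpr fun x ↦ x.eq_zero_of_hasProjectiveDimensionLT (rs.length + 1) hn)

theorem InjDimLE.le_length (hn : InjDimLE R W n) (hk : ¬ ExtZero R n (ResidueField R) W)
    (hreg : IsRegular R rs) (hrs : ¬ ExtZero R 0 (ResidueField R) (R ⧸ Ideal.ofList rs)) :
    n ≤ rs.length := by
  by_contra! hlt
  obtain ⟨f, hf⟩ := exists_injective_residueField hrs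
  exact hk ((isShortExact_mkQ hf).contravariant_extZero₁
    (extZero_quotient_ofList_of_length_lt hreg hlt) (hn _ inferInstance _ n.lt_succ_self))

variable [Module.Finite R W]

theorem InjDimLE.eq_maximalIdeal_of_isPrime (hn : InjDimLE R W rs.length)
    (hk : ¬ ExtZero R rs.length (ResidueField R) W) (hreg : IsRegular W rs) {p : Ideal R}
    [hp : p.IsPrime] (hle : Ideal.ofList rs ≤ p) : p = maximalIdeal R := by
  by_contra hne
  have hpW : ExtZero R rs.length (R ⧸ p) W := hn.extZero_quotient_of_isPrime p hne
  let g : (R ⧸ p) →ₗ[R] ResidueField R := Submodule.factor (le_maximalIdeal hp.ne_top)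
  have hg : IsShortExact (LinearMap.ker g).subtype g :=
    isShortExact_ker (Submodule.factor_surjective _)
  have hker (r : R) (hr : r ∈ rs) (y : LinearMap.ker g) : r • y = 0 := by
    obtain ⟨z, hz⟩ := Ideal.Quotient.mk_surjective y.1
    refine Subtype.ext (?_ : r • y.1 = 0)
    rw [← hz, Algebra.smul_def, Ideal.Quotient.algebraMap_eq, ← map_mul]
    exact Ideal.Quotient.eq_zero_iff_mem.mpr (p.mul_mem_right _ (hle (Ideal.subset_span hr)))
  rcases hlen : rs.length with _ | m <;> rw [hlen] at hk hpW
  · refine hk (extZero_zero_iff.mpr fun f ↦ LinearMap.ext fun y ↦ ?_)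
    obtain ⟨z, rfl⟩ := hg.surjective y
    exact LinearMap.congr_fun (extZero_zero_iff.mp hpW (f ∘ₗ g)) z
  · exact hk (hg.contravariant_extZero₃ (extZero_of_isRegular hreg hker (by omega)) hpW)

variable [Nontrivial W]

theorem extZero_residueField_length_of_quotient (hrs : ∀ r ∈ rs, r ∈ maximalIdeal R)
    (hreg : IsRegular W rs)
    (h : ExtZero R 0 (ResidueField R) (W ⧸ Ideal.ofList rs • (⊤ : Submodule R W))) :
    ExtZero R rs.length (ResidueField R) W := by
  have := hreg.quot_ofList_smul_nontrivial ⊤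
  obtain ⟨xs, hlen, hxs, hxreg⟩ := exists_isRegular_of_extZero (n := 1) fun i hi ↦
    (Nat.lt_one_iff.mp hi) ▸ h
  have hmem : ∀ r ∈ rs ++ xs, r ∈ maximalIdeal R := fun r hr ↦
    (List.mem_append.mp hr).elim (hrs r) (hxs r)
  have happ : IsRegular W (rs ++ xs) := .of_isWeaklyRegular_of_mem_maximalIdeal W hmem
    ((isWeaklyRegular_append_iff W rs xs).mpr ⟨hreg.toIsWeaklyRegular, hxreg.toIsWeaklyRegular⟩)
  exact extZero_of_isRegular happ (fun r hr ↦ smul_residueField_eq_zero (hmem r hr))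
    (by simp [hlen])

theorem InjDimLE.exists_isRegular (hn : InjDimLE R R n)
    (hk : ¬ ExtZero R n (ResidueField R) R) :
    (∀ i < n, ExtZero R i (ResidueField R) R) ∧
      ∃ rs : List R, rs.length = n ∧ (∀ r ∈ rs, r ∈ maximalIdeal R) ∧ IsRegular R rs := by
  classical
  have hex : ∃ i, ¬ ExtZero R i (ResidueField R) R := ⟨n, hk⟩
  let d := Nat.find hex
  have hlow (i : ℕ) (hi : i < d) : ExtZero R i (ResidueField R) R :=
    not_not.mp (Nat.find_min hex hi)
  obtain ⟨rs, hlen, hmem, hreg⟩ := exists_isRegular_of_extZero hlow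
  have hquot : ¬ ExtZero R 0 (ResidueField R) (R ⧸ Ideal.ofList rs) := fun h ↦ by
    refine Nat.find_spec hex ?_
    have := extZero_residueField_length_of_quotient hmem hreg
      (h.of_linearEquiv_right (Submodule.quotEquivOfEq _ _ (Ideal.mul_top _).symm))
    rwa [hlen] at this
  have hdn : d = n := le_antisymm (Nat.find_min' hex hk) (hlen ▸ hn.le_length hk hreg hquot)
  exact ⟨hdn ▸ hlow, rs, hlen.trans hdn, hmem, hreg⟩

theorem IsGorensteinLocalRing.exists_injDimLE (h : IsGorensteinLocalRing R) :
    ∃ n : ℕ, InjDimLE R R n ∧ ringKrullDim R = n ∧ ∀ i < n, ExtZero R i (ResidueField R) R := by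
  obtain ⟨n, hn, hk⟩ := exists_injDimLE_not_extZero_residueField (R := R) (N := R)
    (h.imp fun n hn M _ _ hM i hi ↦ extVanish_iff_extZero.mp (hn (ModuleCat.of R M) hM i hi))
  obtain ⟨hlow, rs, rfl, hmem, hreg⟩ := hn.exists_isRegular hk
  refine ⟨rs.length, hn, ?_, hlow⟩
  have hle : Ideal.ofList rs ≤ maximalIdeal R := Ideal.span_le.mpr hmem
  have hquot : ringKrullDim (R ⧸ Ideal.ofList rs) = 0 :=
    ringKrullDim_quotient_eq_zero (ne_top_of_le_ne_top Ideal.IsPrime.ne_top' hle) fun p hp hrp ↦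
      hn.eq_maximalIdeal_of_isPrime hk hreg hrp ▸ maximalIdeal.isMaximal R
  rw [← ringKrullDim_add_length_eq_ringKrullDim_of_isRegular rs hreg, hquot, zero_add]

end BassTheorem

section OrthogonalModules

open Module

/-- Orthogonality of `M` to `N`: `Ext_R^i(M, N) = 0` for all `i > 0`. Over a Gorenstein ring, the
finitely generated modules orthogonal to `R` are the totally reflexive ones. -/
def ExtOrthogonal (R M N : Type u) [CommRing R] [AddCommGroup M] [Module R M] [AddCommGroup N]
    [Module R N] : Prop :=
  ∀ i, ExtZero R (i + 1) M N

variable {R : Type u} [CommRing R] {A B C N : Type u} [AddCommGroup A] [Module R A]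
  [AddCommGroup B] [Module R B] [AddCommGroup C] [Module R C] [AddCommGroup N] [Module R N]

theorem extOrthogonal_of_projective [Module.Projective R A] : ExtOrthogonal R A N :=
  extZero_succ_of_projective

namespace IsShortExact

variable {f : A →ₗ[R] B} {g : B →ₗ[R] C}

theorem extOrthogonal_left (h : IsShortExact f g) (hB : ExtOrthogonal R B N)
    (hC : ExtOrthogonal R C N) : ExtOrthogonal R A N := fun i ↦
  h.contravariant_extZero₁ (hB i) (hC (i + 1))

theorem extOrthogonal_middle (h : IsShortExact f g) (hA : ExtOrthogonal R A N)
    (hC : ExtOrthogonal R C N) : ExtOrthogonal R B N := fun i ↦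
  h.contravariant_extZero₂ (hA i) (hC i)

theorem exists_desc (h : IsShortExact f g) {φ : B →ₗ[R] N} (hφ : φ ∘ₗ f = 0) :
    ∃ θ : C →ₗ[R] N, θ ∘ₗ g = φ :=
  (LinearMap.exact_lcomp_of_exact_of_surjective N h.exact h.surjective φ).mp hφ

theorem dualMap (h : IsShortExact f g) (hC : ExtZero R 1 C R) :
    IsShortExact g.dualMap f.dualMap :=
  ⟨LinearMap.dualMap_injective_of_surjective h.surjective,
    LinearMap.exact_lcomp_of_exact_of_surjective R h.exact h.surjective, h.exists_comp_eq hC⟩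

end IsShortExact

theorem exists_isShortExact_fin_fun [IsNoetherianRing R] (G : Type u) [AddCommGroup G]
    [Module R G] [Module.Finite R G] : ∃ (r : ℕ) (K : Submodule R (Fin r → R))
      (π : (Fin r → R) →ₗ[R] G), Module.Finite R K ∧ IsShortExact K.subtype π := by
  obtain ⟨r, π, hπ⟩ := Module.Finite.exists_fin' R G
  exact ⟨r, LinearMap.ker π, π, inferInstance, isShortExact_ker hπ⟩

theorem isMCM_iff_extZero [IsLocalRing R] {n : ℕ} (hn : ringKrullDim R = n) {M : ModuleCat.{u} R} :
    IsMCM R M ↔ ∀ i < n, ExtZero R i (ResidueField R) M := by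
  rw [IsMCM, hn, moduleDepth, show ((n : WithBot ℕ∞)) = ((n : ℕ∞) : WithBot ℕ∞) from rfl,
    WithBot.coe_le_coe, le_sInf_iff]
  simp only [Set.forall_mem_image, Set.mem_ofPred_eq, extVanish_iff_extZero, Nat.cast_le]
  exact forall_congr' fun i ↦ ⟨fun h hi ↦ by_contra fun hne ↦ (h hne).not_gt hi,
    fun h hne ↦ not_lt.mp fun hi ↦ hne (h hi)⟩

variable [IsNoetherianRing R] {n : ℕ} {G : Type u} [AddCommGroup G] [Module R G]
  [Module.Finite R G]

theorem InjDimLE.extZero_dual (hn : InjDimLE R R n) (hG : ExtOrthogonal R G R) {i j : ℕ}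
    (hij : n < i + 1 + j) : ExtZero R (i + 1) (Dual R G) R := by
  induction j generalizing G i with
  | zero => exact hn _ inferInstance _ hij
  | succ j ih =>
    obtain ⟨r, K, π, hK, hπ⟩ := exists_isShortExact_fin_fun (R := R) G
    have hKR : ExtOrthogonal R K R := hπ.extOrthogonal_left extOrthogonal_of_projective hG
    exact (hπ.dualMap (hG 0)).contravariant_extZero₁ (extZero_succ_of_projective i)
      (ih hKR (by omega))

theorem InjDimLE.extOrthogonal_dual (hn : InjDimLE R R n) (hG : ExtOrthogonal R G R) :
    ExtOrthogonal R (Dual R G) R := fun i ↦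
  hn.extZero_dual (j := n) hG (by omega)

theorem InjDimLE.dual_eval_surjective (hn : InjDimLE R R n) (hG : ExtOrthogonal R G R) :
    Function.Surjective (Dual.eval R G) := by
  intro θ
  obtain ⟨r, K, π, hK, hπ⟩ := exists_isShortExact_fin_fun (R := R) G
  have hKR : ExtOrthogonal R K R := hπ.extOrthogonal_left extOrthogonal_of_projective hG
  obtain ⟨θ', rfl⟩ := (hπ.dualMap (hG 0)).exists_comp_eq (hn.extOrthogonal_dual hKR 0) θ
  obtain ⟨x, rfl⟩ := (bijective_dual_eval R (Fin r → R)).2 θ'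
  exact ⟨π x, rfl⟩

theorem InjDimLE.dual_eval_injective (hn : InjDimLE R R n) (hG : ExtOrthogonal R G R) :
    Function.Injective (Dual.eval R G) := by
  obtain ⟨r, K, π, hK, hπ⟩ := exists_isShortExact_fin_fun (R := R) G
  have hKR : ExtOrthogonal R K R := hπ.extOrthogonal_left extOrthogonal_of_projective hG
  rw [injective_iff_map_eq_zero]
  intro y hy
  obtain ⟨x, rfl⟩ := hπ.surjective y
  obtain ⟨θ, hθ⟩ := (hπ.dualMap (hG 0)).exists_desc (φ := Dual.eval R _ x) hy
  obtain ⟨k, rfl⟩ := hn.dual_eval_surjective hKR θ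
  rw [← (bijective_dual_eval R (Fin r → R)).1 hθ]
  exact hπ.exact.apply_apply_eq_zero k

theorem exists_forall_dual_eq_comp (R G : Type u) [CommRing R] [AddCommGroup G] [Module R G]
    [Module.Finite R (Dual R G)] :
    ∃ (r : ℕ) (ε : G →ₗ[R] Fin r → R), ∀ φ : Dual R G, ∃ ψ : Dual R (Fin r → R), ψ ∘ₗ ε = φ := by
  obtain ⟨r, σ, hσ⟩ := Module.Finite.exists_fin' R (Dual R G)
  refine ⟨r, LinearMap.pi fun i ↦ σ (Pi.single i 1), fun φ ↦ ?_⟩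
  obtain ⟨v, rfl⟩ := hσ φ
  refine ⟨∑ i, v i • LinearMap.proj i, LinearMap.ext fun x ↦ ?_⟩
  have hv : v = ∑ i, v i • Pi.single i (1 : R) := pi_eq_sum_univ' v
  conv_rhs => rw [hv]
  simp

theorem InjDimLE.exists_injective_extOrthogonal_quotient (hn : InjDimLE R R n)
    (hG : ExtOrthogonal R G R) : ∃ (r : ℕ) (ε : G →ₗ[R] Fin r → R),
      Function.Injective ε ∧ ExtOrthogonal R ((Fin r → R) ⧸ LinearMap.range ε) R := by
  obtain ⟨r, ε, hε⟩ := exists_forall_dual_eq_comp R G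
  have hinj : Function.Injective ε := (injective_iff_map_eq_zero ε).mpr fun x hx ↦ by
    refine (injective_iff_map_eq_zero _).mp (hn.dual_eval_injective hG) x (LinearMap.ext fun φ ↦ ?_)
    obtain ⟨ψ, rfl⟩ := hε φ
    simp [hx]
  refine ⟨r, ε, hinj, fun i ↦ ?_⟩
  cases i with
  | zero => exact (isShortExact_mkQ hinj).extZero_one_of_forall_exists_comp_eq hε
  | succ i =>
    exact (isShortExact_mkQ hinj).contravariant_extZero₃ (hG i) (extZero_succ_of_projective _)

theorem InjDimLE.extZero_of_extOrthogonal (hn : InjDimLE R R n) {d : ℕ}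
    (hd : ∀ i < d, ExtZero R i A R) (hG : ExtOrthogonal R G R) {i : ℕ} (hi : i < d) :
    ExtZero R i A G := by
  induction i generalizing G with
  | zero =>
    obtain ⟨r, ε, hε, -⟩ := hn.exists_injective_extOrthogonal_quotient hG
    refine extZero_zero_iff.mpr fun f ↦ LinearMap.ext fun x ↦ hε ?_
    simpa using LinearMap.congr_fun (extZero_zero_iff.mp ((hd 0 hi).fin_pi r) (ε ∘ₗ f)) x
  | succ i ih =>
    obtain ⟨r, ε, hε, hX⟩ := hn.exists_injective_extOrthogonal_quotient hG
    exact (isShortExact_mkQ hε).covariant_extZero₁ (ih hX (by omega)) ((hd _ hi).fin_pi r)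

end OrthogonalModules

section Nakayama

variable {R : Type u} [CommRing R] {A N : Type u} [AddCommGroup A] [Module R A]
  [AddCommGroup N] [Module R N]

theorem ext_comp_mk₀_mem_smul {r i : ℕ} {I : Ideal R}
    (x : Abelian.Ext.{u} (ModuleCat.of R A) (ModuleCat.of R (Fin r → R)) i)
    (ℓ : (Fin r → R) →ₗ[R] R) (hℓ : ∀ v, ℓ v ∈ I) :
    x.comp (Abelian.Ext.mk₀ (ModuleCat.ofHom ℓ)) (add_zero i) ∈
      I • (⊤ : Submodule R (Abelian.Ext.{u} (ModuleCat.of R A) (ModuleCat.of R R) i)) := by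
  have hsum : ModuleCat.ofHom ℓ =
      ∑ j, ℓ (Pi.single j 1) • ModuleCat.ofHom (LinearMap.proj (R := R) (φ := fun _ ↦ R) j) := by
    ext v
    simp [Pi.single_apply]
  rw [hsum, Abelian.Ext.mk₀_sum, Abelian.Ext.comp_sum]
  refine Submodule.sum_mem _ fun j _ ↦ ?_
  rw [Abelian.Ext.mk₀_smul, Abelian.Ext.comp_smul]
  exact Submodule.smul_mem_smul (hℓ _) trivial

variable [IsLocalRing R]

theorem exists_surjective_residueField [Module.Finite R N] [Nontrivial N] :
    ∃ f : N →ₗ[R] ResidueField R, Function.Surjective f := by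
  obtain ⟨P, hP, -⟩ := (eq_top_or_exists_le_coatom (⊥ : Submodule R N)).resolve_left bot_ne_top
  obtain ⟨I, hI, ⟨e⟩⟩ := isSimpleModule_iff_quot_maximal.mp (isSimpleModule_iff_isCoatom.mpr hP)
  obtain rfl := IsLocalRing.eq_maximalIdeal hI
  exact ⟨e.toLinearMap ∘ₗ P.mkQ, e.surjective.comp P.mkQ_surjective⟩

variable [IsNoetherianRing R]

theorem extZero_residueField_of_extZero [Module.Finite R N] [Nontrivial N] {i : ℕ}
    (hA : ∀ (L : Type u) [AddCommGroup L] [Module R L], Module.Finite R L → ExtZero R (i + 1) A L)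
    (hN : ExtZero R i A N) : ExtZero R i A (ResidueField R) := by
  obtain ⟨f, hf⟩ := exists_surjective_residueField (R := R) (N := N)
  exact (isShortExact_ker hf).covariant_extZero₃ hN (hA _ inferInstance)

theorem extZero_self_of_extZero_residueField [Module.Finite R A] {i : ℕ}
    (hA : ∀ (L : Type u) [AddCommGroup L] [Module R L], Module.Finite R L → ExtZero R (i + 1) A L)
    (hk : ExtZero R i A (ResidueField R)) : ExtZero R i A R := by
  have hres : IsShortExact (maximalIdeal R).subtype (Submodule.mkQ (maximalIdeal R)) :=
    ⟨Subtype.val_injective, LinearMap.exact_subtype_mkQ _, Submodule.mkQ_surjective _⟩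
  obtain ⟨r, K, π, hK, hπ⟩ := exists_isShortExact_fin_fun (R := R) (maximalIdeal R)
  refine extZero_of_forall_mem_smul fun y ↦ ?_
  obtain ⟨z, rfl⟩ := Abelian.Ext.covariant_sequence_exact₂ _ hres.shortExact y
    (extZero_iff.mp hk _)
  obtain ⟨w, rfl⟩ := Abelian.Ext.covariant_sequence_exact₃ _ hπ.shortExact z rfl
    (extZero_iff.mp (hA K hK) _)
  rw [Abelian.Ext.comp_assoc_of_second_deg_zero, Abelian.Ext.mk₀_comp_mk₀]
  exact ext_comp_mk₀_mem_smul w ((maximalIdeal R).subtype ∘ₗ π) fun v ↦ (π v).2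

end Nakayama

section Pushout

variable {R : Type u} [CommRing R] {A B C F K P W X Z : Type u} [AddCommGroup A] [Module R A]
  [AddCommGroup B] [Module R B] [AddCommGroup C] [Module R C] [AddCommGroup F] [Module R F]
  [AddCommGroup K] [Module R K] [AddCommGroup P] [Module R P] [AddCommGroup W] [Module R W]
  [AddCommGroup X] [Module R X] [AddCommGroup Z] [Module R Z]

/-- The square `j ∘ φ = l ∘ ι` is a pushout of `R`-modules, expressed by exactness of
`K → X × F → P → 0`. -/
structure IsPushoutSquare (φ : K →ₗ[R] X) (ι : K →ₗ[R] F) (j : X →ₗ[R] P) (l : F →ₗ[R] P) :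
    Prop where
  comm (k : K) : j (φ k) = l (ι k)
  exists_of_eq {x : X} {w : F} (h : j x = l w) : ∃ k, φ k = x ∧ ι k = w
  exists_add_eq (p : P) : ∃ x w, j x + l w = p

theorem isPushoutSquare_mkQ (φ : K →ₗ[R] X) (ι : K →ₗ[R] F) :
    IsPushoutSquare φ ι ((LinearMap.range (φ.prod (-ι))).mkQ ∘ₗ LinearMap.inl R X F)
      ((LinearMap.range (φ.prod (-ι))).mkQ ∘ₗ LinearMap.inr R X F) where
  comm k := (Submodule.Quotient.eq _).mpr ⟨k, by simp⟩
  exists_of_eq {x w} h := by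
    obtain ⟨k, hk⟩ := (Submodule.Quotient.eq _).mp h
    exact ⟨k, by simpa using congr_arg Prod.fst hk, by simpa using congr_arg Prod.snd hk⟩
  exists_add_eq p := by
    obtain ⟨⟨x, w⟩, rfl⟩ := Submodule.mkQ_surjective _ p
    exact ⟨x, w, (map_add (Submodule.mkQ _) (x, 0) (0, w)).symm.trans (by simp)⟩

namespace IsPushoutSquare

variable {φ : K →ₗ[R] X} {ι : K →ₗ[R] F} {j : X →ₗ[R] P} {l : F →ₗ[R] P}

theorem symm (h : IsPushoutSquare φ ι j l) : IsPushoutSquare ι φ l j where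
  comm k := (h.comm k).symm
  exists_of_eq hxw := (h.exists_of_eq hxw.symm).imp fun _ ↦ And.symm
  exists_add_eq p := by
    obtain ⟨x, w, hp⟩ := h.exists_add_eq p
    exact ⟨w, x, (add_comm _ _).trans hp⟩

theorem exists_desc (h : IsPushoutSquare φ ι j l) {a : X →ₗ[R] Z} {b : F →ₗ[R] Z}
    (hab : a ∘ₗ φ = b ∘ₗ ι) : ∃ q : P →ₗ[R] Z, q ∘ₗ j = a ∧ q ∘ₗ l = b := by
  have hsurj : Function.Surjective (j.coprod l) := fun p ↦ by
    obtain ⟨x, w, hp⟩ := h.exists_add_eq p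
    exact ⟨(x, w), hp⟩
  obtain ⟨q, hq⟩ := (isShortExact_ker hsurj).exists_desc (φ := a.coprod b) <| by
    ext ⟨⟨x, w⟩, hxw⟩
    obtain ⟨k, rfl, hk⟩ := h.exists_of_eq (x := x) (w := -w)
      (by simpa [eq_neg_iff_add_eq_zero] using hxw)
    have hw : w = -ι k := by rw [hk, neg_neg]
    simp [hw, show a (φ k) = b (ι k) from LinearMap.congr_fun hab k]
  refine ⟨q, ?_, ?_⟩
  · simpa [LinearMap.comp_assoc] using congr_arg (· ∘ₗ LinearMap.inl R X F) hq
  · simpa [LinearMap.comp_assoc] using congr_arg (· ∘ₗ LinearMap.inr R X F) hq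

theorem exists_isShortExact (h : IsPushoutSquare φ ι j l) {π : F →ₗ[R] W}
    (hπ : IsShortExact ι π) : ∃ g : P →ₗ[R] W, IsShortExact j g := by
  obtain ⟨g, hgj, hgl⟩ := h.exists_desc (a := 0) (b := π)
    (by rw [LinearMap.zero_comp, hπ.exact.linearMap_comp_eq_zero])
  have hj (x : X) : g (j x) = 0 := LinearMap.congr_fun hgj x
  have hl (w : F) : g (l w) = π w := LinearMap.congr_fun hgl w
  refine ⟨g, (injective_iff_map_eq_zero j).mpr fun x hx ↦ ?_, fun p ↦ ⟨fun hp ↦ ?_, ?_⟩, fun w ↦ ?_⟩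
  · obtain ⟨k, rfl, hk⟩ := h.exists_of_eq (hx.trans (map_zero l).symm)
    rw [hπ.injective (hk.trans (map_zero ι).symm), map_zero]
  · obtain ⟨x, w, rfl⟩ := h.exists_add_eq p
    rw [map_add, hj, zero_add, hl] at hp
    obtain ⟨k, rfl⟩ := (hπ.exact w).mp hp
    exact ⟨x + φ k, by rw [map_add, h.comm]⟩
  · rintro ⟨x, rfl⟩
    exact hj x
  · obtain ⟨v, rfl⟩ := hπ.surjective w
    exact ⟨l v, hl v⟩

end IsPushoutSquare

theorem IsShortExact.exists_isShortExact_quotient {f : A →ₗ[R] B} {g : B →ₗ[R] C}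
    (h : IsShortExact f g) {ε : B →ₗ[R] F} (hε : Function.Injective ε) :
    ∃ (a : C →ₗ[R] F ⧸ LinearMap.range (ε ∘ₗ f))
      (b : (F ⧸ LinearMap.range (ε ∘ₗ f)) →ₗ[R] F ⧸ LinearMap.range ε), IsShortExact a b := by
  have hle : LinearMap.range (ε ∘ₗ f) ≤ LinearMap.range ε := LinearMap.range_comp_le_range f ε
  obtain ⟨a, ha⟩ := h.exists_desc (φ := (LinearMap.range (ε ∘ₗ f)).mkQ ∘ₗ ε)
    (by rw [LinearMap.comp_assoc, LinearMap.range_mkQ_comp])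
  have hag (y : B) : a (g y) = (LinearMap.range (ε ∘ₗ f)).mkQ (ε y) := LinearMap.congr_fun ha y
  refine ⟨a, Submodule.factor hle, (injective_iff_map_eq_zero a).mpr fun c hc ↦ ?_,
    fun t ↦ ⟨fun ht ↦ ?_, ?_⟩, Submodule.factor_surjective hle⟩
  · obtain ⟨y, rfl⟩ := h.surjective c
    rw [hag, Submodule.mkQ_apply, Submodule.Quotient.mk_eq_zero] at hc
    obtain ⟨x, hx⟩ := hc
    rw [← hε hx]
    exact h.exact.apply_apply_eq_zero x
  · obtain ⟨v, rfl⟩ := Submodule.mkQ_surjective _ t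
    obtain ⟨y, rfl⟩ := (Submodule.Quotient.mk_eq_zero _).mp ht
    exact ⟨g y, hag y⟩
  · rintro ⟨c, rfl⟩
    obtain ⟨y, rfl⟩ := h.surjective c
    rw [hag]
    exact (Submodule.Quotient.mk_eq_zero _).mpr ⟨y, rfl⟩

end Pushout

section AuslanderBound

/-- Auslander's condition on `N` with bound `a`: the vanishing of `Ext_R^i(M, N)` for `i ≫ 0`
forces its vanishing for all `i > a`. A Gorenstein local ring is AB when a single bound serves all
finitely generated `N`. -/
def AuslanderBound (R N : Type u) [CommRing R] [AddCommGroup N] [Module R N] (a : ℕ) : Prop :=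
  ∀ (M : Type u) [AddCommGroup M] [Module R M], Module.Finite R M →
    (∃ m, ∀ i, m < i → ExtZero R i M N) → ∀ i, a < i → ExtZero R i M N

theorem IsABRing.exists_auslanderBound {R : Type u} [CommRing R] [IsLocalRing R]
    (hAB : IsABRing R) :
    ∃ a : ℕ, ∀ (N : Type u) [AddCommGroup N] [Module R N], Module.Finite R N →
      AuslanderBound R N a := by
  obtain ⟨-, a, ha⟩ := hAB
  exact ⟨a, fun N _ _ hN M _ _ hM ⟨m, hm⟩ i hi ↦ extVanish_iff_extZero.mp
    (ha (ModuleCat.of R M) (ModuleCat.of R N) hM hN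
      ⟨m, fun i hi ↦ extVanish_iff_extZero.mpr (hm i hi)⟩ i hi)⟩

variable {R : Type u} [CommRing R] [IsNoetherianRing R] {K M N : Type u}
  [AddCommGroup K] [Module R K] [AddCommGroup M] [Module R M] [AddCommGroup N] [Module R N]
  {n a : ℕ}

theorem AuslanderBound.extZero_succ (ha : AuslanderBound R N a) (hn : InjDimLE R R n) {G : Type u}
    [AddCommGroup G] [Module R G] [Module.Finite R G] (hG : ExtOrthogonal R G R)
    (hev : ∃ m, ∀ i, m < i → ExtZero R i G N) {i j : ℕ} (hij : a < i + 1 + j) :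
    ExtZero R (i + 1) G N := by
  induction j generalizing G i with
  | zero => exact ha G inferInstance hev _ hij
  | succ j ih =>
    obtain ⟨r, ε, hε, hX⟩ := hn.exists_injective_extOrthogonal_quotient hG
    have hS := isShortExact_mkQ hε
    refine hS.contravariant_extZero₁ (extZero_succ_of_projective i) (ih hX ?_ (by omega))
    obtain ⟨m, hm⟩ := hev
    refine ⟨m + 1, fun i hi ↦ ?_⟩
    obtain ⟨i, rfl⟩ := Nat.exists_eq_add_of_lt (Nat.zero_lt_of_lt hi)
    exact hS.contravariant_extZero₃ (hm _ (by omega)) (extZero_succ_of_projective _)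

theorem AuslanderBound.extOrthogonal (ha : AuslanderBound R N a) (hn : InjDimLE R R n)
    {G : Type u} [AddCommGroup G] [Module R G] [Module.Finite R G] (hG : ExtOrthogonal R G R)
    (hev : ∃ m, ∀ i, m < i → ExtZero R i G N) : ExtOrthogonal R G N := fun i ↦
  ha.extZero_succ hn hG hev (j := a) (by omega)

theorem InjDimLE.exists_isShortExact_extOrthogonal_middle [Module.Finite R K] (hn : InjDimLE R R n)
    {r : ℕ} {ι : K →ₗ[R] Fin r → R} {π : (Fin r → R) →ₗ[R] M} (h : IsShortExact ι π)
    (hK : ExtOrthogonal R K R) :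
    ∃ (s : ℕ) (P : Type u) (_ : AddCommGroup P) (_ : Module R P) (j : (Fin s → R) →ₗ[R] P)
      (g : P →ₗ[R] M), Module.Finite R P ∧ IsShortExact j g ∧ ExtOrthogonal R P R := by
  obtain ⟨s, φ, hφ, hX⟩ := hn.exists_injective_extOrthogonal_quotient hK
  have hP := isPushoutSquare_mkQ φ ι
  obtain ⟨g, hg⟩ := hP.exists_isShortExact h
  obtain ⟨g', hg'⟩ := hP.symm.exists_isShortExact (isShortExact_mkQ hφ)
  exact ⟨s, _, _, _, _, g, inferInstance, hg,
    hg'.extOrthogonal_middle extOrthogonal_of_projective hX⟩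

variable [IsLocalRing R] [Module.Finite R N] [Nontrivial N]

theorem AuslanderBound.extZero_one_self [Module.Finite R K] (ha : AuslanderBound R N a)
    (hn : InjDimLE R R n) {r : ℕ} {ι : K →ₗ[R] Fin r → R} {π : (Fin r → R) →ₗ[R] M}
    (h : IsShortExact ι π) (hK : ExtOrthogonal R K R) (hM : ExtOrthogonal R M N) :
    ExtZero R 1 M R := by
  obtain ⟨s, P, _, _, j, g, _, hPM, hPR⟩ := hn.exists_isShortExact_extOrthogonal_middle h hK
  obtain ⟨t, ε, hε, hX⟩ := hn.exists_injective_extOrthogonal_quotient hPR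
  have hPX := isShortExact_mkQ hε
  have hPN : ExtOrthogonal R P N := hPM.extOrthogonal_middle extOrthogonal_of_projective hM
  have hXN : ExtOrthogonal R ((Fin t → R) ⧸ LinearMap.range ε) N := by
    refine ha.extOrthogonal hn hX ⟨1, fun i hi ↦ ?_⟩
    obtain ⟨i, rfl⟩ := Nat.exists_eq_add_of_lt hi
    rw [show 1 + i + 1 = i + 1 + 1 by omega]
    exact hPX.contravariant_extZero₃ (hPN i) (extZero_succ_of_projective _)
  -- `I` is the cokernel of an injection of free modules, so `Ext_R^2(I, -) = 0` and the vanishing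
  -- of `Ext_R^1(I, N)` already implies that of `Ext_R^1(I, R)`.
  let I := (Fin t → R) ⧸ LinearMap.range (ε ∘ₗ j)
  obtain ⟨_, _, hMI⟩ := hPM.exists_isShortExact_quotient hε
  have hI (L : Type u) [AddCommGroup L] [Module R L] : ExtZero R 2 I L :=
    (isShortExact_mkQ (f := ε ∘ₗ j) (hε.comp hPM.injective)).contravariant_extZero₃
      (extZero_succ_of_projective 0) (extZero_succ_of_projective 1)
  have hIN : ExtZero R 1 I N := hMI.contravariant_extZero₂ (hM 0) (hXN 0)
  have hIR : ExtZero R 1 I R := extZero_self_of_extZero_residueField (fun L _ _ _ ↦ hI L)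
    (extZero_residueField_of_extZero (fun L _ _ _ ↦ hI L) hIN)
  exact hMI.contravariant_extZero₁ hIR (hX 1)

theorem AuslanderBound.extOrthogonal_self [Module.Finite R M] (ha : AuslanderBound R N a)
    (hn : InjDimLE R R n) (hM : ExtOrthogonal R M N) : ExtOrthogonal R M R := by
  suffices h : ∀ (j : ℕ) (M : Type u) [AddCommGroup M] [Module R M], Module.Finite R M →
      (∀ i, j < i → ExtZero R i M R) → ExtOrthogonal R M N → ExtOrthogonal R M R from
    h n M ‹_› (hn M ‹_›) hM
  intro j
  induction j with
  | zero => exact fun M _ _ _ hM _ i ↦ hM _ i.succ_pos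
  | succ j ih =>
    intro M _ _ _ hMj hMN
    obtain ⟨r, K, π, hK, hπ⟩ := exists_isShortExact_fin_fun (R := R) M
    have hKj (i : ℕ) (hi : j < i) : ExtZero R i K R := by
      obtain ⟨i, rfl⟩ := Nat.exists_eq_add_of_lt (Nat.zero_lt_of_lt hi)
      exact hπ.contravariant_extZero₁ (extZero_succ_of_projective _) (hMj _ (by omega))
    have hKR : ExtOrthogonal R K R :=
      ih K hK hKj (hπ.extOrthogonal_left extOrthogonal_of_projective hMN)
    intro i
    cases i with
    | zero => exact ha.extZero_one_self hn hπ hKR hMN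
    | succ i => exact hπ.contravariant_extZero₃ (hKR i) (extZero_succ_of_projective _)

end AuslanderBound

section Approximation

variable {R : Type u} [CommRing R] {𝒳 : Set (ModuleCat.{u} R)}

theorem IsResolving.mem_of_free (h𝒳 : IsResolving R 𝒳) (F : Type u) [AddCommGroup F] [Module R F]
    [Module.Finite R F] [Module.Free R F] : ModuleCat.of R F ∈ 𝒳 :=
  h𝒳.freeMem _ ‹_› ‹_›

theorem not_contravariantlyInfinite_of_extZero_one (h𝒳 : IsResolving R 𝒳)
    (hR : ∀ W ∈ 𝒳, ExtZero R 1 W R) {x : R} (hx : IsSMulRegular R x) (hunit : ¬ IsUnit x) :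
    ¬ ContravariantlyInfinite R 𝒳 := by
  have hS := isShortExact_lsmul_mkQ hx
  refine fun h ↦ h (ModuleCat.of R (QuotSMulTop x R))
    (inferInstanceAs (Module.Finite R (QuotSMulTop x R))) (fun hmem ↦ ?_)
    ⟨ModuleCat.of R R, _, h𝒳.mem_of_free R, fun W hW ↦ hS.exists_lift (hR W hW)⟩
  obtain ⟨ψ, hψ⟩ := hS.exists_comp_eq (hR _ hmem) LinearMap.id
  have hψx : x * ψ 1 = 1 := by
    rw [← smul_eq_mul, ← map_smul]
    exact LinearMap.congr_fun hψ 1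
  exact hunit (.of_mul_eq_one _ hψx)

variable {X M : ModuleCat.{u} R} {f : X →ₗ[R] M}

theorem IsRightApprox.surjective (h𝒳 : IsResolving R 𝒳) (hf : IsRightApprox R 𝒳 f) :
    Function.Surjective f := fun m ↦ by
  obtain ⟨h, hh⟩ := hf.2 _ (h𝒳.mem_of_free R) (LinearMap.toSpanSingleton R M m)
  exact ⟨h (1 : R), (LinearMap.congr_fun hh (1 : R)).trans (one_smul R m)⟩

theorem IsRightApprox.nontrivial_ker (h𝒳 : IsResolving R 𝒳) (hf : IsRightApprox R 𝒳 f)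
    (hM : M ∉ 𝒳) : Nontrivial (LinearMap.ker f) := by
  rw [Submodule.nontrivial_iff_ne_bot]
  intro hbot
  exact hM (h𝒳.isoClosed hf.1
    (LinearEquiv.ofBijective f ⟨LinearMap.ker_eq_bot.mp hbot, hf.surjective h𝒳⟩))

variable [IsNoetherianRing R]

theorem IsRightApprox.extZero_one_ker (h𝒳 : IsResolving R 𝒳) (hf : IsRightApprox R 𝒳 f)
    (hmin : ∀ h : X →ₗ[R] X, f ∘ₗ h = f → Function.Bijective h) {W : ModuleCat.{u} R}
    (hW : W ∈ 𝒳) : ExtZero R 1 W (LinearMap.ker f) := by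
  have := h𝒳.finite W hW
  obtain ⟨r, K, π, -, hπ⟩ := exists_isShortExact_fin_fun (R := R) W
  refine hπ.extZero_one_of_forall_exists_comp_eq fun φ ↦ ?_
  have hP := isPushoutSquare_mkQ ((LinearMap.ker f).subtype ∘ₗ φ) K.subtype
  set j := Submodule.mkQ _ ∘ₗ LinearMap.inl R X (Fin r → R)
  set l := Submodule.mkQ _ ∘ₗ LinearMap.inr R X (Fin r → R)
  obtain ⟨g, hg⟩ := hP.exists_isShortExact hπ
  have hmem := h𝒳.extClosed X (ModuleCat.of R _) W j g ⟨hg.injective, hg.exact, hg.surjective⟩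
    hf.1 hW
  -- The pushout lies in `𝒳`, so the map to `M` induced by `f` and `0` lifts along `f`;
  -- minimality makes the `X`-component of the lift invertible.
  obtain ⟨p, hpj, hpl⟩ := hP.exists_desc (a := f) (b := 0) (by ext k; exact (φ k).2)
  obtain ⟨q, rfl⟩ := hf.2 _ hmem p
  let e : X ≃ₗ[R] X := LinearEquiv.ofBijective (q ∘ₗ j) (hmin _ hpj)
  have hfe (x : X) : f (e.symm x) = f x := by
    conv_rhs => rw [← e.apply_symm_apply x]
    exact (LinearMap.congr_fun hpj _).symm
  refine ⟨(e.symm.toLinearMap ∘ₗ q ∘ₗ l).codRestrict _ fun w ↦ ?_, LinearMap.ext fun k ↦ ?_⟩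
  · exact (hfe _).trans (LinearMap.congr_fun hpl w)
  · exact Subtype.ext (e.symm_apply_eq.mpr (congr_arg q (hP.comm k).symm))

theorem IsRightApprox.extOrthogonal_ker (h𝒳 : IsResolving R 𝒳) (hf : IsRightApprox R 𝒳 f)
    (hmin : ∀ h : X →ₗ[R] X, f ∘ₗ h = f → Function.Bijective h) {W : ModuleCat.{u} R}
    (hW : W ∈ 𝒳) : ExtOrthogonal R W (LinearMap.ker f) := by
  intro i
  induction i generalizing W with
  | zero => exact hf.extZero_one_ker h𝒳 hmin hW
  | succ i ih =>
    have := h𝒳.finite W hW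
    obtain ⟨r, K, π, -, hπ⟩ := exists_isShortExact_fin_fun (R := R) W
    have hK := h𝒳.kerClosed (ModuleCat.of R K) (ModuleCat.of R (Fin r → R)) W K.subtype π
      ⟨hπ.injective, hπ.exact, hπ.surjective⟩ (h𝒳.mem_of_free _) hW
    exact hπ.contravariant_extZero₃ (ih hK) (extZero_succ_of_projective _)

end Approximation

section GorensteinLocal

variable {R : Type u} [CommRing R] [IsNoetherianRing R] {n : ℕ}

theorem InjDimLE.extOrthogonal_of_isMCM [IsLocalRing R] (hn : InjDimLE R R n)
    (hd : ringKrullDim R = n) {M : ModuleCat.{u} R} [Module.Finite R M] (hM : IsMCM R M) :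
    ExtOrthogonal R M R := by
  intro i
  cases subsingleton_or_nontrivial M with
  | inl _ => exact extZero_of_subsingleton_left _
  | inr _ =>
    obtain ⟨rs, hlen, hrs, hreg⟩ := exists_isRegular_of_extZero ((isMCM_iff_extZero hd).mp hM)
    exact hn.extZero_of_isWeaklyRegular rs hrs M hreg.toIsWeaklyRegular (by omega)

theorem exists_isSMulRegular_mem_maximalIdeal [IsLocalRing R] {N : Type u} [AddCommGroup N]
    [Module R N] [Module.Finite R N] [Nontrivial N] (hN : ExtZero R 0 (ResidueField R) N) :
    ∃ x ∈ maximalIdeal R, IsSMulRegular N x := by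
  obtain ⟨_ | ⟨x, rs⟩, hlen, hrs, hreg⟩ := exists_isRegular_of_extZero (n := 1) (W := N)
    (by simpa using hN)
  · simp at hlen
  · exact ⟨x, hrs x List.mem_cons_self,
      ((RingTheory.Sequence.isWeaklyRegular_cons_iff _ _ _).mp hreg.toIsWeaklyRegular).1⟩

theorem isMCM_of_not_contravariantlyInfinite [HenselianLocalRing R] {a : ℕ}
    (hn : InjDimLE R R n) (hd : ringKrullDim R = n)
    (hk : ∀ i < n, ExtZero R i (ResidueField R) R)
    (ha : ∀ (N : Type u) [AddCommGroup N] [Module R N], Module.Finite R N → AuslanderBound R N a)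
    {𝒳 : Set (ModuleCat.{u} R)} (h𝒳 : IsResolving R 𝒳) (hc : ¬ ContravariantlyInfinite R 𝒳)
    {W : ModuleCat.{u} R} (hW : W ∈ 𝒳) : IsMCM R W := by
  simp only [ContravariantlyInfinite, not_forall, not_not] at hc
  obtain ⟨M, -, hM, happ⟩ := hc
  obtain ⟨X, f, hf, hmin⟩ := happ.exists_minimal h𝒳
  have := h𝒳.finite X hf.1
  have := h𝒳.finite W hW
  have := hf.nontrivial_ker h𝒳 hM
  have hWR : ExtOrthogonal R W R :=
    (ha _ inferInstance).extOrthogonal_self hn (hf.extOrthogonal_ker h𝒳 hmin hW)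
  exact (isMCM_iff_extZero hd).mpr fun i hi ↦ hn.extZero_of_extOrthogonal hk hWR hi

end GorensteinLocal

/-- Over a henselian Gorenstein local AB ring of positive dimension,
a resolving subcategory consists of maximal Cohen–Macaulay modules if and only if it is
not contravariantly infinite. -/
theorem stmt3 (R : Type u) [CommRing R] [IsNoetherianRing R] [IsLocalRing R]
    [HenselianLocalRing R] (hAB : IsABRing R) (hdim : 0 < ringKrullDim R)
    (𝒳 : Set (ModuleCat.{u} R)) (h𝒳 : IsResolving R 𝒳) :
    (∀ M ∈ 𝒳, IsMCM R M) ↔ ¬ ContravariantlyInfinite R 𝒳 := by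
  obtain ⟨n, hn, hd, hk⟩ := hAB.1.exists_injDimLE
  obtain ⟨a, ha⟩ := hAB.exists_auslanderBound
  refine ⟨fun hMCM ↦ ?_, fun hc M hM ↦ isMCM_of_not_contravariantlyInfinite hn hd hk ha h𝒳 hc hM⟩
  have hn0 : 0 < n := by rwa [hd, Nat.cast_pos] at hdim
  obtain ⟨x, hx𝔪, hx⟩ := exists_isSMulRegular_mem_maximalIdeal (hk 0 hn0)
  refine not_contravariantlyInfinite_of_extZero_one h𝒳 (fun W hW ↦ ?_) hx hx𝔪
  have := h𝒳.finite W hW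
  exact hn.extOrthogonal_of_isMCM hd (hMCM W hW) 0
end

section
/- Let R be an Artinian Noetherian local ring which is a complete intersection of codimension c = dim_k(𝔪/𝔪²), and assume c ≥ 2. Let ℰ be the class of finitely generated R-modules whose complexity is strictly less than c (ℰ is a resolving subcategory). Then ℰ is contravariantly infinite: no finitely generated R-module outside ℰ admits a right ℰ-approximation. -/
open CategoryTheory IsLocalRing

universe u

/-- The `i`-th Betti number of `M` equals `b`, i.e. `Ext^i(M, k) ≅ k^b`. -/
def BettiEq (R : Type u) [CommRing R] [IsLocalRing R] (M : ModuleCat.{u} R) (i b : ℕ) : Prop :=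
  Nonempty ((ExtMod R i M (ModuleCat.of R (ResidueField R))) ≃ₗ[R]
    (Fin b → ResidueField R))

/-- The complexity of `M` is at most `n`: there are `α : ℝ` and `N : ℕ` with
`βᵢ(M) ≤ α · i^(n-1)` for all `i ≥ N`. -/
def HasComplexityLE (R : Type u) [CommRing R] [IsLocalRing R]
    (M : ModuleCat.{u} R) (n : ℕ) : Prop :=
  ∃ α : ℝ, ∃ N : ℕ, ∀ i, N ≤ i → ∃ b : ℕ,
    BettiEq R M i b ∧ (b : ℝ) ≤ α * (i : ℝ) ^ ((n : ℤ) - 1)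

/-- The complexity of `M`: the least `n` bounding the growth of the Betti numbers. -/
noncomputable def complexity (R : Type u) [CommRing R] [IsLocalRing R]
    (M : ModuleCat.{u} R) : ℕ∞ :=
  sInf ((fun n : ℕ => (n : ℕ∞)) '' {n : ℕ | HasComplexityLE R M n})

/-!
Write `c = e + 2`. A finitely generated module has complexity less than `c` exactly when its Betti
numbers grow at most like a polynomial of degree `e`. Moreover `R = S ⧸ (s)` for a complete
intersection `S` and a regular element `s` such that every `S`-module of finite length has Betti
growth `e` over `S`.

Suppose `f : X → M` is a minimal right approximation of some `M ∉ ℰ`, with kernel `K`. By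
Wakamatsu's lemma every extension `0 → K → φ → E → 0` with `E ∈ ℰ` splits. As `R` is
self-injective, `K` embeds as a second syzygy `0 → K → Rⁿ → Rᵐ → C → 0`, and descending a cover of
`C` from `S` gives an exact sequence `0 → C → E → Ω → 0` with `Ω = ker (Rᵐ → C)` and `E ∈ ℰ`.
Rotating it produces an extension of `E` by `K` with middle term `C × Rⁿ`, so that `K` is a direct
summand of `C × Rⁿ`. Since `K` is a second syzygy of `C`, the Betti numbers of `C` are bounded.
Hence `Ω ∈ ℰ`, the sequence `0 → K → Rⁿ → Ω → 0` splits, and `K` is injective. But then `X → M`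
splits and `M ∈ ℰ`, a contradiction.
-/

namespace CompleteIntersection

section Retract

variable {R : Type*} [Ring R] {A B C F K : Type*} [AddCommGroup A] [Module R A]
  [AddCommGroup B] [Module R B] [AddCommGroup C] [Module R C] [AddCommGroup F] [Module R F]
  [AddCommGroup K] [Module R K]

variable (R A B) in
/-- `A` is a retract of `B`, that is, isomorphic to a direct summand of `B`. -/
def IsRetract : Prop :=
  ∃ (i : A →ₗ[R] B) (r : B →ₗ[R] A), ∀ a, r (i a) = a

theorem IsRetract.of_linearEquiv (e : A ≃ₗ[R] B) : IsRetract R A B :=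
  ⟨e, e.symm, e.symm_apply_apply⟩

theorem IsRetract.trans (hAB : IsRetract R A B) (hBC : IsRetract R B C) : IsRetract R A C := by
  obtain ⟨i, r, hir⟩ := hAB
  obtain ⟨j, s, hjs⟩ := hBC
  exact ⟨j ∘ₗ i, r ∘ₗ s, fun a ↦ by simp [hir, hjs]⟩

theorem IsRetract.fst_prod : IsRetract R A (A × B) :=
  ⟨.inl R A B, .fst R A B, fun _ ↦ rfl⟩

theorem IsRetract.of_exact_of_projective [Module.Projective R C] {f : A →ₗ[R] B}
    {g : B →ₗ[R] C} (hf : Function.Injective f) (hfg : Function.Exact f g)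
    (hg : Function.Surjective g) : IsRetract R A B := by
  obtain ⟨l, hl⟩ := Module.projective_lifting_property g .id hg
  have hsplit := hfg.split_tfae hf hg
  obtain ⟨r, hr⟩ := (hsplit.out 0 1 :
    (∃ l, g ∘ₗ l = LinearMap.id) ↔ ∃ r, r ∘ₗ f = LinearMap.id).1 ⟨l, hl⟩
  exact ⟨f, r, LinearMap.congr_fun hr⟩

theorem exists_exact_rotation [Module.Projective R F] {f : A →ₗ[R] B} {g : B →ₗ[R] C}
    (hf : Function.Injective f) (hfg : Function.Exact f g) (hg : Function.Surjective g)
    {ι : K →ₗ[R] F} {ρ : F →ₗ[R] C} (hι : Function.Injective ι) (hιρ : Function.Exact ι ρ)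
    (hρ : Function.Surjective ρ) :
    ∃ (φ : K →ₗ[R] A × F) (ψ : A × F →ₗ[R] B),
      Function.Injective φ ∧ Function.Exact φ ψ ∧ Function.Surjective ψ := by
  obtain ⟨l, hl⟩ := Module.projective_lifting_property g ρ hg
  replace hl (x : F) : g (l x) = ρ x := LinearMap.congr_fun hl x
  have hmem (k : K) : l (ι k) ∈ LinearMap.range f :=
    (hfg _).1 (by rw [hl, hιρ.apply_apply_eq_zero])
  let θ : K →ₗ[R] A :=
    (LinearEquiv.ofInjective f hf).symm ∘ₗ (l ∘ₗ ι).codRestrict (LinearMap.range f) hmem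
  have hθ (k : K) : f (θ k) = l (ι k) :=
    congrArg Subtype.val ((LinearEquiv.ofInjective f hf).apply_symm_apply ⟨_, hmem k⟩)
  refine ⟨θ.prod ι, (-f).coprod l, fun x y hxy ↦ hι (congrArg Prod.snd hxy), ?_, fun b ↦ ?_⟩
  · rintro ⟨a, x⟩
    constructor
    · intro hax
      have hfa : f a = l x := by simpa [neg_add_eq_zero] using hax
      obtain ⟨k, rfl⟩ := (hιρ x).1 (by rw [← hl, ← hfa, hfg.apply_apply_eq_zero])
      exact ⟨k, Prod.ext (hf ((hθ k).trans hfa.symm)) rfl⟩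
    · rintro ⟨k, hk⟩
      rw [← hk]
      simp [hθ]
  · obtain ⟨x, hx⟩ := hρ (g b)
    obtain ⟨a, ha⟩ := (hfg (l x - b)).1 (by rw [map_sub, hl, hx, sub_self])
    exact ⟨(a, x), by simp [ha]⟩

theorem exists_exact_ker_comp {p : A →ₗ[R] B} (hp : Function.Surjective p) (q : B →ₗ[R] C) :
    ∃ (φ : LinearMap.ker p →ₗ[R] LinearMap.ker (q ∘ₗ p))
      (ψ : LinearMap.ker (q ∘ₗ p) →ₗ[R] LinearMap.ker q),
      Function.Injective φ ∧ Function.Exact φ ψ ∧ Function.Surjective ψ := by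
  refine ⟨Submodule.inclusion (LinearMap.ker_le_ker_comp p q), p.restrict fun _ hx ↦ hx,
    Submodule.inclusion_injective _, fun x ↦ ⟨fun hx ↦ ?_, ?_⟩, ?_⟩
  · exact ⟨⟨x.1, congrArg Subtype.val hx⟩, rfl⟩
  · rintro ⟨y, rfl⟩
    exact Subtype.ext y.2
  · rintro ⟨b, hb⟩
    obtain ⟨a, rfl⟩ := hp b
    exact ⟨⟨a, hb⟩, rfl⟩

theorem IsRetract.ker_of_exact {f : A →ₗ[R] B} {g : B →ₗ[R] C} (hf : Function.Injective f)
    (hfg : Function.Exact f g) : IsRetract R (LinearMap.ker g) A :=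
  .of_linearEquiv <|
    (LinearEquiv.ofEq _ _ (LinearMap.exact_iff.1 hfg)).trans (LinearEquiv.ofInjective f hf).symm

end Retract

section MinimalCover

open TensorProduct

variable (R : Type u) [CommRing R] [IsLocalRing R] (M N A B F : Type u)
  [AddCommGroup M] [Module R M] [AddCommGroup N] [Module R N] [AddCommGroup A] [Module R A]
  [AddCommGroup B] [Module R B] [AddCommGroup F] [Module R F]

/-- The minimal number of generators of a module over a local ring with residue field `k`,
defined as the dimension of `k ⊗ M`. -/
noncomputable def minGenerators : ℕ :=
  Module.finrank (ResidueField R) (ResidueField R ⊗[R] M)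

variable {R M N A B F}

theorem minGenerators_le_of_surjective [Module.Finite R M] {f : M →ₗ[R] N}
    (hf : Function.Surjective f) : minGenerators R N ≤ minGenerators R M :=
  LinearMap.finrank_le_finrank_of_surjective (f := f.baseChange (ResidueField R))
    (LinearMap.lTensor_surjective _ hf)

theorem minGenerators_le_add [Module.Finite R A] [Module.Finite R B] [Module.Finite R M]
    {f : A →ₗ[R] B} {g : B →ₗ[R] M} (hfg : Function.Exact f g) (hg : Function.Surjective g) :
    minGenerators R B ≤ minGenerators R A + minGenerators R M := by
  have hexact : LinearMap.ker (g.baseChange (ResidueField R)) =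
      LinearMap.range (f.baseChange (ResidueField R)) :=
    LinearMap.exact_iff.1 (lTensor_exact (ResidueField R) hfg hg)
  rw [minGenerators, ← (g.baseChange (ResidueField R)).finrank_range_add_finrank_ker, add_comm,
    hexact]
  exact add_le_add (LinearMap.finrank_range_le _) (Submodule.finrank_le _)

theorem exists_minimal_cover [Module.Finite R M] :
    ∃ p : (Fin (minGenerators R M) → R) →ₗ[R] M, Function.Surjective p ∧
      ∀ x ∈ LinearMap.ker p, ∀ j, x j ∈ maximalIdeal R := by
  let b : Module.Basis (Fin (minGenerators R M)) (ResidueField R) (ResidueField R ⊗[R] M) :=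
    Module.finBasis _ _
  have hlift (j) : ∃ m : M, (1 : ResidueField R) ⊗ₜ[R] m = b j :=
    TensorProduct.mk_surjective R M (ResidueField R) residue_surjective (b j)
  choose m hm using hlift
  refine ⟨Fintype.linearCombination R m, ?_, fun x hx j ↦ ?_⟩
  · rw [← LinearMap.range_eq_top, Fintype.range_linearCombination]
    exact span_eq_top_of_tmul_eq_basis m b hm
  · have hsum : ∑ j, residue R (x j) • b j = 0 := by
      have h := congrArg ((1 : ResidueField R) ⊗ₜ[R] ·) (LinearMap.mem_ker.1 hx)
      simp only [Fintype.linearCombination_apply, tmul_sum, tmul_smul, hm, tmul_zero] at h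
      exact h
    exact (residue_eq_zero_iff _).1
      (Fintype.linearIndependent_iff.1 b.linearIndependent _ hsum j)

variable (R M) in
/-- A minimal free cover of a finitely generated module over a local ring. -/
noncomputable def minCover [Module.Finite R M] : (Fin (minGenerators R M) → R) →ₗ[R] M :=
  exists_minimal_cover.choose

theorem minCover_surjective [Module.Finite R M] : Function.Surjective (minCover R M) :=
  exists_minimal_cover.choose_spec.1

theorem mem_maximalIdeal_of_mem_ker_minCover [Module.Finite R M]
    {x : Fin (minGenerators R M) → R} (hx : x ∈ LinearMap.ker (minCover R M))
    (j : Fin (minGenerators R M)) : x j ∈ maximalIdeal R :=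
  exists_minimal_cover.choose_spec.2 x hx j

variable (R M) in
/-- The first syzygy in a minimal free resolution. -/
abbrev Syzygy [Module.Finite R M] : Type u :=
  LinearMap.ker (minCover R M)

theorem bijective_of_minCover_comp_eq [Module.Finite R M]
    {φ : Module.End R (Fin (minGenerators R M) → R)}
    (hφ : ∀ x, minCover R M (φ x) = minCover R M x) : Function.Bijective φ := by
  refine OrzechProperty.bijective_of_surjective_endomorphism φ ?_
  rw [← LinearMap.range_eq_top, eq_top_iff]
  refine Submodule.le_of_le_smul_of_le_jacobson_bot (I := maximalIdeal R)
    Module.Finite.fg_top (maximalIdeal_le_jacobson ⊥) fun x _ ↦ ?_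
  have hker : x - φ x ∈ LinearMap.ker (minCover R M) := by simp [hφ]
  rw [← add_sub_cancel (φ x) x, pi_eq_sum_univ' (x - φ x)]
  exact Submodule.add_mem_sup ⟨x, rfl⟩ <| Submodule.sum_mem _ fun j _ ↦
    Submodule.smul_mem_smul (mem_maximalIdeal_of_mem_ker_minCover hker j) Submodule.mem_top

theorem IsRetract.syzygy [Module.Finite R A] [Module.Projective R F] (h : IsRetract R A B)
    {q : F →ₗ[R] B} (hq : Function.Surjective q) :
    IsRetract R (Syzygy R A) (LinearMap.ker q) := by
  obtain ⟨i, r, hir⟩ := h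
  obtain ⟨a, ha⟩ := Module.projective_lifting_property q (i ∘ₗ minCover R A) hq
  obtain ⟨b, hb⟩ :=
    Module.projective_lifting_property (minCover R A) (r ∘ₗ q) minCover_surjective
  replace ha (x) : q (a x) = i (minCover R A x) := LinearMap.congr_fun ha x
  replace hb (x) : minCover R A (b x) = r (q x) := LinearMap.congr_fun hb x
  have hba (x) : minCover R A ((b ∘ₗ a) x) = minCover R A x := by simp [ha, hb, hir]
  let e := LinearEquiv.ofBijective (b ∘ₗ a) (bijective_of_minCover_comp_eq hba)
  have he (x) : minCover R A (e.symm x) = minCover R A x := by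
    rw [← hba (e.symm x)]
    exact congrArg _ (e.apply_symm_apply x)
  refine ⟨a.restrict fun x hx ↦ ?_, (e.symm.toLinearMap ∘ₗ b).restrict fun x hx ↦ ?_,
    fun x ↦ Subtype.ext (e.symm_apply_apply x.1)⟩
  · rw [LinearMap.mem_ker] at hx ⊢
    rw [ha, hx, map_zero]
  · rw [LinearMap.mem_ker] at hx ⊢
    rw [LinearMap.comp_apply, LinearEquiv.coe_coe, he, hb, hx, map_zero]

theorem IsRetract.ker_minCover_prodMap_id [Module.Finite R A] :
    IsRetract R (LinearMap.ker ((minCover R A).prodMap (.id : F →ₗ[R] F))) (Syzygy R A) := by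
  let q : (Fin (minGenerators R A) → R) × F →ₗ[R] A × F := (minCover R A).prodMap .id
  have hmem (x) : x ∈ LinearMap.ker q ↔ x.1 ∈ LinearMap.ker (minCover R A) ∧ x.2 = 0 := by
    simp [q]
  refine ⟨(LinearMap.fst R _ _).restrict fun x hx ↦ ((hmem x).1 hx).1,
    (LinearMap.inl R _ _).restrict fun x hx ↦ (hmem _).2 ⟨hx, rfl⟩, fun x ↦ ?_⟩
  exact Subtype.ext (Prod.ext rfl ((hmem x).1 x.2).2.symm)

theorem subsingleton_of_minGenerators_eq_zero [Module.Finite R M]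
    (h : minGenerators R M = 0) : Subsingleton M := by
  have : IsEmpty (Fin (minGenerators R M)) := by
    rw [h]
    infer_instance
  exact (minCover_surjective (R := R) (M := M)).subsingleton

end MinimalCover

section Betti

variable (R : Type u) [CommRing R] [IsLocalRing R] [IsNoetherianRing R]

/-- The Betti numbers of a finitely generated module over a local ring, read off the minimal
free resolution obtained by iterating minimal covers. -/
noncomputable def betti :
    ℕ → (M : Type u) → [AddCommGroup M] → [Module R M] → [Module.Finite R M] → ℕ
  | 0, M, _, _, _ => minGenerators R M
  | i + 1, M, _, _, _ => betti i (Syzygy R M)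

variable {R} {A B C F M : Type u} [AddCommGroup A] [Module R A] [Module.Finite R A]
  [AddCommGroup B] [Module R B] [Module.Finite R B] [AddCommGroup C] [Module R C]
  [Module.Finite R C] [AddCommGroup F] [Module R F] [Module.Finite R F] [Module.Projective R F]
  [AddCommGroup M] [Module R M] [Module.Finite R M]

theorem IsRetract.betti_le (h : IsRetract R A B) (i : ℕ) : betti R i A ≤ betti R i B := by
  induction i generalizing A B with
  | zero =>
    obtain ⟨j, r, hjr⟩ := h
    exact minGenerators_le_of_surjective (f := r) fun a ↦ ⟨j a, hjr a⟩
  | succ _ ih => exact ih (h.syzygy minCover_surjective)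

theorem betti_succ_le_betti_ker {q : F →ₗ[R] M} (hq : Function.Surjective q) (i : ℕ) :
    betti R (i + 1) M ≤ betti R i (LinearMap.ker q) :=
  ((IsRetract.of_linearEquiv (.refl R M)).syzygy hq).betti_le i

theorem betti_succ_prod_le (i : ℕ) : betti R (i + 1) (A × F) ≤ betti R (i + 1) A :=
  (betti_succ_le_betti_ker (q := (minCover R A).prodMap (.id : F →ₗ[R] F))
    (minCover_surjective.prodMap Function.surjective_id) i).trans
    (IsRetract.ker_minCover_prodMap_id.betti_le i)

theorem betti_eq_zero_of_subsingleton [Subsingleton M] (i : ℕ) : betti R i M = 0 := by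
  induction i generalizing M with
  | zero => exact Module.finrank_zero_of_subsingleton
  | succ _ ih =>
    have : IsEmpty (Fin (minGenerators R M)) := by
      rw [minGenerators, Module.finrank_zero_of_subsingleton]
      infer_instance
    exact ih

theorem betti_add_eq_zero {m : ℕ} (h : betti R m M = 0) (i : ℕ) : betti R (m + i) M = 0 := by
  induction m generalizing M with
  | zero =>
    have := subsingleton_of_minGenerators_eq_zero h
    exact betti_eq_zero_of_subsingleton _
  | succ _ ih =>
    rw [add_right_comm]
    exact ih h

theorem betti_succ_eq_zero_of_projective (i : ℕ) : betti R (i + 1) F = 0 := by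
  have h := betti_succ_le_betti_ker (R := R) (q := (.id : F →ₗ[R] F)) Function.surjective_id i
  have : Subsingleton (LinearMap.ker (.id : F →ₗ[R] F)) := by
    rw [LinearMap.ker_id]
    infer_instance
  exact Nat.le_zero.1 (h.trans (betti_eq_zero_of_subsingleton i).le)

theorem betti_succ_ker_le {q : F →ₗ[R] M} (hq : Function.Surjective q) (i : ℕ) :
    betti R (i + 1) (LinearMap.ker q) ≤ betti R (i + 2) M := by
  obtain ⟨φ, ψ, hφ, hφψ, hψ⟩ := exists_exact_rotation (Subtype.val_injective)
    (LinearMap.exact_subtype_ker_map (minCover R M)) minCover_surjective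
    (Subtype.val_injective) (LinearMap.exact_subtype_ker_map q) hq
  exact ((IsRetract.of_exact_of_projective hφ hφψ hψ).betti_le (i + 1)).trans
    (betti_succ_prod_le i)

theorem betti_le_add {f : A →ₗ[R] B} {g : B →ₗ[R] C} (hf : Function.Injective f)
    (hfg : Function.Exact f g) (hg : Function.Surjective g) (i : ℕ) :
    betti R i B ≤ betti R i A + betti R i C := by
  induction i generalizing A B C with
  | zero => exact minGenerators_le_add hfg hg
  | succ i ih =>
    obtain ⟨φ, ψ, hφ, hφψ, hψ⟩ := exists_exact_rotation hf hfg hg Subtype.val_injective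
      (LinearMap.exact_subtype_ker_map (minCover R C)) minCover_surjective
    let p : (Fin (minGenerators R A) → R) × (Fin (minGenerators R C) → R) →ₗ[R]
        A × (Fin (minGenerators R C) → R) := (minCover R A).prodMap .id
    have hp : Function.Surjective p := minCover_surjective.prodMap Function.surjective_id
    obtain ⟨_, _, hα, hαβ, hβ⟩ := exists_exact_ker_comp hp ψ
    calc betti R (i + 1) B
        ≤ betti R i (LinearMap.ker (ψ ∘ₗ p)) :=
          betti_succ_le_betti_ker (q := ψ ∘ₗ p) (hψ.comp hp) i
      _ ≤ betti R i (LinearMap.ker p) + betti R i (LinearMap.ker ψ) := ih hα hαβ hβ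
      _ ≤ betti R (i + 1) A + betti R (i + 1) C :=
        add_le_add (IsRetract.ker_minCover_prodMap_id.betti_le i)
          ((IsRetract.ker_of_exact hφ hφψ).betti_le i)

theorem betti_le_betti_succ_add {f : A →ₗ[R] B} {g : B →ₗ[R] C} (hf : Function.Injective f)
    (hfg : Function.Exact f g) (hg : Function.Surjective g) (i : ℕ) :
    betti R i A ≤ betti R (i + 1) C + betti R i B := by
  obtain ⟨φ, ψ, hφ, hφψ, hψ⟩ := exists_exact_rotation hf hfg hg Subtype.val_injective
    (LinearMap.exact_subtype_ker_map (minCover R C)) minCover_surjective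
  exact (IsRetract.fst_prod.betti_le i).trans (betti_le_add hφ hφψ hψ i)

theorem betti_add_two_le {f : A →ₗ[R] B} {g : B →ₗ[R] C} (hf : Function.Injective f)
    (hfg : Function.Exact f g) (hg : Function.Surjective g) (i : ℕ) :
    betti R (i + 2) C ≤ betti R (i + 1) A + betti R (i + 2) B := by
  obtain ⟨φ, ψ, hφ, hφψ, hψ⟩ := exists_exact_rotation hf hfg hg Subtype.val_injective
    (LinearMap.exact_subtype_ker_map (minCover R C)) minCover_surjective
  calc betti R (i + 1) (Syzygy R C)
      ≤ betti R (i + 2) B + betti R (i + 1) (A × (Fin (minGenerators R C) → R)) :=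
        betti_le_betti_succ_add hφ hφψ hψ (i + 1)
    _ ≤ betti R (i + 1) A + betti R (i + 2) B := by
        rw [add_comm]
        exact Nat.add_le_add_right (betti_succ_prod_le i) _

end Betti

theorem exists_comp_eq_of_ker_le {S X Y Z : Type*} [Ring S] [AddCommGroup X] [Module S X]
    [AddCommGroup Y] [Module S Y] [AddCommGroup Z] [Module S Z] {q : X →ₗ[S] Y}
    (hq : Function.Surjective q) {φ : X →ₗ[S] Z} (h : LinearMap.ker q ≤ LinearMap.ker φ) :
    ∃ ψ : Y →ₗ[S] Z, ∀ x, ψ (q x) = φ x := by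
  refine ⟨(LinearMap.ker q).liftQ φ h ∘ₗ (q.quotKerEquivOfSurjective hq).symm, fun x ↦ ?_⟩
  have hx : (q.quotKerEquivOfSurjective hq).symm (q x) = Submodule.Quotient.mk x :=
    (LinearEquiv.symm_apply_eq _).2 rfl
  rw [LinearMap.comp_apply, LinearEquiv.coe_coe, hx, Submodule.liftQ_apply]

section ChangeOfRings

/-- The map `q : G → E` exhibits `E` as `G / f G`. With `q` the structure map of an `S`-algebra
`R` this says that `R` is `S / (f)`, and it lets modules over the given ring `R` stand for modules
over the quotient. -/
structure IsReductionModulo {S G E : Type*} [CommRing S] [AddCommGroup G] [Module S G]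
    [AddCommGroup E] [Module S E] (f : S) (q : G →ₗ[S] E) : Prop where
  exact : Function.Exact (f • · : G → G) q
  surjective : Function.Surjective q

variable {S R : Type*} [CommRing S] [CommRing R] [Algebra S R] {f : S}

theorem IsReductionModulo.compLeft (hR : IsReductionModulo f (Algebra.linearMap S R)) (m : ℕ) :
    IsReductionModulo f ((Algebra.linearMap S R).compLeft (Fin m)) where
  exact x := by
    refine ⟨fun hx ↦ ?_, ?_⟩
    · choose z hz using fun j ↦ (hR.exact (x j)).1 (congrFun hx j)
      exact ⟨z, funext hz⟩
    · rintro ⟨z, rfl⟩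
      exact funext fun j ↦ (hR.exact _).2 ⟨z j, rfl⟩
  surjective := hR.surjective.comp_left

theorem IsReductionModulo.smul_eq_zero (hR : IsReductionModulo f (Algebra.linearMap S R))
    {N : Type*} [AddCommGroup N] [Module S N] [Module R N] [IsScalarTower S R N] (n : N) :
    f • n = 0 := by
  have hf : algebraMap S R f = 0 := (hR.exact f).2 ⟨1, mul_one f⟩
  rw [← algebraMap_smul R f n, hf, zero_smul]

theorem IsReductionModulo.tensorProduct_mk (hR : IsReductionModulo f (Algebra.linearMap S R))
    (G : Type*) [AddCommGroup G] [Module S G] :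
    IsReductionModulo f (TensorProduct.mk S R G 1) where
  exact g := by
    refine ⟨fun hg ↦ ?_, ?_⟩
    · have hexact : Function.Exact (LinearMap.lsmul S S f) (Algebra.linearMap S R) := hR.exact
      obtain ⟨z, hz⟩ := (rTensor_exact G hexact hR.surjective (1 ⊗ₜ[S] g)).1 (by simpa using hg)
      have hfz : f • z = 1 ⊗ₜ[S] g := hz
      exact ⟨TensorProduct.lid S G z, by simp [← map_smul, hfz]⟩
    · rintro ⟨h, rfl⟩
      exact (map_smul _ _ _).trans (hR.smul_eq_zero _)
  surjective := TensorProduct.mk_surjective S G R hR.surjective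

theorem IsReductionModulo.exists_ker {P G P' E : Type*} [AddCommGroup P] [Module S P]
    [AddCommGroup G] [Module S G] [AddCommGroup P'] [Module S P'] [Module R P']
    [IsScalarTower S R P'] [AddCommGroup E] [Module S E] [Module R E] [IsScalarTower S R E]
    {r : P →ₗ[S] P'} {q : G →ₗ[S] E} (hr : IsReductionModulo f r) (hq : IsReductionModulo f q)
    (hG : IsSMulRegular G f) {π : P →ₗ[S] G} (hπ : Function.Surjective π) {ψ : P' →ₗ[R] E}
    (hψ : ∀ x, ψ (r x) = q (π x)) :
    ∃ t : LinearMap.ker π →ₗ[S] LinearMap.ker ψ, IsReductionModulo f t := by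
  let t : LinearMap.ker π →ₗ[S] LinearMap.ker ψ :=
    (r ∘ₗ (LinearMap.ker π).subtype).codRestrict ((LinearMap.ker ψ).restrictScalars S) fun x ↦ by
      simp [hψ]
  refine ⟨t, fun x ↦ ⟨fun hx ↦ ?_, ?_⟩, ?_⟩
  · obtain ⟨z, hz⟩ := (hr.exact x.1).1 (congrArg Subtype.val hx)
    refine ⟨⟨z, hG ?_⟩, Subtype.ext hz⟩
    simpa [← hz] using x.2
  · rintro ⟨z, rfl⟩
    exact Subtype.ext ((hr.exact _).2 ⟨z.1, rfl⟩)
  · rintro ⟨y, hy⟩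
    obtain ⟨x, rfl⟩ := hr.surjective y
    rw [LinearMap.mem_ker, hψ, hq.exact] at hy
    obtain ⟨g, hg⟩ := hy
    obtain ⟨z, rfl⟩ := hπ g
    refine ⟨⟨x - f • z, by simp [← hg]⟩, Subtype.ext ?_⟩
    change r (x - f • z) = r x
    rw [map_sub, (hr.exact _).2 ⟨z, rfl⟩, sub_zero]

theorem exists_exact_of_isReductionModulo_ker {P P' N E : Type*} [AddCommGroup P] [Module S P]
    [AddCommGroup P'] [Module S P'] [Module R P'] [IsScalarTower S R P'] [AddCommGroup N]
    [Module S N] [Module R N] [IsScalarTower S R N] [AddCommGroup E] [Module S E] [Module R E]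
    [IsScalarTower S R E] (hR : IsReductionModulo f (Algebra.linearMap S R))
    (hP : IsSMulRegular P f) {r : P →ₗ[S] P'} (hr : IsReductionModulo f r) {p : P' →ₗ[R] N}
    (hp : Function.Surjective p) {π : P →ₗ[S] N} (hπp : ∀ x, π x = p (r x))
    {q : LinearMap.ker π →ₗ[S] E} (hq : IsReductionModulo f q) :
    ∃ (a : N →ₗ[R] E) (b : E →ₗ[R] LinearMap.ker p),
      Function.Injective a ∧ Function.Exact a b ∧ Function.Surjective b := by
  have hπ : Function.Surjective π := by
    rw [funext hπp (f := π)]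
    exact hp.comp hr.surjective
  let α : P →ₗ[S] LinearMap.ker π := (f • .id : P →ₗ[S] P).codRestrict _ fun x ↦ by
    simp [hR.smul_eq_zero]
  let β : LinearMap.ker π →ₗ[S] LinearMap.ker p :=
    (r ∘ₗ (LinearMap.ker π).subtype).codRestrict ((LinearMap.ker p).restrictScalars S) fun x ↦ by
      simp [← hπp]
  have hβ (x) : β x = 0 ↔ ∃ z, α z = x := by
    simp only [Subtype.ext_iff]
    exact hr.exact x.1
  obtain ⟨a, ha⟩ := exists_comp_eq_of_ker_le hπ (φ := q ∘ₗ α) fun x hx ↦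
    (hq.exact _).2 ⟨⟨x, hx⟩, rfl⟩
  obtain ⟨b, hb⟩ := exists_comp_eq_of_ker_le hq.surjective (φ := β) fun x hx ↦ by
    obtain ⟨z, rfl⟩ := (hq.exact x).1 hx
    exact (hβ _).2 ⟨z.1, rfl⟩
  refine ⟨a.extendScalarsOfSurjective hR.surjective, b.extendScalarsOfSurjective hR.surjective,
    (injective_iff_map_eq_zero _).2 fun n hn ↦ ?_, fun e ↦ ⟨fun he ↦ ?_, ?_⟩, ?_⟩
  · obtain ⟨x, rfl⟩ := hπ n
    obtain ⟨z, hz⟩ := (hq.exact (α x)).1 ((ha x).symm.trans hn)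
    have hzx : z.1 = x := hP (congrArg Subtype.val hz)
    exact hzx ▸ z.2
  · obtain ⟨g, rfl⟩ := hq.surjective e
    obtain ⟨z, rfl⟩ := (hβ g).1 ((hb g).symm.trans he)
    exact ⟨π z, ha z⟩
  · rintro ⟨n, rfl⟩
    obtain ⟨x, rfl⟩ := hπ n
    exact (congrArg b (ha x)).trans ((hb (α x)).trans ((hβ _).2 ⟨x, rfl⟩))
  · rintro ⟨y, hy⟩
    obtain ⟨x, rfl⟩ := hr.surjective y
    exact ⟨q ⟨x, (hπp x).trans hy⟩, hb _⟩

end ChangeOfRings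

section BettiChangeOfRings

theorem exists_surjective_compLeft_eq {S R E : Type*} [CommRing S] [CommRing R] [Algebra S R]
    [AddCommGroup E] [Module S E] [Module R E] [IsScalarTower S R E] {m : ℕ}
    {φ : (Fin m → S) →ₗ[S] E} (hφ : Function.Surjective φ) :
    ∃ ψ : (Fin m → R) →ₗ[R] E, Function.Surjective ψ ∧
      ∀ x, ψ ((Algebra.linearMap S R).compLeft (Fin m) x) = φ x := by
  let ψ : (Fin m → R) →ₗ[R] E :=
    Fintype.linearCombination R fun i ↦ φ fun j ↦ if i = j then 1 else 0
  have hψ (x) : ψ ((Algebra.linearMap S R).compLeft (Fin m) x) = φ x :=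
    (Finset.sum_congr rfl fun i _ ↦ algebraMap_smul R (x i) _).trans
      (φ.pi_apply_eq_sum_univ x).symm
  exact ⟨ψ, fun e ↦ (hφ e).imp' _ fun x hx ↦ (hψ x).trans hx, hψ⟩

theorem betti_add_two_pi_eq_zero {S R : Type u} [CommRing S] [IsLocalRing S]
    [IsNoetherianRing S] [CommRing R] [Algebra S R] {f : S}
    (hR : IsReductionModulo f (Algebra.linearMap S R))
    (hf : IsSMulRegular S f) [Module.Finite S R] (i m : ℕ) :
    betti S (i + 2) (Fin m → R) = 0 := by
  have hfm : IsSMulRegular (Fin m → S) f := IsSMulRegular.pi fun _ ↦ hf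
  have h := betti_add_two_le (R := S) (f := LinearMap.lsmul S (Fin m → S) f) hfm
    (hR.compLeft m).exact (hR.compLeft m).surjective i
  rwa [betti_succ_eq_zero_of_projective (F := Fin m → S),
    betti_succ_eq_zero_of_projective (F := Fin m → S), add_zero, Nat.le_zero] at h

variable {S R : Type u} [CommRing S] [IsLocalRing S] [IsNoetherianRing S] [CommRing R]
  [IsLocalRing R] [IsNoetherianRing R] [Algebra S R] {f : S}

theorem betti_le_of_isReductionModulo (hR : IsReductionModulo f (Algebra.linearMap S R))
    (hf : IsSMulRegular S f) {G E : Type u} [AddCommGroup G] [Module S G] [Module.Finite S G]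
    [AddCommGroup E] [Module S E] [Module R E] [IsScalarTower S R E] [Module.Finite R E]
    (hG : IsSMulRegular G f) {q : G →ₗ[S] E} (hq : IsReductionModulo f q) (i : ℕ) :
    betti R i E ≤ betti S i G := by
  induction i generalizing G E with
  | zero =>
    obtain ⟨ψ, hψ, -⟩ :=
      exists_surjective_compLeft_eq (R := R) (φ := q ∘ₗ minCover S G)
        (hq.surjective.comp minCover_surjective)
    refine (minGenerators_le_of_surjective hψ).trans_eq ?_
    rw [minGenerators, Module.finrank_baseChange, Module.finrank_fin_fun]
    rfl
  | succ i ih =>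
    obtain ⟨ψ, hψ, hψq⟩ := exists_surjective_compLeft_eq (R := R) (φ := q ∘ₗ minCover S G)
      (hq.surjective.comp minCover_surjective)
    obtain ⟨t, ht⟩ := (hR.compLeft _).exists_ker hq hG minCover_surjective hψq
    have hker : IsSMulRegular (Syzygy S G) f := (IsSMulRegular.pi fun _ ↦ hf).submodule _ f
    exact (betti_succ_le_betti_ker hψ i).trans (ih hker ht)

/-- The module `E` is `R ⊗ ker π` for the composite `π` of `S^m → R^m` and `p`. -/
theorem exists_exact_ker_betti_le (hR : IsReductionModulo f (Algebra.linearMap S R))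
    (hf : IsSMulRegular S f) {N : Type u} [AddCommGroup N] [Module S N] [Module R N]
    [IsScalarTower S R N] [Module.Finite S N] {m : ℕ} {p : (Fin m → R) →ₗ[R] N}
    (hp : Function.Surjective p) :
    ∃ (E : Type u) (_ : AddCommGroup E) (_ : Module R E) (_ : Module.Finite R E)
      (a : N →ₗ[R] E) (b : E →ₗ[R] LinearMap.ker p), Function.Injective a ∧
      Function.Exact a b ∧ Function.Surjective b ∧
      ∀ i, betti R (i + 1) E ≤ betti S (i + 2) N := by
  let π : (Fin m → S) →ₗ[S] N :=
    p.restrictScalars S ∘ₗ (Algebra.linearMap S R).compLeft (Fin m)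
  have hπ : Function.Surjective π := hp.comp (hR.compLeft m).surjective
  have hfm : IsSMulRegular (Fin m → S) f := IsSMulRegular.pi fun _ ↦ hf
  have hq := hR.tensorProduct_mk (LinearMap.ker π)
  obtain ⟨a, b, ha, hab, hb⟩ :=
    exists_exact_of_isReductionModulo_ker hR hfm (hR.compLeft m) hp (fun _ ↦ rfl) hq
  exact ⟨_, _, _, inferInstance, a, b, ha, hab, hb, fun i ↦
    (betti_le_of_isReductionModulo hR hf (hfm.submodule _ f) hq _).trans
      (betti_succ_ker_le hπ i)⟩

theorem betti_add_three_le_betti_add (hR : IsReductionModulo f (Algebra.linearMap S R))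
    (hf : IsSMulRegular S f) {N : Type u} [AddCommGroup N] [Module S N] [Module R N]
    [IsScalarTower S R N] [Module.Finite S N] [Module.Finite R N] (i : ℕ) :
    betti R (i + 3) N ≤ betti R (i + 1) N + betti S (i + 3) N := by
  obtain ⟨E, _, _, _, a, b, ha, hab, hb, hE⟩ :=
    exists_exact_ker_betti_le hR hf (minCover_surjective (R := R) (M := N))
  exact (betti_add_two_le ha hab hb i).trans (Nat.add_le_add_left (hE (i + 1)) _)

theorem betti_succ_eq_zero_of_isReductionModulo
    (hR : IsReductionModulo f (Algebra.linearMap S R)) (hf : IsSMulRegular S f) {N : Type u}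
    [AddCommGroup N] [Module S N] [Module R N] [IsScalarTower S R N] [Module.Finite S N]
    [Module.Finite R N] {m : ℕ} (h : betti R m N = 0) : betti S (m + 1) N = 0 := by
  have : Module.Finite S R := .of_surjective _ hR.surjective
  induction m generalizing N with
  | zero =>
    have := subsingleton_of_minGenerators_eq_zero h
    exact betti_eq_zero_of_subsingleton _
  | succ m ih =>
    have : Module.Finite S (Syzygy R N) := .trans R _
    have hle := betti_add_two_le (R := S)
      (f := (LinearMap.ker (minCover R N)).subtype.restrictScalars S)
      (g := (minCover R N).restrictScalars S) Subtype.val_injective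
      (LinearMap.exact_subtype_ker_map (minCover R N)) minCover_surjective m
    rwa [betti_add_two_pi_eq_zero hR hf, ih h, add_zero, Nat.le_zero] at hle

end BettiChangeOfRings

section Growth

/-- The Betti numbers of `M` grow at most like a polynomial of degree `e`; equivalently `M` has
complexity at most `e + 1`. Shifting the base to `i + 1` lets the bound hold at `i = 0`. -/
def HasBettiGrowth (R : Type u) [CommRing R] [IsLocalRing R] [IsNoetherianRing R] (e : ℕ)
    (M : Type u) [AddCommGroup M] [Module R M] [Module.Finite R M] : Prop :=
  ∃ α : ℕ, ∀ i, betti R i M ≤ α * (i + 1) ^ e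

variable {R : Type u} [CommRing R] [IsLocalRing R] [IsNoetherianRing R] {A B C M : Type u}
  [AddCommGroup A] [Module R A] [Module.Finite R A] [AddCommGroup B] [Module R B]
  [Module.Finite R B] [AddCommGroup C] [Module R C] [Module.Finite R C] [AddCommGroup M]
  [Module R M] [Module.Finite R M] {e : ℕ}

theorem IsRetract.hasBettiGrowth (h : IsRetract R A B) (hB : HasBettiGrowth R e B) :
    HasBettiGrowth R e A :=
  hB.imp fun _ hα i ↦ (h.betti_le i).trans (hα i)

theorem HasBettiGrowth.mono (h : HasBettiGrowth R 0 M) : HasBettiGrowth R e M :=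
  h.imp fun _ hα i ↦ (hα i).trans <| Nat.mul_le_mul_left _ <|
    Nat.pow_le_pow_right i.succ_pos e.zero_le

theorem hasBettiGrowth_of_forall_ge {α N : ℕ} (h : ∀ i ≥ N, betti R i M ≤ α * (i + 1) ^ e) :
    HasBettiGrowth R e M := by
  refine ⟨α + ∑ j ∈ Finset.range N, betti R j M, fun i ↦ ?_⟩
  rw [add_mul]
  rcases le_or_gt N i with hi | hi
  · exact Nat.le_add_right_of_le (h i hi)
  · exact ((Finset.single_le_sum (f := (betti R · M)) (fun _ _ ↦ Nat.zero_le _)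
      (Finset.mem_range.2 hi)).trans (Nat.le_mul_of_pos_right _ (by positivity))).trans
      (Nat.le_add_left _ _)

theorem hasBettiGrowth_of_projective [Module.Projective R M] : HasBettiGrowth R e M :=
  hasBettiGrowth_of_forall_ge (α := 0) (N := 1) fun i hi ↦ by
    obtain ⟨i, rfl⟩ := Nat.exists_eq_add_of_le' hi
    exact (betti_succ_eq_zero_of_projective i).trans_le (Nat.zero_le _)

theorem HasBettiGrowth.of_exact {f : A →ₗ[R] B} {g : B →ₗ[R] C} (hf : Function.Injective f)
    (hfg : Function.Exact f g) (hg : Function.Surjective g) (hA : HasBettiGrowth R e A)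
    (hC : HasBettiGrowth R e C) : HasBettiGrowth R e B := by
  obtain ⟨α, hα⟩ := hA
  obtain ⟨γ, hγ⟩ := hC
  exact ⟨α + γ, fun i ↦ (betti_le_add hf hfg hg i).trans
    ((add_le_add (hα i) (hγ i)).trans_eq (add_mul _ _ _).symm)⟩

theorem HasBettiGrowth.of_exact_left {f : A →ₗ[R] B} {g : B →ₗ[R] C}
    (hf : Function.Injective f) (hfg : Function.Exact f g) (hg : Function.Surjective g)
    (hB : HasBettiGrowth R e B) (hC : HasBettiGrowth R e C) : HasBettiGrowth R e A := by
  obtain ⟨β, hβ⟩ := hB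
  obtain ⟨γ, hγ⟩ := hC
  refine ⟨γ * 2 ^ e + β, fun i ↦ ?_⟩
  calc betti R i A ≤ betti R (i + 1) C + betti R i B := betti_le_betti_succ_add hf hfg hg i
    _ ≤ γ * (i + 1 + 1) ^ e + β * (i + 1) ^ e := add_le_add (hγ (i + 1)) (hβ i)
    _ ≤ γ * (2 * (i + 1)) ^ e + β * (i + 1) ^ e := by gcongr; omega
    _ = (γ * 2 ^ e + β) * (i + 1) ^ e := by rw [mul_pow]; ring

theorem HasBettiGrowth.of_isFiniteLength (h : HasBettiGrowth R e (ResidueField R))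
    (hM : IsFiniteLength R M) : HasBettiGrowth R e M := by
  revert ‹Module.Finite R M›
  induction hM with
  | of_subsingleton => exact hasBettiGrowth_of_projective
  | @of_simple_quotient M _ _ N _ _ ih =>
    intro _
    obtain ⟨I, hI, ⟨φ⟩⟩ := isSimpleModule_iff_quot_maximal.1 ‹IsSimpleModule R (M ⧸ N)›
    obtain rfl := eq_maximalIdeal hI
    exact .of_exact N.injective_subtype (LinearMap.exact_subtype_mkQ N) N.mkQ_surjective ih
      ((IsRetract.of_linearEquiv φ).hasBettiGrowth h)

theorem le_add_sum_of_add_three_le {a b : ℕ → ℕ} (h : ∀ i, b (i + 3) ≤ b (i + 1) + a (i + 3))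
    (i : ℕ) : b i ≤ b 0 + b 1 + b 2 + ∑ j ∈ Finset.range (i + 1), a j := by
  induction i using Nat.strong_induction_on with
  | _ i ih =>
    match i with
    | 0 | 1 | 2 => omega
    | i + 3 =>
      have := ih (i + 1) (by omega)
      have := h i
      rw [Finset.sum_range_succ, Finset.sum_range_succ _ (i + 1 + 1)]
      omega

theorem hasBettiGrowth_zero_of_betti_add_three_le (h : ∀ i, betti R (i + 3) M ≤ betti R (i + 1) M) :
    HasBettiGrowth R 0 M :=
  ⟨betti R 0 M + betti R 1 M + betti R 2 M, fun i ↦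
    (le_add_sum_of_add_three_le (b := (betti R · M)) (a := 0) h i).trans_eq (by simp)⟩

end Growth

section GrowthChangeOfRings

variable {S R : Type u} [CommRing S] [IsLocalRing S] [IsNoetherianRing S] [CommRing R]
  [IsLocalRing R] [IsNoetherianRing R] [Algebra S R] {f : S} {N : Type u} [AddCommGroup N]
  [Module S N] [Module R N] [IsScalarTower S R N] [Module.Finite S N] [Module.Finite R N]

theorem HasBettiGrowth.of_isReductionModulo (hR : IsReductionModulo f (Algebra.linearMap S R))
    (hf : IsSMulRegular S f) {e : ℕ} (h : HasBettiGrowth S e N) :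
    HasBettiGrowth R (e + 1) N := by
  obtain ⟨α, hα⟩ := h
  have hsum (i : ℕ) : ∑ j ∈ Finset.range (i + 1), betti S j N ≤ α * (i + 1) ^ (e + 1) :=
    calc ∑ j ∈ Finset.range (i + 1), betti S j N
        ≤ ∑ _j ∈ Finset.range (i + 1), α * (i + 1) ^ e := Finset.sum_le_sum fun j hj ↦
          (hα j).trans (by gcongr; exact Nat.lt_succ_iff.1 (Finset.mem_range.1 hj))
      _ = α * (i + 1) ^ (e + 1) := by
          rw [Finset.sum_const, Finset.card_range, smul_eq_mul]
          ring
  refine ⟨betti R 0 N + betti R 1 N + betti R 2 N + α, fun i ↦ ?_⟩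
  rw [add_mul]
  exact (le_add_sum_of_add_three_le (b := (betti R · N))
    (betti_add_three_le_betti_add hR hf) i).trans
    (add_le_add (Nat.le_mul_of_pos_right _ (by positivity)) (hsum i))

theorem hasBettiGrowth_zero_of_isReductionModulo
    (hR : IsReductionModulo f (Algebra.linearMap S R)) (hf : IsSMulRegular S f) {m : ℕ}
    (h : betti S m N = 0) : HasBettiGrowth R 0 N := by
  have hvanish (j : ℕ) (hj : m ≤ j) : betti S j N = 0 := by
    obtain ⟨i, rfl⟩ := Nat.exists_eq_add_of_le hj
    exact betti_add_eq_zero h i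
  have hsum (i : ℕ) :
      ∑ j ∈ Finset.range (i + 1), betti S j N ≤ ∑ j ∈ Finset.range m, betti S j N :=
    Finset.sum_le_sum_of_ne_zero fun j _ hj ↦
      Finset.mem_range.2 (not_le.1 fun hmj ↦ hj (hvanish j hmj))
  refine ⟨betti R 0 N + betti R 1 N + betti R 2 N + ∑ j ∈ Finset.range m, betti S j N,
    fun i ↦ ?_⟩
  rw [pow_zero, mul_one]
  exact (le_add_sum_of_add_three_le (b := (betti R · N))
    (betti_add_three_le_betti_add hR hf) i).trans
    (Nat.add_le_add_left (hsum i) _)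

end GrowthChangeOfRings

section ResidueField

variable {S R : Type u} [CommRing S] [IsLocalRing S] [CommRing R] [IsLocalRing R] [Algebra S R]

theorem nonempty_residueField_linearEquiv (h : Function.Surjective (algebraMap S R)) :
    Nonempty (ResidueField R ≃ₗ[S] ResidueField S) := by
  have hsurj : Function.Surjective (algebraMap S (ResidueField R)) :=
    residue_surjective.comp h
  have hker : RingHom.ker (Algebra.ofId S (ResidueField R)) = maximalIdeal S :=
    eq_maximalIdeal (RingHom.ker_isMaximal_of_surjective _ hsurj)
  exact ⟨((Ideal.quotientEquivAlgOfEq S hker.symm).trans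
    (Ideal.quotientKerAlgEquivOfSurjective hsurj)).symm.toLinearEquiv⟩

variable [IsNoetherianRing S] [IsNoetherianRing R] {f : S}

theorem HasBettiGrowth.residueField_of_isReductionModulo
    (hR : IsReductionModulo f (Algebra.linearMap S R)) (hf : IsSMulRegular S f) {e : ℕ}
    (h : HasBettiGrowth S e (ResidueField S)) : HasBettiGrowth R (e + 1) (ResidueField R) := by
  obtain ⟨φ⟩ := nonempty_residueField_linearEquiv hR.surjective
  have : Module.Finite S (ResidueField R) := .equiv φ.symm
  exact ((IsRetract.of_linearEquiv φ).hasBettiGrowth h).of_isReductionModulo hR hf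

theorem hasBettiGrowth_zero_residueField_of_isReductionModulo
    (hR : IsReductionModulo f (Algebra.linearMap S R)) (hf : IsSMulRegular S f) {m : ℕ}
    (h : betti S m (ResidueField S) = 0) : HasBettiGrowth R 0 (ResidueField R) := by
  obtain ⟨φ⟩ := nonempty_residueField_linearEquiv hR.surjective
  have : Module.Finite S (ResidueField R) := .equiv φ.symm
  exact hasBettiGrowth_zero_of_isReductionModulo hR hf
    (Nat.le_zero.1 (((IsRetract.of_linearEquiv φ).betti_le m).trans_eq h))

theorem betti_succ_residueField_eq_zero_of_isReductionModulo
    (hR : IsReductionModulo f (Algebra.linearMap S R)) (hf : IsSMulRegular S f) {m : ℕ}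
    (h : betti R m (ResidueField R) = 0) : betti S (m + 1) (ResidueField S) = 0 := by
  obtain ⟨φ⟩ := nonempty_residueField_linearEquiv hR.surjective
  have : Module.Finite S (ResidueField R) := .equiv φ.symm
  exact Nat.le_zero.1 (((IsRetract.of_linearEquiv φ.symm).betti_le (m + 1)).trans_eq
    (betti_succ_eq_zero_of_isReductionModulo hR hf h))

end ResidueField

section Splitting

variable {R : Type*} [Ring R] {A B C : Type*} [AddCommGroup A] [Module R A] [AddCommGroup B]
  [Module R B] [AddCommGroup C] [Module R C]

theorem IsRetract.of_exact_of_leftInverse {f : A →ₗ[R] B} {g : B →ₗ[R] C}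
    (hfg : Function.Exact f g) (hg : Function.Surjective g) {r : B →ₗ[R] A}
    (hr : ∀ a, r (f a) = a) : IsRetract R C B := by
  have hsplit := hfg.split_tfae (Function.LeftInverse.injective hr) hg
  obtain ⟨l, hl⟩ := (hsplit.out 0 1 :
    (∃ l, g ∘ₗ l = LinearMap.id) ↔ ∃ r, r ∘ₗ f = LinearMap.id).2 ⟨r, LinearMap.ext hr⟩
  exact ⟨l, g, LinearMap.congr_fun hl⟩

theorem nonempty_linearEquiv_prod_ker {i : A →ₗ[R] B} {r : B →ₗ[R] A} (h : ∀ a, r (i a) = a) :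
    Nonempty (B ≃ₗ[R] A × LinearMap.ker r) :=
  ⟨((r.exact_subtype_ker_map.splitSurjectiveEquiv Subtype.val_injective
    ⟨i, LinearMap.ext h⟩).1).trans (LinearEquiv.prodComm R _ _)⟩

theorem exists_exact_pushout {K X Z E : Type u} [AddCommGroup K] [Module R K]
    [AddCommGroup X] [Module R X] [AddCommGroup Z] [Module R Z] [AddCommGroup E] [Module R E]
    {ι : K →ₗ[R] Z} {ρ : Z →ₗ[R] E} (hι : Function.Injective ι) (hιρ : Function.Exact ι ρ)
    (hρ : Function.Surjective ρ) (j : K →ₗ[R] X) :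
    ∃ (W : Type u) (_ : AddCommGroup W) (_ : Module R W) (a : X →ₗ[R] W) (b : W →ₗ[R] E)
      (c : Z →ₗ[R] W), Function.Injective a ∧ Function.Exact a b ∧ Function.Surjective b ∧
      (∀ k, c (ι k) = a (j k)) ∧
      ∀ (M : Type u) [AddCommGroup M] [Module R M] (u : X →ₗ[R] M) (v : Z →ₗ[R] M),
        (∀ k, u (j k) = v (ι k)) →
        ∃ w : W →ₗ[R] M, (∀ x, w (a x) = u x) ∧ ∀ z, w (c z) = v z := by
  let N : Submodule R (X × Z) := LinearMap.range (j.prod (-ι))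
  have hker {M : Type u} [AddCommGroup M] [Module R M] {u : X →ₗ[R] M} {v : Z →ₗ[R] M}
      (h : ∀ k, u (j k) = v (ι k)) : N ≤ LinearMap.ker (u.coprod v) := by
    rintro _ ⟨k, rfl⟩
    simp [h]
  have hE (k : K) : (0 : X →ₗ[R] E) (j k) = ρ (ι k) := (hιρ.apply_apply_eq_zero k).symm
  have hglue (k : K) : N.mkQ (0, ι k) = N.mkQ (j k, 0) := by
    refine ((Submodule.Quotient.eq N).2 ⟨k, ?_⟩).symm
    simp
  refine ⟨(X × Z) ⧸ N, inferInstance, inferInstance, N.mkQ ∘ₗ .inl R X Z,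
    N.liftQ (LinearMap.coprod 0 ρ) (hker hE), N.mkQ ∘ₗ .inr R X Z, ?_, fun w ↦ ⟨fun hw ↦ ?_, ?_⟩,
    fun e ↦ ?_, hglue, fun M _ _ u v h ↦ ⟨N.liftQ _ (hker h), fun x ↦ ?_, fun z ↦ ?_⟩⟩
  · refine (injective_iff_map_eq_zero _).2 fun x hx ↦ ?_
    obtain ⟨k, hk⟩ := (Submodule.Quotient.mk_eq_zero N).1 hx
    have hk0 : k = 0 := hι (by simpa using congrArg Prod.snd hk)
    simpa [hk0] using (congrArg Prod.fst hk).symm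
  · obtain ⟨⟨x, z⟩, rfl⟩ := N.mkQ_surjective w
    obtain ⟨k, rfl⟩ := (hιρ z).1 (by simpa using hw)
    refine ⟨x + j k, ?_⟩
    calc N.mkQ (x + j k, 0) = N.mkQ (x, 0) + N.mkQ (j k, 0) := by rw [← map_add]; simp
      _ = N.mkQ (x, ι k) := by rw [← hglue, ← map_add]; simp
  · rintro ⟨x, rfl⟩
    simp
  · obtain ⟨z, rfl⟩ := hρ e
    exact ⟨N.mkQ (0, z), by simp⟩
  · simp
  · simp

end Splitting

section Approximation

variable {R : Type u} [CommRing R] {𝒳 : Set (ModuleCat.{u} R)}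

theorem mem_of_isRetract (h𝒳 : IsResolving R 𝒳) {M N : ModuleCat.{u} R} (h : IsRetract R M N)
    (hN : N ∈ 𝒳) : M ∈ 𝒳 := by
  obtain ⟨i, r, hir⟩ := h
  obtain ⟨e⟩ := nonempty_linearEquiv_prod_ker hir
  exact h𝒳.summandClosed M (.of R (LinearMap.ker r)) (h𝒳.isoClosed hN e)

theorem surjective_of_isRightApprox (h𝒳 : IsResolving R 𝒳) {X M : ModuleCat.{u} R}
    {f : X →ₗ[R] M} (hf : IsRightApprox R 𝒳 f) : Function.Surjective f := fun m ↦ by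
  have hR : ModuleCat.of R R ∈ 𝒳 :=
    h𝒳.freeMem _ (inferInstanceAs (Module.Finite R R)) (inferInstanceAs (Module.Free R R))
  obtain ⟨h, hh⟩ := hf.2 _ hR (LinearMap.toSpanSingleton R M m)
  exact ⟨h 1, by simpa using LinearMap.congr_fun hh (1 : R)⟩

/-- A map `f : X → M` is right minimal if every endomorphism of `X` over `M` is bijective. -/
def IsRightMinimal {X M : Type*} [AddCommGroup X] [Module R X] [AddCommGroup M] [Module R M]
    (f : X →ₗ[R] M) : Prop :=
  ∀ k : X →ₗ[R] X, f ∘ₗ k = f → Function.Bijective k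

/- Fitting-type argument: among the endomorphisms of `X` over `M`, one with smallest image
restricts to an automorphism of its image. -/
theorem exists_isRightMinimal_range [IsArtinianRing R] {X M : Type*} [AddCommGroup X]
    [Module R X] [Module.Finite R X] [AddCommGroup M] [Module R M] (f : X →ₗ[R] M) :
    ∃ h : X →ₗ[R] X, f ∘ₗ h = f ∧ IsRightMinimal (f ∘ₗ (LinearMap.range h).subtype) := by
  obtain ⟨_, ⟨h, hh, rfl⟩, hmin⟩ := IsArtinian.set_has_minimal
    {N : Submodule R X | ∃ h : X →ₗ[R] X, f ∘ₗ h = f ∧ LinearMap.range h = N}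
    ⟨_, .id, LinearMap.comp_id f, rfl⟩
  refine ⟨h, hh, fun k hk ↦ OrzechProperty.bijective_of_surjective_endomorphism k fun y ↦ ?_⟩
  let g := (LinearMap.range h).subtype ∘ₗ k ∘ₗ h.rangeRestrict
  have hg : f ∘ₗ g = f := LinearMap.ext fun x ↦
    (LinearMap.congr_fun hk (h.rangeRestrict x)).trans (LinearMap.congr_fun hh x)
  have hle : LinearMap.range g ≤ LinearMap.range h := by
    rintro _ ⟨x, rfl⟩
    exact (k (h.rangeRestrict x)).2
  have hrange : LinearMap.range g = LinearMap.range h :=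
    hle.eq_of_not_lt (hmin _ ⟨g, hg, rfl⟩)
  obtain ⟨x, hx⟩ := hrange.ge y.2
  exact ⟨h.rangeRestrict x, Subtype.ext hx⟩

theorem exists_isRightMinimal_of_isRightApprox [IsArtinianRing R] (h𝒳 : IsResolving R 𝒳)
    {X M : ModuleCat.{u} R} {f : X →ₗ[R] M} (hf : IsRightApprox R 𝒳 f) :
    ∃ (X' : ModuleCat.{u} R) (f' : X' →ₗ[R] M), IsRightApprox R 𝒳 f' ∧ IsRightMinimal f' := by
  have := h𝒳.finite X hf.1
  obtain ⟨h, hh, hmin⟩ := exists_isRightMinimal_range f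
  let e := LinearEquiv.ofBijective (h.rangeRestrict ∘ₗ (LinearMap.range h).subtype)
    (hmin _ (LinearMap.ext fun x ↦ LinearMap.congr_fun hh x.1))
  have hret : IsRetract R (LinearMap.range h) X :=
    ⟨(LinearMap.range h).subtype, e.symm ∘ₗ h.rangeRestrict, e.symm_apply_apply⟩
  refine ⟨.of R (LinearMap.range h), f ∘ₗ (LinearMap.range h).subtype,
    ⟨mem_of_isRetract h𝒳 hret hf.1, fun W hW g ↦ ?_⟩, hmin⟩
  obtain ⟨t, rfl⟩ := hf.2 W hW g
  exact ⟨h.rangeRestrict ∘ₗ t, LinearMap.ext fun w ↦ LinearMap.congr_fun hh (t w)⟩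

/- Wakamatsu's lemma: `Ext¹(𝒳, ker f) = 0`, in terms of short exact sequences. -/
theorem exists_leftInverse_of_isRightMinimal (h𝒳 : IsResolving R 𝒳) {X M : ModuleCat.{u} R}
    {f : X →ₗ[R] M} (hf : IsRightApprox R 𝒳 f) (hmin : IsRightMinimal f) {Z E : Type u}
    [AddCommGroup Z] [Module R Z] [AddCommGroup E] [Module R E] {ι : LinearMap.ker f →ₗ[R] Z}
    {ρ : Z →ₗ[R] E} (hι : Function.Injective ι) (hιρ : Function.Exact ι ρ)
    (hρ : Function.Surjective ρ) (hE : ModuleCat.of R E ∈ 𝒳) :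
    ∃ r : Z →ₗ[R] LinearMap.ker f, ∀ y, r (ι y) = y := by
  obtain ⟨W, _, _, a, b, c, ha, hab, hb, hglue, hdesc⟩ :=
    exists_exact_pushout hι hιρ hρ (LinearMap.ker f).subtype
  have hW : ModuleCat.of R W ∈ 𝒳 := h𝒳.extClosed _ _ _ a b ⟨ha, hab, hb⟩ hf.1 hE
  obtain ⟨w, hwa, hwc⟩ := hdesc M f 0 fun k ↦ k.2
  obtain ⟨g, hg⟩ := hf.2 _ hW w
  replace hg (x : W) : f (g x) = w x := LinearMap.congr_fun hg x
  let e := LinearEquiv.ofBijective (g ∘ₗ a) (hmin _ (LinearMap.ext fun x ↦ (hg _).trans (hwa x)))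
  have he (x : X) : f (e.symm x) = f x := by
    obtain ⟨y, rfl⟩ := e.surjective x
    rw [e.symm_apply_apply]
    exact ((hg _).trans (hwa y)).symm
  refine ⟨(e.symm ∘ₗ g ∘ₗ c).codRestrict _ fun z ↦ ?_, fun y ↦ Subtype.ext ?_⟩
  · exact (he _).trans ((hg _).trans (hwc z))
  · change e.symm (g (c (ι y))) = y.1
    rw [hglue]
    exact e.symm_apply_apply y.1

end Approximation

section ContravariantlyInfinite

variable {R : Type u} [CommRing R]

theorem exists_coresolution
    (hemb : ∀ (N : Type u) [AddCommGroup N] [Module R N] [Module.Finite R N],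
      ∃ (n : ℕ) (j : N →ₗ[R] (Fin n → R)), Function.Injective j)
    (K : Type u) [AddCommGroup K] [Module R K] [Module.Finite R K] :
    ∃ (n m : ℕ) (C : Type u) (_ : AddCommGroup C) (_ : Module R C) (p : (Fin m → R) →ₗ[R] C)
      (ι : K →ₗ[R] (Fin n → R)) (ρ : (Fin n → R) →ₗ[R] LinearMap.ker p), Function.Surjective p ∧
      Function.Injective ι ∧ Function.Exact ι ρ ∧ Function.Surjective ρ := by
  obtain ⟨n, ι, hι⟩ := hemb K
  obtain ⟨m, j, hj⟩ := hemb ((Fin n → R) ⧸ LinearMap.range ι)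
  let q := j ∘ₗ (LinearMap.range ι).mkQ
  have hq : LinearMap.ker q = LinearMap.range ι := by
    rw [LinearMap.ker_comp_of_ker_eq_bot _ (LinearMap.ker_eq_bot.2 hj), Submodule.ker_mkQ]
  have hmem (x : Fin n → R) : q x ∈ LinearMap.ker (LinearMap.range q).mkQ := by
    simp only [Submodule.ker_mkQ, LinearMap.mem_range_self]
  refine ⟨n, m, _, inferInstance, inferInstance, (LinearMap.range q).mkQ, ι, q.codRestrict _ hmem,
    Submodule.mkQ_surjective _, hι, LinearMap.exact_iff.2 ?_, ?_⟩
  · rw [LinearMap.ker_codRestrict, hq]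
  · rintro ⟨y, hy⟩
    obtain ⟨x, rfl⟩ : y ∈ LinearMap.range q := by rwa [Submodule.ker_mkQ] at hy
    exact ⟨x, rfl⟩

variable [IsLocalRing R] [IsNoetherianRing R]

theorem isResolving_hasBettiGrowth (e : ℕ) :
    IsResolving R {M : ModuleCat.{u} R | ∃ _ : Module.Finite R M, HasBettiGrowth R e M} where
  finite _ hM := hM.1
  isoClosed := by
    rintro M N ⟨_, hM⟩ e
    have := Module.Finite.equiv e
    exact ⟨this, (IsRetract.of_linearEquiv e.symm).hasBettiGrowth hM⟩
  freeMem _ _ _ := ⟨‹_›, hasBettiGrowth_of_projective⟩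
  summandClosed := by
    rintro M N ⟨_, hMN⟩
    have : Module.Finite R M := .of_surjective (.fst R M N) LinearMap.fst_surjective
    exact ⟨this, IsRetract.fst_prod.hasBettiGrowth hMN⟩
  extClosed := by
    rintro A B C f g ⟨hf, hfg, hg⟩ ⟨_, hA⟩ ⟨_, hC⟩
    have := Module.Finite.of_exact hfg hg
    exact ⟨this, .of_exact hf hfg hg hA hC⟩
  kerClosed := by
    rintro A B C f g ⟨hf, hfg, hg⟩ ⟨_, hB⟩ ⟨_, hC⟩
    have := Module.Finite.of_injective f hf
    exact ⟨this, .of_exact_left hf hfg hg hB hC⟩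

/- If `K` is a summand of `C × Rⁿ`, then `βᵢ₊₃ C ≤ βᵢ₊₁ (Ω²C) ≤ βᵢ₊₁ K ≤ βᵢ₊₁ C`: the Betti numbers
of `C` are bounded. -/
theorem hasBettiGrowth_zero_ker_of_isRetract_prod {K C P F : Type u} [AddCommGroup K] [Module R K]
    [Module.Finite R K] [AddCommGroup C] [Module R C] [Module.Finite R C] [AddCommGroup P]
    [Module R P] [Module.Finite R P] [Module.Projective R P] [AddCommGroup F] [Module R F]
    [Module.Finite R F] [Module.Projective R F] {p : P →ₗ[R] C} (hp : Function.Surjective p)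
    {ι : K →ₗ[R] F} {ρ : F →ₗ[R] LinearMap.ker p} (hι : Function.Injective ι)
    (hιρ : Function.Exact ι ρ) (hρ : Function.Surjective ρ) (h : IsRetract R K (C × F)) :
    HasBettiGrowth R 0 (LinearMap.ker p) := by
  refine HasBettiGrowth.of_exact_left Subtype.val_injective p.exact_subtype_ker_map hp
    hasBettiGrowth_of_projective (hasBettiGrowth_zero_of_betti_add_three_le fun i ↦ ?_)
  calc betti R (i + 3) C ≤ betti R (i + 2) (LinearMap.ker p) := betti_succ_le_betti_ker hp _
    _ ≤ betti R (i + 1) (LinearMap.ker ρ) := betti_succ_le_betti_ker hρ _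
    _ ≤ betti R (i + 1) (C × F) := ((IsRetract.ker_of_exact hι hιρ).trans h).betti_le _
    _ ≤ betti R (i + 1) C := betti_succ_prod_le i

theorem contravariantlyInfinite_of_exists_exact [IsArtinianRing R] {𝒳 : Set (ModuleCat.{u} R)}
    (h𝒳 : IsResolving R 𝒳) (hinj : Module.Injective R R)
    (hemb : ∀ (N : Type u) [AddCommGroup N] [Module R N] [Module.Finite R N],
      ∃ (n : ℕ) (j : N →ₗ[R] (Fin n → R)), Function.Injective j)
    (hbdd : ∀ (N : Type u) [AddCommGroup N] [Module R N] [Module.Finite R N],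
      HasBettiGrowth R 0 N → ModuleCat.of R N ∈ 𝒳)
    (hseq : ∀ (C : Type u) [AddCommGroup C] [Module R C] (m : ℕ) (p : (Fin m → R) →ₗ[R] C),
      Function.Surjective p → ∃ (E : Type u) (_ : AddCommGroup E) (_ : Module R E)
        (a : C →ₗ[R] E) (b : E →ₗ[R] LinearMap.ker p), Function.Injective a ∧
        Function.Exact a b ∧ Function.Surjective b ∧ ModuleCat.of R E ∈ 𝒳) :
    ContravariantlyInfinite R 𝒳 := by
  rintro M - hM ⟨X₀, f₀, hf₀⟩
  obtain ⟨X, f, hf, hmin⟩ := exists_isRightMinimal_of_isRightApprox h𝒳 hf₀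
  have := h𝒳.finite X hf.1
  have hsurj := surjective_of_isRightApprox h𝒳 hf
  obtain ⟨n, m, C, _, _, p, ι, ρ, hp, hι, hιρ, hρ⟩ :=
    exists_coresolution hemb (LinearMap.ker f)
  have := Module.Finite.of_surjective p hp
  obtain ⟨E, _, _, a, b, ha, hab, hb, hE⟩ := hseq _ m p hp
  obtain ⟨φ, ψ, hφ, hφψ, hψ⟩ := exists_exact_rotation ha hab hb hι hιρ hρ
  obtain ⟨r, hr⟩ := exists_leftInverse_of_isRightMinimal h𝒳 hf hmin hφ hφψ hψ hE
  have hker : ModuleCat.of R (LinearMap.ker p) ∈ 𝒳 :=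
    hbdd _ (hasBettiGrowth_zero_ker_of_isRetract_prod hp hι hιρ hρ ⟨φ, r, hr⟩)
  obtain ⟨s, hs⟩ := exists_leftInverse_of_isRightMinimal h𝒳 hf hmin hι hιρ hρ hker
  have : Module.Injective R (Fin n → R) := inferInstance
  obtain ⟨t, ht⟩ := this.out (LinearMap.ker f).subtype Subtype.val_injective ι
  refine hM (mem_of_isRetract h𝒳 ?_ hf.1)
  refine .of_exact_of_leftInverse (r := s ∘ₗ t) f.exact_subtype_ker_map hsurj fun y ↦ ?_
  rw [LinearMap.comp_apply, ht, hs]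

end ContravariantlyInfinite

section EmbeddingDimension

variable {Q : Type*} [CommRing Q] [IsLocalRing Q]

theorem exists_span_insert_erase_eq_maximalIdeal [DecidableEq Q] {s : Finset Q}
    (hs : Ideal.span (s : Set Q) = maximalIdeal Q) {f : Q} (hf : f ∈ maximalIdeal Q)
    (hf' : f ∉ maximalIdeal Q ^ 2) :
    ∃ x ∈ s, Ideal.span (insert f (s.erase x : Set Q)) = maximalIdeal Q := by
  have hmem : ∀ x ∈ s, x ∈ maximalIdeal Q := fun x hx ↦ hs ▸ Ideal.subset_span hx
  obtain ⟨c, -, hc⟩ := Submodule.mem_span_finset.1 (hs ▸ hf : f ∈ Ideal.span (s : Set Q))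
  obtain ⟨x, hx, hcx⟩ : ∃ x ∈ s, IsUnit (c x) := by
    by_contra! hno
    exact hf' (hc ▸ sq (maximalIdeal Q) ▸ Ideal.sum_mem _ fun x hx ↦
      Ideal.mul_mem_mul (hno x hx) (hmem x hx))
  refine ⟨x, hx, le_antisymm (Ideal.span_le.2 ?_) (hs ▸ Ideal.span_le.2 fun z hz ↦ ?_)⟩
  · exact Set.insert_subset hf fun z hz ↦ hmem z (Finset.mem_of_mem_erase hz)
  have herase : ∀ z ∈ s.erase x, z ∈ Ideal.span (insert f (s.erase x : Set Q)) :=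
    fun z hz ↦ Ideal.subset_span (Set.mem_insert_of_mem f hz)
  rcases eq_or_ne z x with rfl | hzx
  · refine (Ideal.unit_mul_mem_iff_mem _ hcx).1 ?_
    rw [← Finset.add_sum_erase s _ hx] at hc
    rw [← smul_eq_mul, eq_sub_of_add_eq hc]
    exact sub_mem (Ideal.subset_span (Set.mem_insert f _))
      (sum_mem fun z hz ↦ Ideal.mul_mem_left _ _ (herase z hz))
  · exact herase z (Finset.mem_erase.2 ⟨hzx, hz⟩)

theorem spanFinrank_maximalIdeal_quotient_lt [IsNoetherianRing Q] {f : Q}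
    [IsLocalRing (Q ⧸ Ideal.span {f})] (hf : f ∈ maximalIdeal Q)
    (hf' : f ∉ maximalIdeal Q ^ 2) :
    (maximalIdeal (Q ⧸ Ideal.span {f})).spanFinrank < (maximalIdeal Q).spanFinrank := by
  classical
  obtain ⟨s, hcard, hs⟩ := (IsNoetherian.noetherian
    (maximalIdeal Q)).exists_span_finset_card_eq_spanFinrank
  obtain ⟨x, hx, hspan⟩ := exists_span_insert_erase_eq_maximalIdeal hs hf hf'
  have hf0 : Ideal.Quotient.mk (Ideal.span {f}) f = 0 :=
    Ideal.Quotient.eq_zero_iff_mem.2 (Ideal.mem_span_singleton_self f)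
  rw [← hcard, ← map_maximalIdeal_of_surjective _
    (Ideal.Quotient.mk_surjective (I := Ideal.span {f})), ← hspan, Ideal.map_span,
    Set.image_insert_eq, hf0, Ideal.span_insert_zero, ← Finset.coe_image]
  calc _ ≤ _ := Submodule.spanFinrank_span_le_ncard_of_finite (Finset.finite_toSet _)
    _ ≤ (s.erase x).card := (Set.ncard_coe_finset _).trans_le Finset.card_image_le
    _ < s.card := Finset.card_erase_lt_of_mem hx

theorem spanFinrank_maximalIdeal_eq_of_ker_le_sq [IsNoetherianRing Q] {R : Type*} [CommRing R]
    [IsLocalRing R] {φ : Q →+* R} (hφ : Function.Surjective φ)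
    (hker : RingHom.ker φ ≤ maximalIdeal Q ^ 2) :
    (maximalIdeal Q).spanFinrank = (maximalIdeal R).spanFinrank := by
  classical
  have hmap := map_maximalIdeal_of_surjective φ hφ
  have hfg : (maximalIdeal Q).FG := IsNoetherian.noetherian _
  refine le_antisymm ?_ (hmap ▸ Ideal.spanFinrank_map_le_of_fg φ hfg)
  obtain ⟨t, hcard, ht⟩ := Submodule.FG.exists_span_finset_card_eq_spanFinrank
    (hmap ▸ hfg.map φ : (maximalIdeal R).FG)
  obtain ⟨ψ, hψ⟩ := hφ.hasRightInverse
  have hlift : (Ideal.span (t.image ψ : Set Q)).map φ = maximalIdeal R := by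
    rw [Ideal.map_span, Finset.coe_image, ← Set.image_comp, hψ.id, Set.image_id]
    exact ht
  have hspan : Ideal.span (t.image ψ : Set Q) = maximalIdeal Q := by
    have := IsLocalHom.of_surjective φ hφ
    refine le_antisymm (Ideal.le_comap_map.trans_eq (by rw [hlift, maximalIdeal_comap]))
      (Submodule.le_of_le_smul_of_le_jacobson_bot hfg (maximalIdeal_le_jacobson _) ?_)
    calc maximalIdeal Q = Ideal.span (t.image ψ : Set Q) ⊔ RingHom.ker φ := by
          rw [← maximalIdeal_comap φ, ← hlift, Ideal.comap_map_of_surjective' φ hφ]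
      _ ≤ _ := sup_le_sup_left (hker.trans_eq (sq _)) _
  rw [← hspan, ← hcard]
  exact (Submodule.spanFinrank_span_le_ncard_of_finite (Finset.finite_toSet _)).trans
    ((Set.ncard_coe_finset _).trans_le Finset.card_image_le)

end EmbeddingDimension

section RegularSequence

open RingTheory.Sequence
open scoped Pointwise

theorem isReductionModulo_quotient_span_singleton {Q : Type*} [CommRing Q] (f : Q) :
    IsReductionModulo f (Algebra.linearMap Q (Q ⧸ Ideal.span {f})) where
  exact x := by
    rw [Algebra.linearMap_apply, Ideal.Quotient.algebraMap_eq, Ideal.Quotient.eq_zero_iff_dvd]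
    exact exists_congr fun _ ↦ eq_comm
  surjective := Ideal.Quotient.mk_surjective

theorem isRegular_quotient_span_singleton {Q : Type*} [CommRing Q] {f : Q} {fs : List Q}
    (h : IsRegular Q (f :: fs)) :
    IsRegular (Q ⧸ Ideal.span {f}) (fs.map (Ideal.Quotient.mk (Ideal.span {f}))) := by
  have hspan : f • (⊤ : Submodule Q Q) = Ideal.span {f} := by
    rw [← Submodule.ideal_span_singleton_smul, smul_eq_mul, Ideal.mul_top]
  let e := (Submodule.quotEquivOfEq _ _ hspan).extendScalarsOfSurjective
    (Ideal.Quotient.mk_surjective (I := Ideal.span {f}))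
  exact (e.isRegular_congr _).1 ((isRegular_cons_iff' Q f fs).1 h).2

theorem ofList_ne_top_of_isRegular {Q : Type*} [CommRing Q] {fs : List Q} (h : IsRegular Q fs) :
    Ideal.ofList fs ≠ ⊤ :=
  fun htop ↦ h.top_ne_smul (by rw [htop, Submodule.top_smul])

variable {Q : Type*} [CommRing Q] [IsLocalRing Q]

theorem mem_maximalIdeal_of_isRegular {fs : List Q} (h : IsRegular Q fs) {f : Q} (hf : f ∈ fs) :
    f ∈ maximalIdeal Q :=
  le_maximalIdeal (ofList_ne_top_of_isRegular h) (Ideal.subset_span hf)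

theorem isRegular_append_singleton_iff {fs : List Q} {f : Q} :
    IsRegular Q (fs ++ [f]) ↔
      IsRegular Q fs ∧ f ∈ maximalIdeal Q ∧ IsSMulRegular (Q ⧸ Ideal.ofList fs) f := by
  have hofList : Ideal.ofList fs • (⊤ : Submodule Q Q) = Ideal.ofList fs := by
    rw [smul_eq_mul, Ideal.mul_top]
  have hweak : IsWeaklyRegular Q (fs ++ [f]) ↔
      IsWeaklyRegular Q fs ∧ IsSMulRegular (Q ⧸ Ideal.ofList fs) f := by
    rw [isWeaklyRegular_append_iff, isWeaklyRegular_singleton_iff,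
      (Submodule.quotEquivOfEq _ _ hofList).isSMulRegular_congr]
  constructor
  · intro h
    have hmem := fun g ↦ mem_maximalIdeal_of_isRegular (f := g) h
    have ⟨h₁, h₂⟩ := hweak.1 h.toIsWeaklyRegular
    exact ⟨(isRegular_iff_isWeaklyRegular_of_subset_maximalIdeal fun g hg ↦
      hmem g (List.mem_append_left _ hg)).2 h₁, hmem f (by simp), h₂⟩
  · rintro ⟨h₁, hf, h₂⟩
    refine (isRegular_iff_isWeaklyRegular_of_subset_maximalIdeal fun g hg ↦ ?_).2
      (hweak.2 ⟨h₁.toIsWeaklyRegular, h₂⟩)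
    rcases List.mem_append.1 hg with hg | hg
    · exact mem_maximalIdeal_of_isRegular h₁ hg
    · exact List.mem_singleton.1 hg ▸ hf

variable [IsNoetherianRing Q]

theorem maximalIdeal_not_le_sq_of_isSMulRegular {M : Type*} [AddCommGroup M] [Module Q M]
    [Nontrivial M] {f : Q} (hf : f ∈ maximalIdeal Q) (hreg : IsSMulRegular M f) :
    ¬ maximalIdeal Q ≤ maximalIdeal Q ^ 2 := by
  intro hle
  have hbot : maximalIdeal Q = ⊥ := Submodule.eq_bot_of_le_smul_of_le_jacobson_bot _ _
    (IsNoetherian.noetherian _) (hle.trans_eq (sq _)) (maximalIdeal_le_jacobson _)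
  obtain rfl : f = 0 := (Ideal.mem_bot).1 (hbot ▸ hf)
  exact IsSMulRegular.not_zero hreg

/-- Prime avoidance for the associated primes of `M` and `𝔪 ^ 2`. -/
theorem exists_isSMulRegular_notMem_sq {M : Type*} [AddCommGroup M] [Module Q M]
    [Module.Finite Q M] [Nontrivial M] {f : Q} (hf : f ∈ maximalIdeal Q)
    (hreg : IsSMulRegular M f) :
    ∃ y ∈ maximalIdeal Q, y ∉ maximalIdeal Q ^ 2 ∧ IsSMulRegular M y := by
  classical
  by_contra! hcon
  have hfin := associatedPrimes.finite Q M
  have hunion := biUnion_associatedPrimes_eq_compl_regular Q M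
  have hcover : (maximalIdeal Q : Set Q) ⊆
      ⋃ p ∈ (insert (maximalIdeal Q ^ 2) hfin.toFinset : Finset (Ideal Q)), (p : Set Q) := by
    intro y hy
    rw [Finset.set_biUnion_insert]
    by_cases hy' : y ∈ maximalIdeal Q ^ 2
    · exact .inl hy'
    · refine .inr ?_
      simp only [Set.Finite.mem_toFinset]
      exact hunion ▸ hcon y hy hy'
  obtain ⟨p, hp, hle⟩ := (Ideal.subset_union_prime (f := id) (maximalIdeal Q ^ 2)
    (maximalIdeal Q ^ 2) fun p hp hp' _ ↦
      ((hfin.mem_toFinset.1 (Finset.mem_of_mem_insert_of_ne hp hp')).isPrime)).1 hcover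
  rcases Finset.mem_insert.1 hp with rfl | hp
  · exact maximalIdeal_not_le_sq_of_isSMulRegular hf hreg hle
  · have hmem : f ∈ ⋃ p ∈ associatedPrimes Q M, (p : Set Q) :=
      Set.mem_biUnion (hfin.mem_toFinset.1 hp) (hle hf)
    exact (hunion ▸ hmem) hreg

theorem exists_isRegular_cons_notMem_sq {fs : List Q} {f : Q} (h : IsRegular Q (fs ++ [f])) :
    ∃ y ∉ maximalIdeal Q ^ 2, IsRegular Q (y :: fs) := by
  obtain ⟨hfs, hf, hreg⟩ := isRegular_append_singleton_iff.1 h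
  have : Nontrivial (Q ⧸ Ideal.ofList fs) := Ideal.Quotient.nontrivial_iff.2
    (ofList_ne_top_of_isRegular hfs)
  obtain ⟨y, hy, hy', hyreg⟩ := exists_isSMulRegular_notMem_sq hf hreg
  exact ⟨y, hy', isRegular_of_perm (isRegular_append_singleton_iff.2 ⟨hfs, hy, hyreg⟩)
    (List.perm_append_singleton y fs)⟩

end RegularSequence

section Socle

variable {Q : Type*} [CommRing Q] [IsLocalRing Q]

/-- The socle `(I : 𝔪) / I` of `Q ⧸ I` has dimension at most one over the residue field, phrased
as: it is generated by each of its nonzero elements. -/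
def HasCyclicSocle (I : Ideal Q) : Prop :=
  ∀ a ∈ I.colon (maximalIdeal Q : Set Q), a ∉ I →
    ∀ b ∈ I.colon (maximalIdeal Q : Set Q), ∃ r, b - r * a ∈ I

theorem hasCyclicSocle_of_maximalIdeal_eq_bot {I : Ideal Q} (h : maximalIdeal Q = ⊥) :
    HasCyclicSocle I := by
  intro a _ ha b _
  have hunit : IsUnit a := not_not.1 fun hnu ↦
    ha ((h ▸ bot_le : maximalIdeal Q ≤ I) ((mem_maximalIdeal a).2 hnu))
  obtain ⟨r, rfl⟩ := hunit.dvd (a := b)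
  exact ⟨r, by simp [mul_comm]⟩

theorem hasCyclicSocle_comap_iff {R : Type*} [CommRing R] [IsLocalRing R] {φ : Q →+* R}
    (hφ : Function.Surjective φ) {I : Ideal R} :
    HasCyclicSocle (I.comap φ) ↔ HasCyclicSocle I := by
  have hcolon : ∀ a, a ∈ (I.comap φ).colon (maximalIdeal Q : Set Q) ↔
      φ a ∈ I.colon (maximalIdeal R : Set R) := by
    intro a
    have := IsLocalHom.of_surjective φ hφ
    rw [Submodule.mem_colon, Submodule.mem_colon, hφ.forall, ← maximalIdeal_comap φ]
    simp only [smul_eq_mul, SetLike.mem_coe, Ideal.mem_comap, map_mul]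
  simp only [HasCyclicSocle, hφ.forall, hφ.exists, hcolon, Ideal.mem_comap, map_sub, map_mul]

/-- If `a` is a socle element modulo `f` then `y * a = f * a'` with `a'` a socle element modulo
`y`, and `a ↦ a'` is compatible with the socle condition in both directions. -/
theorem HasCyclicSocle.span_singleton {y f : Q} (hy : y ∈ maximalIdeal Q)
    (hyreg : IsSMulRegular Q y) (hfreg : IsSMulRegular Q f)
    (h : HasCyclicSocle (Ideal.span {y})) : HasCyclicSocle (Ideal.span {f}) := by
  have htransfer : ∀ a ∈ (Ideal.span {f}).colon (maximalIdeal Q : Set Q), ∃ a',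
      y * a = f * a' ∧ a' ∈ (Ideal.span {y}).colon (maximalIdeal Q : Set Q) := by
    simp only [Submodule.mem_colon, SetLike.mem_coe, smul_eq_mul, Ideal.mem_span_singleton]
    intro a ha
    obtain ⟨a', ha'⟩ := ha y hy
    refine ⟨a', by rw [mul_comm, ha'], fun m hm ↦ ?_⟩
    obtain ⟨t, ht⟩ := ha m hm
    exact ⟨t, hfreg (by linear_combination y * ht - m * ha')⟩
  intro a ha haf b hb
  obtain ⟨a', haa', ha'⟩ := htransfer a ha
  obtain ⟨b', hbb', hb'⟩ := htransfer b hb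
  have ha'y : a' ∉ Ideal.span {y} := by
    rw [Ideal.mem_span_singleton] at haf ⊢
    rintro ⟨t, rfl⟩
    exact haf ⟨t, hyreg (by linear_combination haa')⟩
  obtain ⟨r, hr⟩ := h a' ha' ha'y b' hb'
  obtain ⟨t, ht⟩ := Ideal.mem_span_singleton.1 hr
  exact ⟨r, Ideal.mem_span_singleton.2 ⟨t, hyreg (by
    linear_combination hbb' - r * haa' + f * ht)⟩⟩

end Socle

section RegularQuotient

open RingTheory.Sequence

theorem isLocalRing_quotient_of_isRegular_cons {Q : Type*} [CommRing Q] [IsLocalRing Q] {f : Q}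
    {fs : List Q} (h : IsRegular Q (f :: fs)) : IsLocalRing (Q ⧸ Ideal.span {f}) :=
  have := (isRegular_quotient_span_singleton h).nontrivial
  .of_surjective' (Ideal.Quotient.mk _) Ideal.Quotient.mk_surjective

theorem comap_mk_ofList_map {Q : Type*} [CommRing Q] (f : Q) (fs : List Q) :
    (Ideal.ofList (fs.map (Ideal.Quotient.mk (Ideal.span {f})))).comap
      (Ideal.Quotient.mk (Ideal.span {f})) = Ideal.ofList (f :: fs) := by
  rw [← Ideal.map_ofList, Ideal.comap_map_of_surjective' _ Ideal.Quotient.mk_surjective,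
    Ideal.mk_ker, Ideal.ofList_cons, sup_comm]

theorem HasCyclicSocle.ofList_append_singleton {Q : Type*} [CommRing Q] [IsLocalRing Q]
    {fs : List Q} {y f : Q} (hy : IsRegular Q (fs ++ [y])) (hf : IsRegular Q (fs ++ [f]))
    (h : HasCyclicSocle (Ideal.ofList (fs ++ [y]))) :
    HasCyclicSocle (Ideal.ofList (fs ++ [f])) := by
  let π := Ideal.Quotient.mk (Ideal.ofList fs)
  have hπ : Function.Surjective π := Ideal.Quotient.mk_surjective
  have hcomap : ∀ g, (Ideal.span {π g}).comap π = Ideal.ofList (fs ++ [g]) := fun g ↦ by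
    rw [← Set.image_singleton, ← Ideal.map_span, Ideal.comap_map_of_surjective' π hπ,
      Ideal.mk_ker, Ideal.ofList_append, Ideal.ofList_singleton, sup_comm]
  obtain ⟨hfs, hy, hyreg⟩ := isRegular_append_singleton_iff.1 hy
  obtain ⟨-, -, hfreg⟩ := isRegular_append_singleton_iff.1 hf
  have : Nontrivial (Q ⧸ Ideal.ofList fs) := Ideal.Quotient.nontrivial_iff.2
    (ofList_ne_top_of_isRegular hfs)
  have : IsLocalRing (Q ⧸ Ideal.ofList fs) := .of_surjective' π hπ
  have := IsLocalHom.of_surjective π hπ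
  rw [← hcomap, hasCyclicSocle_comap_iff hπ] at h ⊢
  exact h.span_singleton (map_nonunit π y hy) ((isSMulRegular_map π fun _ ↦ rfl).2 hyreg)
    ((isSMulRegular_map π fun _ ↦ rfl).2 hfreg)

variable {Q : Type u} [CommRing Q] [IsLocalRing Q] [IsNoetherianRing Q]

theorem exists_isRegular_cons_spanFinrank_quotient_lt {fs : List Q} {f : Q}
    (h : IsRegular Q (fs ++ [f])) :
    ∃ y, IsRegular Q (y :: fs) ∧ ∃ _ : IsLocalRing (Q ⧸ Ideal.span {y}),
      (maximalIdeal (Q ⧸ Ideal.span {y})).spanFinrank < (maximalIdeal Q).spanFinrank := by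
  obtain ⟨y, hy', hy⟩ := exists_isRegular_cons_notMem_sq h
  have := isLocalRing_quotient_of_isRegular_cons hy
  exact ⟨y, hy, this,
    spanFinrank_maximalIdeal_quotient_lt (mem_maximalIdeal_of_isRegular hy (by simp)) hy'⟩

theorem hasCyclicSocle_ofList_of_isRegular {fs : List Q} (h : IsRegular Q fs)
    (hle : (maximalIdeal Q).spanFinrank ≤ fs.length) : HasCyclicSocle (Ideal.ofList fs) := by
  induction hn : fs.length generalizing Q with
  | zero =>
    exact hasCyclicSocle_of_maximalIdeal_eq_bot <| (Submodule.spanFinrank_eq_zero_iff_eq_bot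
      (IsNoetherian.noetherian _)).1 (by omega)
  | succ n ih =>
    obtain ⟨gs, f, rfl⟩ := (List.eq_nil_or_concat' fs).resolve_left (by rintro rfl; simp at hn)
    have hlen : gs.length = n := by simpa using hn
    obtain ⟨y, hy, _, hlt⟩ := exists_isRegular_cons_spanFinrank_quotient_lt h
    have hind := ih (isRegular_quotient_span_singleton hy) (by rw [List.length_map]; omega)
      (by rwa [List.length_map])
    rw [← hasCyclicSocle_comap_iff Ideal.Quotient.mk_surjective, comap_mk_ofList_map] at hind
    refine .ofList_append_singleton
      (isRegular_of_perm hy (List.perm_append_singleton y gs).symm) h ?_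
    rwa [Ideal.ofList_append, sup_comm, Ideal.ofList_singleton, ← Ideal.ofList_cons]

theorem exists_betti_residueField_eq_zero {fs : List Q} (h : IsRegular Q fs)
    (hle : (maximalIdeal Q).spanFinrank ≤ fs.length) : ∃ m, betti Q m (ResidueField Q) = 0 := by
  induction hn : fs.length generalizing Q with
  | zero =>
    have hbot : maximalIdeal Q = ⊥ := (Submodule.spanFinrank_eq_zero_iff_eq_bot
      (IsNoetherian.noetherian _)).1 (by omega)
    have : Module.Projective Q (ResidueField Q) := .of_equiv
      (Submodule.quotEquivOfEqBot _ hbot).symm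
    exact ⟨1, betti_succ_eq_zero_of_projective 0⟩
  | succ n ih =>
    obtain ⟨gs, f, rfl⟩ := (List.eq_nil_or_concat' fs).resolve_left (by rintro rfl; simp at hn)
    have hlen : gs.length = n := by simpa using hn
    obtain ⟨y, hy, _, hlt⟩ := exists_isRegular_cons_spanFinrank_quotient_lt h
    obtain ⟨m, hm⟩ := ih (isRegular_quotient_span_singleton hy) (by rw [List.length_map]; omega)
      (by rwa [List.length_map])
    exact ⟨m + 1, betti_succ_residueField_eq_zero_of_isReductionModulo
      (isReductionModulo_quotient_span_singleton y) (isRegular_cons_iff .. |>.1 hy).1 hm⟩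

end RegularQuotient

section Presentation

open RingTheory.Sequence

/-- The surjection `φ` presents `R` as the quotient of `Q` by the `Q`-regular sequence `fs`. -/
structure IsRegularPresentation {Q R : Type*} [CommRing Q] [CommRing R] (φ : Q →+* R)
    (fs : List Q) : Prop where
  surjective : Function.Surjective φ
  ker_eq : RingHom.ker φ = Ideal.ofList fs
  isRegular : IsRegular Q fs

theorem IsRegularPresentation.exists_quotient {Q R : Type*} [CommRing Q] [CommRing R]
    {φ : Q →+* R} {f : Q} {fs : List Q} (h : IsRegularPresentation φ (f :: fs)) :
    ∃ φ' : Q ⧸ Ideal.span {f} →+* R,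
      IsRegularPresentation φ' (fs.map (Ideal.Quotient.mk (Ideal.span {f}))) := by
  have hf : Ideal.span {f} ≤ RingHom.ker φ := by
    rw [h.ker_eq, Ideal.ofList_cons]
    exact le_sup_left
  refine ⟨Ideal.Quotient.lift _ φ hf,
    Ideal.Quotient.lift_surjective_of_surjective _ hf h.surjective, ?_,
    isRegular_quotient_span_singleton h.isRegular⟩
  rw [Ideal.ker_quotient_lift, h.ker_eq, Ideal.ofList_cons, Ideal.map_sup, Ideal.map_quotient_self,
    bot_sup_eq, Ideal.map_ofList]

theorem IsRegularPresentation.perm {Q R : Type*} [CommRing Q] [IsLocalRing Q] [IsNoetherianRing Q]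
    [CommRing R] {φ : Q →+* R} {fs gs : List Q} (h : IsRegularPresentation φ fs)
    (hfg : fs.Perm gs) : IsRegularPresentation φ gs where
  surjective := h.surjective
  ker_eq := h.ker_eq.trans (congrArg Ideal.span (Set.ext fun _ ↦ hfg.mem_iff))
  isRegular := isRegular_of_perm h.isRegular hfg

theorem IsRegularPresentation.exists_mem_sq {R : Type*} [CommRing R] {Q : Type u} [CommRing Q]
    [IsLocalRing Q] [IsNoetherianRing Q] {φ : Q →+* R} {fs : List Q}
    (h : IsRegularPresentation φ fs) (hle : (maximalIdeal Q).spanFinrank ≤ fs.length) :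
    ∃ (Q' : Type u) (_ : CommRing Q') (_ : IsLocalRing Q') (_ : IsNoetherianRing Q')
      (φ' : Q' →+* R) (fs' : List Q'), IsRegularPresentation φ' fs' ∧
        (maximalIdeal Q').spanFinrank ≤ fs'.length ∧ ∀ f ∈ fs', f ∈ maximalIdeal Q' ^ 2 := by
  induction hn : fs.length generalizing Q with
  | zero =>
    obtain rfl := List.length_eq_zero_iff.1 hn
    exact ⟨Q, _, ‹_›, ‹_›, φ, [], h, hle, by simp⟩
  | succ n ih =>
    by_cases hsq : ∀ f ∈ fs, f ∈ maximalIdeal Q ^ 2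
    · exact ⟨Q, _, ‹_›, ‹_›, φ, fs, h, hle, hsq⟩
    push Not at hsq
    obtain ⟨f, hf, hf'⟩ := hsq
    obtain ⟨l₁, l₂, rfl⟩ := List.append_of_mem hf
    have hlen : (l₁ ++ l₂).length = n := by simpa [← add_assoc] using hn
    have h := h.perm List.perm_middle
    have := isLocalRing_quotient_of_isRegular_cons h.isRegular
    have hlt := spanFinrank_maximalIdeal_quotient_lt
      (mem_maximalIdeal_of_isRegular h.isRegular (by simp)) hf'
    obtain ⟨φ', hφ'⟩ := h.exists_quotient
    exact ih hφ' (by rw [List.length_map]; omega) (by rwa [List.length_map])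

/-- Up to isomorphism, `R` is a hypersurface `S ⧸ (s)` with `s` regular, over a Noetherian local
ring `S` whose residue field has Betti numbers growing at most like `i ^ e`. -/
def HasHypersurfacePresentation (R : Type u) [CommRing R] (e : ℕ) : Prop :=
  ∃ (S : Type u) (_ : CommRing S) (_ : IsLocalRing S) (_ : IsNoetherianRing S) (_ : Algebra S R)
    (s : S), IsReductionModulo s (Algebra.linearMap S R) ∧ IsSMulRegular S s ∧
      HasBettiGrowth S e (ResidueField S)

theorem IsRegularPresentation.hasHypersurfacePresentation {R Q : Type u} [CommRing R] [CommRing Q]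
    [IsLocalRing Q] [IsNoetherianRing Q] {φ : Q →+* R} {f : Q} {fs : List Q}
    (h : IsRegularPresentation φ (f :: fs)) {e : ℕ} (he : HasBettiGrowth Q e (ResidueField Q)) :
    HasHypersurfacePresentation R (e + fs.length) := by
  have hfreg := ((isRegular_cons_iff ..).1 h.isRegular).1
  induction hn : fs.length generalizing Q e f with
  | zero =>
    obtain rfl := List.length_eq_zero_iff.1 hn
    algebraize [φ]
    refine ⟨Q, _, ‹_›, ‹_›, φ.toAlgebra, f, ⟨fun q ↦ ?_, h.surjective⟩, hfreg, he⟩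
    change q ∈ RingHom.ker φ ↔ _
    rw [h.ker_eq, Ideal.ofList_singleton, Ideal.mem_span_singleton]
    exact exists_congr fun _ ↦ eq_comm
  | succ n ih =>
    obtain ⟨g, gs, rfl⟩ := List.exists_cons_of_length_eq_add_one hn
    have := isLocalRing_quotient_of_isRegular_cons h.isRegular
    obtain ⟨φ', hφ'⟩ := h.exists_quotient
    have he' := he.residueField_of_isReductionModulo
      (isReductionModulo_quotient_span_singleton f) hfreg
    rw [← add_assoc, add_right_comm]
    exact ih hφ' he' ((isRegular_cons_iff ..).1 hφ'.isRegular).1 (by simpa using hn)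

theorem IsRegularPresentation.hasHypersurfacePresentation_of_spanFinrank_le {R Q : Type u}
    [CommRing R] [CommRing Q] [IsLocalRing Q] [IsNoetherianRing Q] {φ : Q →+* R} {f g : Q}
    {fs : List Q} (h : IsRegularPresentation φ (f :: g :: fs))
    (hle : (maximalIdeal Q).spanFinrank ≤ (f :: g :: fs).length) :
    HasHypersurfacePresentation R fs.length := by
  obtain ⟨m, hm⟩ := exists_betti_residueField_eq_zero h.isRegular hle
  have := isLocalRing_quotient_of_isRegular_cons h.isRegular
  obtain ⟨φ', hφ'⟩ := h.exists_quotient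
  have hgrowth := hasBettiGrowth_zero_residueField_of_isReductionModulo
    (isReductionModulo_quotient_span_singleton f) ((isRegular_cons_iff ..).1 h.isRegular).1 hm
  simpa using hφ'.hasHypersurfacePresentation hgrowth

theorem exists_isRegularPresentation {R : Type u} [CommRing R]
    [IsLocalRing R] [IsArtinianRing R] (w : CompleteIntersectionWitness R) :
    ∃ (Q : Type u) (_ : CommRing Q) (_ : IsLocalRing Q) (_ : IsNoetherianRing Q) (φ : Q →+* R)
      (fs : List Q), IsRegularPresentation φ fs ∧ (maximalIdeal Q).spanFinrank ≤ fs.length := by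
  obtain ⟨Q, ⟨_, hdim⟩, fs, hreg, e⟩ := w
  let ε : R ≃+* Q ⧸ Ideal.ofList fs :=
    (AdicCompletion.ofAlgEquiv (maximalIdeal R)).toRingEquiv.trans e
  refine ⟨Q, _, ‹_›, ‹_›, ε.symm.toRingHom.comp (Ideal.Quotient.mk (Ideal.ofList fs)), fs,
    ⟨ε.symm.surjective.comp Ideal.Quotient.mk_surjective, ?_, hreg⟩, ?_⟩
  · ext x
    simp [RingHom.mem_ker, Ideal.Quotient.eq_zero_iff_mem]
  · have hR : ringKrullDim R ≤ 0 :=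
      (Order.krullDimLE_iff 0 (PrimeSpectrum R)).1 inferInstance
    have := ringKrullDim_add_length_eq_ringKrullDim_of_isRegular fs hreg
    rw [hdim, ← ringKrullDim_eq_of_ringEquiv ε,
      ← spanFinrank_maximalIdeal_eq_finrank_cotangentSpace] at this
    exact_mod_cast this.symm.trans_le ((add_le_add_left hR _).trans_eq (zero_add _))

theorem IsRegularPresentation.length_le_spanFinrank {R Q : Type*} [CommRing R] [CommRing Q]
    [IsLocalRing Q] [IsNoetherianRing Q] {φ : Q →+* R} {fs : List Q}
    (h : IsRegularPresentation φ fs) : fs.length ≤ (maximalIdeal Q).spanFinrank := by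
  have := Ideal.Quotient.nontrivial_iff.2 (ofList_ne_top_of_isRegular h.isRegular)
  have hdim := ringKrullDim_add_length_eq_ringKrullDim_of_isRegular fs h.isRegular
  exact_mod_cast (le_add_of_nonneg_left ringKrullDim_nonneg_of_nontrivial).trans
    (hdim.trans_le (ringKrullDim_le_spanFinrank_maximalIdeal Q))

theorem exists_isRegularPresentation_of_isCompleteIntersection {R : Type u} [CommRing R]
    [IsLocalRing R] [IsArtinianRing R] (hR : IsCompleteIntersection R) :
    ∃ (Q : Type u) (_ : CommRing Q) (_ : IsLocalRing Q) (_ : IsNoetherianRing Q) (φ : Q →+* R)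
      (fs : List Q), IsRegularPresentation φ fs ∧ (maximalIdeal Q).spanFinrank = fs.length ∧
        fs.length = Module.finrank (ResidueField R) (CotangentSpace R) := by
  obtain ⟨w⟩ := hR
  obtain ⟨Q₀, _, _, _, φ₀, fs₀, h₀, hle₀⟩ := exists_isRegularPresentation w
  obtain ⟨Q, _, _, _, φ, fs, h, hle, hsq⟩ := h₀.exists_mem_sq hle₀
  have hlen := hle.antisymm h.length_le_spanFinrank
  refine ⟨Q, _, ‹_›, ‹_›, φ, fs, h, hlen, ?_⟩
  rw [← hlen, ← spanFinrank_maximalIdeal_eq_finrank_cotangentSpace,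
    ← spanFinrank_maximalIdeal_eq_of_ker_le_sq h.surjective
      (h.ker_eq.trans_le (Ideal.span_le.2 hsq))]

theorem hasCyclicSocle_bot_of_isCompleteIntersection {R : Type u} [CommRing R] [IsLocalRing R]
    [IsArtinianRing R] (hR : IsCompleteIntersection R) :
    HasCyclicSocle (⊥ : Ideal R) := by
  obtain ⟨Q, _, _, _, φ, fs, h, hle, -⟩ :=
    exists_isRegularPresentation_of_isCompleteIntersection hR
  rw [← hasCyclicSocle_comap_iff h.surjective, ← RingHom.ker_eq_comap_bot, h.ker_eq]
  exact hasCyclicSocle_ofList_of_isRegular h.isRegular hle.le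

theorem hasHypersurfacePresentation_of_isCompleteIntersection {R : Type u} [CommRing R]
    [IsLocalRing R] [IsArtinianRing R] (hR : IsCompleteIntersection R)
    {e : ℕ} (he : Module.finrank (ResidueField R) (CotangentSpace R) = e + 2) :
    HasHypersurfacePresentation R e := by
  obtain ⟨Q, _, _, _, φ, fs, h, hle, hlen⟩ :=
    exists_isRegularPresentation_of_isCompleteIntersection hR
  obtain ⟨f, fs, rfl⟩ := List.exists_cons_of_length_eq_add_one (hlen.trans he)
  obtain ⟨g, fs, rfl⟩ := List.exists_cons_of_length_eq_add_one (Nat.succ.inj (hlen.trans he))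
  obtain rfl : fs.length = e := by simpa [he] using hlen
  exact h.hasHypersurfacePresentation_of_spanFinrank_le hle.le

end Presentation

section SelfInjective

theorem length_eq_length_ker_add_length_range {R M N : Type*} [Ring R] [AddCommGroup M]
    [Module R M] [AddCommGroup N] [Module R N] (f : M →ₗ[R] N) :
    Module.length R M = Module.length R (LinearMap.ker f) + Module.length R (LinearMap.range f) :=
  Module.length_eq_add_of_exact (LinearMap.ker f).subtype f.rangeRestrict
    (Submodule.subtype_injective _) f.surjective_rangeRestrict <| by
      rw [LinearMap.exact_iff, LinearMap.ker_rangeRestrict, Submodule.range_subtype]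

theorem length_linearMap_le_of_exact {R A B C N : Type*} [CommRing R] [AddCommGroup A] [Module R A]
    [AddCommGroup B] [Module R B] [AddCommGroup C] [Module R C] [AddCommGroup N] [Module R N]
    {f : A →ₗ[R] B} {g : B →ₗ[R] C} (hfg : Function.Exact f g) (hg : Function.Surjective g) :
    Module.length R (B →ₗ[R] N) ≤ Module.length R (C →ₗ[R] N) +
      Module.length R (LinearMap.range (LinearMap.lcomp R N f)) := by
  rw [length_eq_length_ker_add_length_range (LinearMap.lcomp R N f),
    (LinearMap.exact_lcomp_of_exact_of_surjective N hfg hg).linearMap_ker_eq]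
  gcongr
  exact Module.length_le_of_surjective _ (LinearMap.surjective_rangeRestrict _)

variable {R : Type u} [CommRing R] [IsLocalRing R]

theorem smul_eq_zero_of_isSimpleModule {C : Type*} [AddCommGroup C] [Module R C]
    [IsSimpleModule R C] {m : R} (hm : m ∈ maximalIdeal R) (c : C) : m • c = 0 := by
  rw [← eq_maximalIdeal (IsSimpleModule.annihilator_isMaximal (R := R) (M := C))] at hm
  exact Module.mem_annihilator.1 hm c

theorem length_dual_le_one_of_isSimpleModule (h : HasCyclicSocle (⊥ : Ideal R)) (C : Type*)
    [AddCommGroup C] [Module R C] [IsSimpleModule R C] :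
    Module.length R (C →ₗ[R] R) ≤ 1 := by
  rcases subsingleton_or_nontrivial (C →ₗ[R] R) with _ | hnt
  · rw [Module.length_eq_zero]
    exact zero_le_one
  refine (Module.length_eq_one_iff.2 ?_).le
  obtain ⟨_, hspan⟩ := isSimpleModule_iff_toSpanSingleton_surjective.1 ‹IsSimpleModule R C›
  obtain ⟨c, hc⟩ := exists_ne (0 : C)
  have hext : ∀ φ ψ : C →ₗ[R] R, φ c = ψ c → φ = ψ := fun φ ψ hφψ ↦ by
    ext d
    obtain ⟨r, rfl⟩ := hspan c hc d
    simp [hφψ]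
  have hsocle : ∀ φ : C →ₗ[R] R, φ c ∈ (⊥ : Ideal R).colon (maximalIdeal R : Set R) := fun φ ↦
    Submodule.mem_colon.2 fun m hm ↦ by
      rw [smul_eq_mul, mul_comm, ← smul_eq_mul, ← map_smul, smul_eq_zero_of_isSimpleModule hm,
        map_zero]
      exact zero_mem _
  refine isSimpleModule_iff_toSpanSingleton_surjective.2 ⟨hnt, fun φ hφ ψ ↦ ?_⟩
  obtain ⟨r, hr⟩ := h (φ c) (hsocle φ) (fun h₀ ↦ hφ (hext φ 0 h₀)) (ψ c) (hsocle ψ)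
  exact ⟨r, hext _ _ (sub_eq_zero.1 hr).symm⟩

theorem length_dual_le_length (h : HasCyclicSocle (⊥ : Ideal R)) {N : Type u} [AddCommGroup N]
    [Module R N] (hN : IsFiniteLength R N) :
    Module.length R (N →ₗ[R] R) ≤ Module.length R N := by
  induction hN with
  | of_subsingleton =>
    rw [Module.length_eq_zero]
    exact zero_le
  | @of_simple_quotient M _ _ N _ _ ih =>
    have hexact : Function.Exact N.subtype N.mkQ := LinearMap.exact_subtype_mkQ N
    calc Module.length R (M →ₗ[R] R)
        ≤ Module.length R (M ⧸ N →ₗ[R] R) +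
            Module.length R (LinearMap.range (LinearMap.lcomp R R N.subtype)) :=
          length_linearMap_le_of_exact hexact N.mkQ_surjective
      _ ≤ 1 + Module.length R N := add_le_add (length_dual_le_one_of_isSimpleModule h _)
          ((Module.length_le_of_injective _ (Submodule.subtype_injective _)).trans ih)
      _ = Module.length R M := by
          rw [Module.length_eq_add_of_exact _ _ N.injective_subtype N.mkQ_surjective hexact,
            Module.length_eq_one R (M ⧸ N), add_comm]

/- Baer's criterion: for an ideal `I`, comparing the lengths of `R ≅ R*`, `(R ⧸ I)*` and `I*` shows
that the image of the restriction map `R* → I*` has length at least `length I ≥ length I*`. -/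
theorem injective_self_of_hasCyclicSocle [IsArtinianRing R] (h : HasCyclicSocle (⊥ : Ideal R)) :
    Module.Injective R R := by
  refine Module.Baer.injective fun I g ↦ ?_
  have hdual : ∀ (N : Type u) [AddCommGroup N] [Module R N] [Module.Finite R N],
      Module.length R (N →ₗ[R] R) ≤ Module.length R N := fun N _ _ _ ↦
    length_dual_le_length h
      (isFiniteLength_iff_isNoetherian_isArtinian.2 ⟨inferInstance, inferInstance⟩)
  have hexact : Function.Exact I.subtype I.mkQ := LinearMap.exact_subtype_mkQ I
  let ρ := LinearMap.lcomp R R I.subtype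
  have hle : Module.length R (R ⧸ I) + Module.length R I ≤
      Module.length R (R ⧸ I) + Module.length R (LinearMap.range ρ) :=
    calc _ = Module.length R R := by
          rw [Module.length_eq_add_of_exact _ _ I.injective_subtype I.mkQ_surjective hexact,
            add_comm]
      _ = Module.length R (R →ₗ[R] R) := (LinearMap.ringLmapEquivSelf R R R).length_eq.symm
      _ ≤ _ := length_linearMap_le_of_exact hexact I.mkQ_surjective
      _ ≤ _ := add_le_add_left (hdual _) _
  have hrange : LinearMap.range ρ = ⊤ := by
    by_contra hne
    exact ((hdual I).trans ((ENat.add_le_add_iff_left Module.length_ne_top).1 hle)).not_gt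
      (Submodule.length_lt hne)
  obtain ⟨g', rfl⟩ := LinearMap.range_eq_top.1 hrange g
  exact ⟨g', fun _ _ ↦ rfl⟩

theorem exists_ker_toSpanSingleton_eq_maximalIdeal [IsArtinianRing R] :
    ∃ s : R, LinearMap.ker (LinearMap.toSpanSingleton R R s) = maximalIdeal R := by
  obtain ⟨p, hp⟩ := associatedPrimes.nonempty R R
  obtain ⟨hprime, s, rfl⟩ := Submodule.isAssociatedPrime_iff.1 hp
  refine ⟨s, ?_⟩
  rw [← eq_maximalIdeal (hprime.isMaximal')]
  ext r
  simp [Submodule.mem_colon_singleton]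

theorem exists_dual_apply_ne_zero [IsArtinianRing R] (hinj : Module.Injective R R) {N : Type u}
    [AddCommGroup N] [Module R N] {x : N} (hx : x ≠ 0) : ∃ φ : N →ₗ[R] R, φ x ≠ 0 := by
  obtain ⟨s, hs⟩ := exists_ker_toSpanSingleton_eq_maximalIdeal (R := R)
  let u := (LinearMap.toSpanSingleton R N x).rangeRestrict
  have hker : LinearMap.ker u ≤ LinearMap.ker (LinearMap.toSpanSingleton R R s) := by
    rw [hs, LinearMap.ker_rangeRestrict]
    exact le_maximalIdeal fun htop ↦ hx (by simpa using (Ideal.eq_top_iff_one _).1 htop)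
  obtain ⟨ψ, hψ⟩ := exists_comp_eq_of_ker_le (LinearMap.surjective_rangeRestrict _) hker
  obtain ⟨φ, hφ⟩ := hinj.out (LinearMap.range (LinearMap.toSpanSingleton R N x)).subtype
    (Submodule.injective_subtype _) ψ
  refine ⟨φ, fun h₀ ↦ ?_⟩
  have hφx : φ x = s := by simpa [u] using (hφ (u 1)).trans (hψ 1)
  rw [← hφx, h₀, LinearMap.toSpanSingleton_zero, LinearMap.ker_zero] at hs
  exact (maximalIdeal.isMaximal R).ne_top hs.symm

theorem exists_injective_linearMap_pi [IsArtinianRing R] (hinj : Module.Injective R R)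
    (N : Type u) [AddCommGroup N] [Module R N] [Module.Finite R N] :
    ∃ (n : ℕ) (j : N →ₗ[R] (Fin n → R)), Function.Injective j := by
  obtain ⟨n, φ, hφ⟩ := Module.Finite.exists_fin (R := R) (M := N →ₗ[R] R)
  refine ⟨n, LinearMap.pi φ, (injective_iff_map_eq_zero _).2 fun x hx ↦ ?_⟩
  by_contra hx₀
  obtain ⟨ψ, hψ⟩ := exists_dual_apply_ne_zero hinj hx₀
  have hle : Submodule.span R (Set.range φ) ≤ LinearMap.ker (Module.Dual.eval R N x) :=
    Submodule.span_le.2 (Set.range_subset_iff.2 fun i ↦ congrFun hx i)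
  exact hψ (hle (hφ ▸ Submodule.mem_top))

end SelfInjective

section MinimalResolution

theorem quasiIso_toSingle₀Equiv_symm {C : Type*} [Category C] [Abelian C] {K : ChainComplex C ℕ}
    {Z : C} {ε : K.X 0 ⟶ Z} [Epi ε] (w : K.d 1 0 ≫ ε = 0) (h₀ : (ShortComplex.mk _ _ w).Exact)
    (h : ∀ n, K.ExactAt (n + 1)) : QuasiIso ((ChainComplex.toSingle₀Equiv K Z).symm ⟨ε, w⟩) := by
  refine ⟨fun n ↦ ?_⟩
  cases n with
  | zero =>
    rw [ChainComplex.quasiIsoAt₀_iff, ShortComplex.quasiIso_iff_of_zeros']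
    · refine (ShortComplex.exact_and_epi_g_iff_of_iso ?_).2 ⟨h₀, inferInstanceAs (Epi ε)⟩
      exact ShortComplex.isoMk (Iso.refl _) (Iso.refl _) (Iso.refl _)
        ((Category.id_comp _).trans (Category.comp_id _).symm)
        ((Category.id_comp _).trans
          ((ChainComplex.toSingle₀Equiv_symm_apply_f_zero ε w).symm.trans
            (Category.comp_id _).symm))
    · exact K.shape 0 0 (by simp)
    all_goals rfl
  | succ n =>
    rw [quasiIsoAt_iff_exactAt' _ _ (ChainComplex.exactAt_succ_single_obj _ _)]
    exact h n

variable {R : Type u} [CommRing R] [IsLocalRing R] [IsNoetherianRing R]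

section

variable (M : Type u) [AddCommGroup M] [Module R M] [Module.Finite R M]

variable (R) in
/-- The map between free modules in a minimal presentation: cover the first syzygy minimally and
include it into the minimal cover. -/
noncomputable def minPresentation :
    (Fin (minGenerators R (Syzygy R M)) → R) →ₗ[R] (Fin (minGenerators R M) → R) :=
  (LinearMap.ker (minCover R M)).subtype ∘ₗ minCover R (Syzygy R M)

theorem exact_minPresentation_minCover :
    Function.Exact (minPresentation R M) (minCover R M) := by
  rw [LinearMap.exact_iff, minPresentation,
    LinearMap.range_comp_of_range_eq_top _ (LinearMap.range_eq_top.2 minCover_surjective),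
    Submodule.range_subtype]

theorem exact_minPresentation :
    Function.Exact (minPresentation R (Syzygy R M)) (minPresentation R M) :=
  (exact_minPresentation_minCover (Syzygy R M)).comp_injective _ (Submodule.subtype_injective _)
    (map_zero _)

variable {M}

theorem map_minPresentation_eq_zero (g : (Fin (minGenerators R M) → R) →ₗ[R] ResidueField R)
    (x : Fin (minGenerators R (Syzygy R M)) → R) : g (minPresentation R M x) = 0 := by
  rw [pi_eq_sum_univ' (minPresentation R M x), map_sum]
  refine Finset.sum_eq_zero fun j _ ↦ ?_
  have hj : minPresentation R M x j ∈ maximalIdeal R :=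
    mem_maximalIdeal_of_mem_ker_minCover
      ((exact_minPresentation_minCover M).apply_apply_eq_zero x) j
  rw [map_smul, Algebra.smul_def, ResidueField.algebraMap_eq, (residue_eq_zero_iff _).2 hj,
    zero_mul]

end

variable (M : FGModuleCat.{u} R)

/-- The iterated syzygies in a minimal free resolution, bundled so that finiteness is available
at each step of the recursion. -/
noncomputable def iteratedSyzygy : ℕ → FGModuleCat.{u} R
  | 0 => M
  | n + 1 => .of R (Syzygy R (iteratedSyzygy n))

theorem betti_iteratedSyzygy (i n : ℕ) : betti R i (iteratedSyzygy M n) = betti R (i + n) M := by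
  induction n generalizing i with
  | zero => rfl
  | succ n ih => exact (ih (i + 1)).trans (by rw [add_right_comm, add_assoc])

/-- The complex underlying a minimal free resolution. -/
noncomputable def minimalComplex : ChainComplex (ModuleCat.{u} R) ℕ :=
  ChainComplex.of (fun n ↦ ModuleCat.of R (Fin (minGenerators R (iteratedSyzygy M n)) → R))
    (fun n ↦ ModuleCat.ofHom (minPresentation R (iteratedSyzygy M n))) fun n ↦
      ModuleCat.hom_ext (exact_minPresentation (iteratedSyzygy M n)).linearMap_comp_eq_zero

theorem minimalComplex_d (n : ℕ) : (minimalComplex M).d (n + 1) n =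
    ModuleCat.ofHom (minPresentation R (iteratedSyzygy M n)) :=
  ChainComplex.of_d (fun n ↦ ModuleCat.of R (Fin (minGenerators R (iteratedSyzygy M n)) → R))
    (fun n ↦ ModuleCat.ofHom (minPresentation R (iteratedSyzygy M n))) n

theorem minimalComplex_exactAt_succ (n : ℕ) : (minimalComplex M).ExactAt (n + 1) := by
  rw [HomologicalComplex.exactAt_iff' _ (n + 2) (n + 1) n (by simp) (by simp),
    ShortComplex.ShortExact.moduleCat_exact_iff_function_exact]
  have hexact : Function.Exact ((minimalComplex M).d (n + 2) (n + 1)).hom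
      ((minimalComplex M).d (n + 1) n).hom := by
    rw [minimalComplex_d, minimalComplex_d]
    exact exact_minPresentation (R := R) (iteratedSyzygy M n)
  exact hexact

/-- The augmentation of a minimal free resolution. -/
noncomputable def minimalAugmentation : (minimalComplex M).X 0 ⟶ ModuleCat.of R M :=
  ModuleCat.ofHom (minCover R M)

theorem minimalComplex_d_comp_minimalAugmentation :
    (minimalComplex M).d 1 0 ≫ minimalAugmentation M = 0 := by
  rw [minimalComplex_d]
  exact ModuleCat.hom_ext (exact_minPresentation_minCover M).linearMap_comp_eq_zero

/-- The minimal free resolution of a finitely generated module over a local ring. -/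
noncomputable def minimalResolution : ProjectiveResolution (ModuleCat.of R M) where
  complex := minimalComplex M
  projective n :=
    inferInstanceAs (Projective (ModuleCat.of R (Fin (minGenerators R (iteratedSyzygy M n)) → R)))
  π := (ChainComplex.toSingle₀Equiv _ _).symm ⟨_, minimalComplex_d_comp_minimalAugmentation M⟩
  quasiIso := by
    have : Epi (minimalAugmentation M) := (ModuleCat.epi_iff_surjective _).2 minCover_surjective
    refine quasiIso_toSingle₀Equiv_symm _ ?_ (minimalComplex_exactAt_succ M)
    rw [ShortComplex.ShortExact.moduleCat_exact_iff_function_exact]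
    have hexact : Function.Exact ((minimalComplex M).d 1 0).hom (minCover R M) := by
      rw [minimalComplex_d]
      exact exact_minPresentation_minCover (R := R) M
    exact hexact

theorem minimalComplex_linearYonedaObj_d_eq_zero (i j : ℕ) :
    ((minimalComplex M).linearYonedaObj R (ModuleCat.of R (ResidueField R))).d i j = 0 := by
  by_cases hij : i + 1 = j
  · subst hij
    rw [ChainComplex.linearYonedaObj_d, minimalComplex_d]
    ext g x
    exact map_minPresentation_eq_zero (ModuleCat.Hom.hom g) x
  · exact HomologicalComplex.shape _ _ _ hij

theorem bettiEq_betti (i : ℕ) : BettiEq R (ModuleCat.of R M) i (betti R i M) := by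
  let k := ModuleCat.of R (ResidueField R)
  let b := minGenerators R (iteratedSyzygy M i)
  let K := (minimalComplex M).linearYonedaObj R k
  let extIso : ExtMod R i (ModuleCat.of R M) k ≅ K.X i :=
    (minimalResolution M).isoExt i k ≪≫
      (ShortComplex.HomologyData.ofZeros (K.sc i) (minimalComplex_linearYonedaObj_d_eq_zero M _ _)
        (minimalComplex_linearYonedaObj_d_eq_zero M _ _)).left.homologyIso
  let homEquiv : K.X i ≃ₗ[R] ((Fin b → R) →ₗ[R] ResidueField R) := ModuleCat.homLinearEquiv
  have hb : b = betti R i M := (betti_iteratedSyzygy M 0 i).trans (by rw [zero_add])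
  rw [← hb]
  exact ⟨extIso.toLinearEquiv ≪≫ₗ homEquiv ≪≫ₗ ((Pi.basisFun R (Fin b)).constr R).symm⟩

theorem eq_of_bettiEq {R : Type u} [CommRing R] [IsLocalRing R] {M : ModuleCat.{u} R}
    {i b b' : ℕ} (h : BettiEq R M i b) (h' : BettiEq R M i b') : b = b' := by
  obtain ⟨e⟩ := h
  obtain ⟨e'⟩ := h'
  simpa using ((e.symm ≪≫ₗ e').extendScalarsOfSurjective residue_surjective).finrank_eq

end MinimalResolution

section Complexity

variable {R : Type u} [CommRing R] [IsLocalRing R] [IsNoetherianRing R] {M : Type u}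
  [AddCommGroup M] [Module R M] [Module.Finite R M] {e : ℕ}

theorem hasBettiGrowth_of_hasComplexityLE {n : ℕ} (hn : n ≤ e + 1)
    (h : HasComplexityLE R (ModuleCat.of R M) n) : HasBettiGrowth R e M := by
  obtain ⟨α, N, hα⟩ := h
  refine hasBettiGrowth_of_forall_ge (α := ⌈α⌉₊) (N := N + 1) fun i hi ↦ ?_
  obtain ⟨b, hb, hle⟩ := hα i (by omega)
  rw [eq_of_bettiEq hb (bettiEq_betti (.of R M) i)] at hle
  have hi₁ : (1 : ℝ) ≤ i := by exact_mod_cast (show 1 ≤ i by omega)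
  have hpow : (i : ℝ) ^ ((n : ℤ) - 1) ≤ ((i : ℝ) + 1) ^ e :=
    calc (i : ℝ) ^ ((n : ℤ) - 1) ≤ (i : ℝ) ^ (e : ℤ) := zpow_le_zpow_right₀ hi₁ (by omega)
      _ = (i : ℝ) ^ e := zpow_natCast _ _
      _ ≤ ((i : ℝ) + 1) ^ e := by gcongr; linarith
  have hbetti : (betti R i M : ℝ) ≤ ⌈α⌉₊ * ((i : ℝ) + 1) ^ e :=
    hle.trans (mul_le_mul (Nat.le_ceil α) hpow (by positivity) (Nat.cast_nonneg _))
  exact_mod_cast hbetti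

theorem HasBettiGrowth.hasComplexityLE (h : HasBettiGrowth R e M) :
    HasComplexityLE R (ModuleCat.of R M) (e + 1) := by
  obtain ⟨α, hα⟩ := h
  refine ⟨α * 2 ^ e, 1, fun i hi ↦ ⟨_, bettiEq_betti (.of R M) i, ?_⟩⟩
  have hbetti : betti R i M ≤ α * 2 ^ e * i ^ e :=
    calc betti R i M ≤ α * (i + 1) ^ e := hα i
      _ ≤ α * (2 * i) ^ e := by gcongr; omega
      _ = α * 2 ^ e * i ^ e := by rw [mul_pow, mul_assoc]
  rw [Nat.cast_succ, add_sub_cancel_right, zpow_natCast]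
  exact_mod_cast hbetti

theorem complexity_lt_iff_hasBettiGrowth :
    complexity R (ModuleCat.of R M) < ((e + 2 : ℕ) : ℕ∞) ↔ HasBettiGrowth R e M := by
  rw [complexity, sInf_lt_iff]
  constructor
  · rintro ⟨_, ⟨n, hn, rfl⟩, hlt⟩
    exact hasBettiGrowth_of_hasComplexityLE (Nat.lt_succ_iff.1 (Nat.cast_lt.1 hlt)) hn
  · exact fun h ↦ ⟨_, ⟨e + 1, h.hasComplexityLE, rfl⟩, Nat.cast_lt.2 (Nat.lt_succ_self _)⟩

end Complexity

section Main

variable {R : Type u} [CommRing R] [IsLocalRing R] [IsArtinianRing R]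

theorem HasHypersurfacePresentation.exists_exact_ker {e : ℕ}
    (hR : HasHypersurfacePresentation R e) {C : Type u} [AddCommGroup C] [Module R C] {m : ℕ}
    {p : (Fin m → R) →ₗ[R] C} (hp : Function.Surjective p) :
    ∃ (E : Type u) (_ : AddCommGroup E) (_ : Module R E) (_ : Module.Finite R E)
      (a : C →ₗ[R] E) (b : E →ₗ[R] LinearMap.ker p), Function.Injective a ∧
      Function.Exact a b ∧ Function.Surjective b ∧ HasBettiGrowth R e E := by
  obtain ⟨S, _, _, _, _, s, hS, hs, hk⟩ := hR
  have := Module.Finite.of_surjective p hp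
  let _ : Module S C := Module.compHom C (algebraMap S R)
  have : IsScalarTower S R C := .of_compHom S R C
  have : Module.Finite S R := .of_surjective (Algebra.linearMap S R) hS.surjective
  have : Module.Finite S C := .trans R C
  have : IsArtinian S C := isArtinian_of_surjective_algebraMap hS.surjective
  obtain ⟨α, hα⟩ := hk.of_isFiniteLength
    (isFiniteLength_iff_isNoetherian_isArtinian.2 ⟨inferInstance, ‹IsArtinian S C›⟩)
  obtain ⟨E, _, _, _, a, b, ha, hab, hb, hE⟩ := exists_exact_ker_betti_le hS hs hp
  refine ⟨E, _, _, ‹_›, a, b, ha, hab, hb,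
    hasBettiGrowth_of_forall_ge (α := α * 2 ^ e) (N := 1) fun i hi ↦ ?_⟩
  obtain ⟨i, rfl⟩ := Nat.exists_eq_add_of_le' hi
  calc betti R (i + 1) E ≤ betti S (i + 2) C := hE i
    _ ≤ α * (i + 2 + 1) ^ e := hα _
    _ ≤ α * (2 * (i + 1 + 1)) ^ e := by gcongr; omega
    _ = α * 2 ^ e * (i + 1 + 1) ^ e := by rw [mul_pow, mul_assoc]

theorem contravariantlyInfinite_hasBettiGrowth {e : ℕ} (h : HasCyclicSocle (⊥ : Ideal R))
    (hR : HasHypersurfacePresentation R e) :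
    ContravariantlyInfinite R
      {M : ModuleCat.{u} R | ∃ _ : Module.Finite R M, HasBettiGrowth R e M} := by
  have hinj := injective_self_of_hasCyclicSocle h
  refine contravariantlyInfinite_of_exists_exact (isResolving_hasBettiGrowth e) hinj
    (fun N ↦ exists_injective_linearMap_pi hinj N) (fun N _ _ _ hN ↦ ⟨‹_›, hN.mono⟩)
    fun C _ _ m p hp ↦ ?_
  obtain ⟨E, _, _, hfin, a, b, ha, hab, hb, hE⟩ := hR.exists_exact_ker hp
  exact ⟨E, _, _, a, b, ha, hab, hb, hfin, hE⟩

end Main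

end CompleteIntersection

/-- Let `R` be an Artinian local complete intersection of codimension
`c = dim_k 𝔪/𝔪² ≥ 2`. Then the class `ℰ` of finitely generated modules of complexity
less than `c` is contravariantly infinite. -/
theorem stmt4 (R : Type u) [CommRing R] [IsNoetherianRing R] [IsLocalRing R]
    [IsArtinianRing R] (hci : IsCompleteIntersection R)
    (hc : 2 ≤ Module.finrank (ResidueField R) (CotangentSpace R)) :
    ContravariantlyInfinite R
      {M : ModuleCat.{u} R | Module.Finite R M ∧
        complexity R M < (Module.finrank (ResidueField R) (CotangentSpace R) : ℕ∞)} := by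
  obtain ⟨e, he⟩ := Nat.exists_eq_add_of_le' hc
  have hclass : {M : ModuleCat.{u} R | Module.Finite R M ∧
      complexity R M < (Module.finrank (ResidueField R) (CotangentSpace R) : ℕ∞)} =
      {M : ModuleCat.{u} R |
        ∃ _ : Module.Finite R M, CompleteIntersection.HasBettiGrowth R e M} := by
    rw [he]
    exact Set.ext fun M ↦
      ⟨fun ⟨h, hM⟩ ↦ ⟨h, CompleteIntersection.complexity_lt_iff_hasBettiGrowth.1 hM⟩,
        fun ⟨h, hM⟩ ↦ ⟨h, CompleteIntersection.complexity_lt_iff_hasBettiGrowth.2 hM⟩⟩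
  rw [hclass]
  exact CompleteIntersection.contravariantlyInfinite_hasBettiGrowth
    (CompleteIntersection.hasCyclicSocle_bot_of_isCompleteIntersection hci)
    (CompleteIntersection.hasHypersurfacePresentation_of_isCompleteIntersection hci he)
end
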